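/- arXiv:math/0611310 — 3 statements merged into one kernel-verified Lean document; each statement's English description precedes it below -/
import Mathlib

section
/- Let (A,ω,τ,G) be an ergodic C*-dynamical system with ω tracial, where G is a countable second countable topological group, Σ its Borel σ-algebra, μ the counting measure, and (g,h,j,k) ↦ ω(τ_h(a₁) τ_g(a₂) τ_{gh}(a₃) τ_{jk}(a₄) τ_j(a₅) τ_k(a₆)) is Σ² × Σ²-measurable for all a₁,...,a₆ ∈ A. Assume there exist uniform Følner sequences (Λ_{1,n}) and (Λ_{2,n}) in G satisfying the Tempel'man condition and such that (Λ_{1,n}⁻¹Λ_{1,n}) and (Λ_{2,n}⁻¹Λ_{2,n}) are also Følner in G. Fix a GNS representation of (A,ω) and a, b, c ∈ A with at least one of ι(a), ι(b), ι(c*) in H_v, and set x_{g,h} := ι(τ_{gh}(a) τ_g(b) τ_h(c)). If (A,ω,τ,G) is uniformly asymptotically abelian with respect to (Λ_{1,n}), then lim_{n→∞} sup_{g₁,g₂ ∈ G} ‖ (1/(μ(Λ_{1,n})μ(Λ_{2,n}))) Σ_{h ∈ Λ_{1,n}g₁} Σ_{g ∈ Λ_{2,n}g₂} x_{g,h} ‖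 = 0. -/
open MeasureTheory Filter Topology
open scoped Pointwise ComplexOrder

/-- The space `H_v` of flight vectors: the orthogonal complement of the closed span `H₀` of
the unimodular eigenvectors of the semigroup `S = {U g : g ∈ G}` of contractions. -/
noncomputable def flightVectors {G H : Type*} [NormedAddCommGroup H]
    [InnerProductSpace ℂ H] (U : G → H →L[ℂ] H) : Submodule ℂ H :=
  ((Submodule.span ℂ {x : H | x ≠ 0 ∧ ∃ lam : G → ℂ,
      ∀ g, ‖lam g‖ = 1 ∧ U g x = lam g • x}).topologicalClosure)ᗮ

namespace NCErg
open Finset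

/-- Følner sequences of finsets -/
def IsFol {G : Type*} [CommGroup G] (F : ℕ → Finset G) : Prop :=
  (∀ᶠ n in atTop, (F n).Nonempty) ∧
  ∀ g : G, Tendsto (fun n => ((symmDiff (F n : Set G) ((fun x => x * g) '' (F n : Set G))).ncard : ℝ)
    / (#(F n) : ℝ)) atTop (𝓝 0)

/-- average over a finset -/
noncomputable def av {G E : Type*} [NormedAddCommGroup E] [NormedSpace ℝ E] (F : Finset G) (f : G → E) : E :=
  (#F : ℝ)⁻¹ • ∑ h ∈ F, f h

section av
variable {G E : Type*} [NormedAddCommGroup E] [NormedSpace ℝ E]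

lemma av_norm_le (F : Finset G) (f : G → E) : ‖av F f‖ ≤ av F (fun h => ‖f h‖) := by
  unfold av
  rw [norm_smul, smul_eq_mul, Real.norm_of_nonneg (by positivity)]
  gcongr
  exact norm_sum_le _ _

lemma av_mono (F : Finset G) {f g : G → ℝ} (h : ∀ x, f x ≤ g x) : av F f ≤ av F g := by
  unfold av
  simp only [smul_eq_mul]
  exact mul_le_mul_of_nonneg_left (Finset.sum_le_sum fun x _ => h x) (by positivity)

lemma av_nonneg (F : Finset G) {f : G → ℝ} (h : ∀ x, 0 ≤ f x) : 0 ≤ av F f := by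
  unfold av
  simp only [smul_eq_mul]
  have := Finset.sum_nonneg (fun x (_ : x ∈ F) => h x)
  positivity

lemma av_const {F : Finset G} (hF : F.Nonempty) (c : E) : av F (fun _ => c) = c := by
  unfold av
  have : (#F : ℝ) ≠ 0 := by simpa using hF.ne_empty
  rw [Finset.sum_const, ← Nat.cast_smul_eq_nsmul ℝ, smul_smul, inv_mul_cancel₀ this, one_smul]

lemma av_const_le (F : Finset G) {c : ℝ} (hc : 0 ≤ c) : av F (fun _ => c) ≤ c := by
  rcases F.eq_empty_or_nonempty with rfl | h
  · simpa [av] using hc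
  · rw [av_const h]

lemma av_add (F : Finset G) (f g : G → E) : av F (fun x => f x + g x) = av F f + av F g := by
  simp [av, Finset.sum_add_distrib]

lemma av_sub (F : Finset G) (f g : G → E) : av F (fun x => f x - g x) = av F f - av F g := by
  simp [av, Finset.sum_sub_distrib, smul_sub]

lemma av_smul (F : Finset G) (c : ℝ) (f : G → E) : av F (fun x => c • f x) = c • av F f := by
  simp [av, ← Finset.smul_sum, smul_comm c]

lemma av_comm {G' : Type*} (F : Finset G) (F' : Finset G') (f : G → G' → E) :
    av F (fun x => av F' (f x)) = av F' (fun y => av F (fun x => f x y)) := by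
  simp only [av, ← Finset.smul_sum]
  rw [smul_comm, Finset.sum_comm]

lemma av_clm {E' : Type*} [NormedAddCommGroup E'] [NormedSpace ℝ E'] (L : E →L[ℝ] E')
    (F : Finset G) (f : G → E) : L (av F f) = av F (fun x => L (f x)) := by
  simp [av, map_sum]

lemma av_sq_le (F : Finset G) (f : G → ℝ) : (av F f) ^ 2 ≤ av F (fun x => f x ^ 2) := by
  rcases F.eq_empty_or_nonempty with rfl | h
  · simp [av]
  have hc : 0 < (#F : ℝ) := by simpa using h.card_pos
  simp only [av, smul_eq_mul]
  have := sq_sum_le_card_mul_sum_sq (s := F) (f := f)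
  rw [mul_pow, inv_pow, inv_mul_le_iff₀ (by positivity), ← mul_assoc, sq (#F : ℝ), mul_assoc (#F : ℝ),
    mul_inv_cancel₀ hc.ne', mul_one]
  exact this

lemma norm_av_sub_av_le {G : Type*} [CommGroup G] (F : Finset G) (g : G) (f : G → E) (M : ℝ)
    (hM : ∀ x, ‖f x‖ ≤ M) :
    ‖av F (fun h => f (h * g)) - av F f‖ ≤
      M * (((symmDiff (F : Set G) ((fun x => x * g) '' (F : Set G))).ncard : ℝ) / (#F : ℝ)) := by
  classical
  unfold av
  rw [← smul_sub, norm_smul, Real.norm_of_nonneg (by positivity), mul_div_assoc', div_eq_inv_mul]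
  gcongr
  set F' := F.image (fun x => x * g) with hF'
  have h1 : ∑ h ∈ F, f (h * g) = ∑ h ∈ F', f h := by
    rw [hF', Finset.sum_image]
    intro a _ b _ h; simpa using h
  have h2 : (symmDiff (F : Set G) ((fun x => x * g) '' (F : Set G))).ncard = #(symmDiff F F') := by
    rw [← Set.ncard_coe_finset, Finset.coe_symmDiff, hF', Finset.coe_image]
  rw [h1, h2]
  have h3 : ∑ h ∈ F', f h - ∑ h ∈ F, f h = ∑ h ∈ F' \ F, f h - ∑ h ∈ F \ F', f h := by
    rw [← Finset.sum_sdiff_sub_sum_sdiff]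
  rw [h3]
  calc _ ≤ ‖∑ h ∈ F' \ F, f h‖ + ‖∑ h ∈ F \ F', f h‖ := norm_sub_le _ _
    _ ≤ #(F' \ F) * M + #(F \ F') * M := by
      gcongr
      · exact (norm_sum_le_of_le _ (fun x _ => hM x)).trans (by simp)
      · exact (norm_sum_le_of_le _ (fun x _ => hM x)).trans (by simp)
    _ = M * #(symmDiff F F') := by
      rw [symmDiff_def, Finset.sup_eq_union, Finset.card_union_of_disjoint disjoint_sdiff_sdiff]
      push_cast; ring

end av

/-- mean ergodic theorem along arbitrary Følner sequences, Gram form. -/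
lemma mean_ergodic {G E : Type*} [CommGroup G] [NormedAddCommGroup E] [InnerProductSpace ℝ E]
    [CompleteSpace E] (v : G → E) (hv : ∀ g k l, inner ℝ (v (g * k)) (v (g * l)) = inner ℝ (v k) (v l)) :
    ∃ p : E, ∀ F : ℕ → Finset G, IsFol F → Tendsto (fun n => av (F n) v) atTop (𝓝 p) := by
  set C := closure (convexHull ℝ (Set.range v)) with hC
  have hCconv : Convex ℝ C := (convex_convexHull ℝ _).closure
  have hCne : C.Nonempty := ⟨v 1, subset_closure (subset_convexHull ℝ _ ⟨1, rfl⟩)⟩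
  obtain ⟨p, hp, hpmin⟩ := exists_norm_eq_iInf_of_complete_convex hCne isClosed_closure.isComplete
    hCconv 0
  rw [norm_eq_iInf_iff_real_inner_le_zero hCconv hp] at hpmin
  have hvn : ∀ g, ‖v g‖ ≤ ‖v 1‖ := by
    intro g
    have := hv g 1 1
    rw [mul_one, real_inner_self_eq_norm_sq, real_inner_self_eq_norm_sq] at this
    nlinarith [norm_nonneg (v g), norm_nonneg (v 1)]
  have key : ∀ y ∈ C, ‖y - p‖ ^ 2 ≤ ‖y‖ ^ 2 - ‖p‖ ^ 2 := by
    intro y hy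
    have h := hpmin y hy
    have h2 : ‖y‖ ^ 2 = ‖p + (y - p)‖ ^ 2 := by congr 2; abel
    rw [norm_add_sq_real] at h2
    simp only [zero_sub, inner_neg_left] at h
    linarith
  refine ⟨p, fun F hF => ?_⟩
  have havC : ∀ᶠ n in atTop, av (F n) v ∈ C := by
    filter_upwards [hF.1] with n hn
    refine subset_closure ?_
    unfold av
    rw [Finset.smul_sum]
    refine (convex_convexHull ℝ _).sum_mem (fun _ _ => by positivity) ?_
      (fun i _ => subset_convexHull ℝ _ ⟨i, rfl⟩)
    have : (#(F n) : ℝ) ≠ 0 := by simpa using hn.ne_empty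
    simp [this]
  have hlim : ∀ ε > 0, ∀ᶠ n in atTop, ‖av (F n) v‖ ≤ ‖p‖ + ε := by
    intro ε hε
    obtain ⟨y, hy, hyp⟩ := Metric.mem_closure_iff.1 hp (ε/2) (by positivity)
    have hyn : ‖y‖ ≤ ‖p‖ + ε / 2 := by
      rw [dist_comm, dist_eq_norm] at hyp
      have := norm_sub_norm_le y p
      linarith
    rw [mem_convexHull_iff_exists_fintype] at hy
    obtain ⟨ι, _, w, z, hw0, hw1, hz, rfl⟩ := hy
    choose k hk using hz
    have hinv : ∀ g, ‖∑ i, w i • v (g * k i)‖ = ‖∑ i, w i • z i‖ := by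
      intro g
      rw [← sq_eq_sq₀ (norm_nonneg _) (norm_nonneg _), ← real_inner_self_eq_norm_sq,
        ← real_inner_self_eq_norm_sq]
      simp only [sum_inner, inner_sum, inner_smul_left, inner_smul_right, hv, hk]
    have hsmall : Tendsto (fun n => ∑ i, w i * (‖v 1‖ *
       (((symmDiff (F n : Set G) ((fun x => x * k i) '' (F n : Set G))).ncard : ℝ) / (#(F n) : ℝ))))
        atTop (𝓝 (∑ i, w i * (‖v 1‖ * 0))) :=
      tendsto_finsetSum _ fun i _ => ((hF.2 (k i)).const_mul _).const_mul _
    simp only [mul_zero, Finset.sum_const_zero] at hsmall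
    filter_upwards [hsmall.eventually_le_const (show (0:ℝ) < ε/2 by positivity)] with n hn
    have e1 : av (F n) (fun g => ∑ i, w i • v (g * k i)) = ∑ i, w i • av (F n) (fun g => v (g * k i)) := by
      simp only [av, Finset.smul_sum]
      rw [Finset.sum_comm]
      refine Finset.sum_congr rfl fun i _ => Finset.sum_congr rfl fun j _ => smul_comm _ _ _
    have e2 : av (F n) v = ∑ i, w i • av (F n) v := by rw [← Finset.sum_smul, hw1, one_smul]
    have e3 : ‖av (F n) (fun g => ∑ i, w i • v (g * k i)) - av (F n) v‖ ≤ ε / 2 := by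
      rw [e1, e2, ← Finset.sum_sub_distrib]
      refine (norm_sum_le _ _).trans (le_trans ?_ hn)
      refine Finset.sum_le_sum fun i _ => ?_
      rw [← smul_sub, norm_smul, Real.norm_of_nonneg (hw0 i)]
      exact mul_le_mul_of_nonneg_left (norm_av_sub_av_le _ _ _ _ hvn) (hw0 i)
    have e4 : ‖av (F n) (fun g => ∑ i, w i • v (g * k i))‖ ≤ ‖p‖ + ε / 2 := by
      refine (av_norm_le _ _).trans ?_
      simp only [hinv]
      exact (av_const_le _ (norm_nonneg _)).trans hyn
    have := norm_sub_norm_le (av (F n) v) (av (F n) (fun g => ∑ i, w i • v (g * k i)))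
    rw [norm_sub_rev] at this
    linarith
  rw [tendsto_iff_norm_sub_tendsto_zero]
  have hsq : Tendsto (fun n => ‖av (F n) v - p‖ ^ 2) atTop (𝓝 0) := by
    rw [Metric.tendsto_atTop']
    intro ε hε
    have : ∃ δ > 0, (‖p‖ + δ) ^ 2 - ‖p‖ ^ 2 < ε := by
      have hc : Tendsto (fun δ : ℝ => (‖p‖ + δ) ^ 2 - ‖p‖ ^ 2) (𝓝[>] 0) (𝓝 0) := by
        have : Continuous (fun δ : ℝ => (‖p‖ + δ) ^ 2 - ‖p‖ ^ 2) := by fun_prop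
        have := this.tendsto 0
        simp only [add_zero, sub_self] at this
        exact this.mono_left nhdsWithin_le_nhds
      obtain ⟨δ, h1, h2⟩ := ((hc.eventually_lt_const hε).and self_mem_nhdsWithin).exists
      exact ⟨δ, h2, h1⟩
    obtain ⟨δ, hδ, hδε⟩ := this
    obtain ⟨N, hN⟩ := eventually_atTop.1 (havC.and (hlim δ hδ))
    refine ⟨N, fun n hn => ?_⟩
    obtain ⟨h1, h2⟩ := hN n hn.le
    rw [Real.dist_eq, sub_zero, abs_of_nonneg (by positivity)]
    have := key _ h1
    have : ‖av (F n) v‖ ^ 2 ≤ (‖p‖ + δ) ^ 2 := by gcongr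
    linarith
  have := hsq.sqrt
  simpa using this

lemma mean_ergodic_C {G E : Type*} [CommGroup G] [NormedAddCommGroup E] [InnerProductSpace ℂ E]
    [CompleteSpace E] (v : G → E) (hv : ∀ g k l, inner ℂ (v (g * k)) (v (g * l)) = inner ℂ (v k) (v l)) :
    ∃ p : E, ∀ F : ℕ → Finset G, IsFol F → Tendsto (fun n => av (F n) v) atTop (𝓝 p) := by
  letI : InnerProductSpace ℝ E := InnerProductSpace.rclikeToReal ℂ E
  exact mean_ergodic v fun g k l => congrArg Complex.re (hv g k l)

/-- The Hilbert-Schmidt space -/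
lemma exists_HS.{u} (H : Type u) [NormedAddCommGroup H] [InnerProductSpace ℂ H] [CompleteSpace H] :
    ∃ (E : Type u) (_ : NormedAddCommGroup E) (_ : InnerProductSpace ℂ E) (_ : CompleteSpace E),
      ∃ R : H → H → E, ∀ z y z' y' : H,
      inner ℂ (R z y) (R z' y') = inner ℂ z z' * inner ℂ y' y := by
  obtain ⟨w, b, hb⟩ := exists_hilbertBasis ℂ H
  have hmem : ∀ z y : H, Memℓp (fun i : w => (inner ℂ y (b i) : ℂ) • z) 2 := by
    intro z y
    rw [memℓp_gen_iff (by norm_num)]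
    have := (b.summable_inner_mul_inner y y).norm
    refine (this.mul_right (‖z‖ ^ 2)).congr fun i => ?_
    rw [norm_smul, norm_mul, norm_inner_symm (b i) y]
    norm_num
    ring
  refine ⟨lp (fun _ : w => H) 2, inferInstance, inferInstance, inferInstance,
    fun z y => ⟨_, hmem z y⟩, fun z y z' y' => ?_⟩
  rw [lp.inner_eq_tsum]
  simp only [inner_smul_left, inner_smul_right]
  rw [← b.tsum_inner_mul_inner y' y, ← tsum_mul_left]
  refine tsum_congr fun i => ?_
  rw [inner_conj_symm]
  ring


section flight
variable {G H : Type*} [CommGroup G] [NormedAddCommGroup H] [InnerProductSpace ℂ H]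

lemma inner_av (F : Finset G) (z : H) (f : G → H) :
    inner ℂ z (av F f) = av F (fun k => (inner ℂ z (f k) : ℂ)) :=
  av_clm ((innerSL ℂ z).restrictScalars ℝ) F f

lemma av_inner (F : Finset G) (z : H) (f : G → H) :
    inner ℂ (av F f) z = av F (fun k => (inner ℂ (f k) z : ℂ)) := by
  rw [← inner_conj_symm, inner_av]
  have := av_clm (G := G) (Complex.conjCLE : ℂ →L[ℝ] ℂ) F (fun k => inner ℂ z (f k))
  simp only [ContinuousLinearEquiv.coe_coe, Complex.conjCLE_apply, inner_conj_symm] at this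
  exact this

lemma fol_shift {E : Type*} [NormedAddCommGroup E] [NormedSpace ℝ E] {F : ℕ → Finset G} (hF : IsFol F)
    (g : G) (f : G → E) (M : ℝ) (hM : ∀ x, ‖f x‖ ≤ M) :
    Tendsto (fun n => av (F n) (fun h => f (h * g)) - av (F n) f) atTop (𝓝 0) := by
  have := (hF.2 g).const_mul M
  rw [mul_zero] at this
  exact squeeze_zero_norm (fun n => norm_av_sub_av_le _ _ _ _ hM) this

lemma joint_eig (U : G → H →L[ℂ] H) (hcomm : ∀ g h y, U g (U h y) = U h (U g y)) :
    ∀ (n : ℕ) (W : Submodule ℂ H) [FiniteDimensional ℂ W], Module.finrank ℂ W = n → W ≠ ⊥ →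
      (∀ g, ∀ y ∈ W, U g y ∈ W) → ∃ y ∈ W, y ≠ 0 ∧ ∃ lam : G → ℂ, ∀ g, U g y = lam g • y := by
  intro n
  induction n using Nat.strong_induction_on with
  | _ n ih =>
    intro W _ hn hW hinv
    by_cases hs : ∀ g, ∃ μ : ℂ, ∀ y ∈ W, U g y = μ • y
    · choose lam hlam using hs
      obtain ⟨y, hy, hy0⟩ := Submodule.exists_mem_ne_zero_of_ne_bot hW
      exact ⟨y, hy, hy0, lam, fun g => hlam g y hy⟩
    · push Not at hs
      obtain ⟨g, hg⟩ := hs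
      have : Nontrivial W := Submodule.nontrivial_iff_ne_bot.2 hW
      obtain ⟨μ, hμ⟩ := Module.End.exists_eigenvalue ((U g : H →ₗ[ℂ] H).restrict (hinv g))
      obtain ⟨⟨e, he⟩, he1⟩ := hμ.exists_hasEigenvector
      have he0 : e ≠ 0 := fun h => he1.2 (by simp [h])
      have heq : U g e = μ • e := by
        have := he1.apply_eq_smul
        simpa using congrArg Subtype.val this
      obtain ⟨y, hy, hyne⟩ := hg μ
      set W' : Submodule ℂ H := W ⊓ LinearMap.ker ((U g : H →ₗ[ℂ] H) - μ • LinearMap.id) with hW'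
      have hmem : ∀ z, z ∈ W' ↔ z ∈ W ∧ U g z = μ • z := by
        intro z
        simp [hW', sub_eq_zero]
      have hlt : W' < W := by
        refine lt_of_le_of_ne inf_le_left fun h => ?_
        rw [← h] at hy
        exact hyne ((hmem y).1 hy).2
      have : FiniteDimensional ℂ W' := Submodule.finiteDimensional_of_le hlt.le
      obtain ⟨z, hz, hz0⟩ := ih (Module.finrank ℂ W') (hn ▸ Submodule.finrank_lt_finrank_of_lt hlt) W' rfl
        (fun h => he0 (by simpa [h] using (hmem e).2 ⟨he, heq⟩))
        (fun k z hz => by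
          rw [hmem] at hz ⊢
          refine ⟨hinv k z hz.1, ?_⟩
          rw [hcomm, hz.2, map_smul])
      exact ⟨z, hlt.le hz, hz0⟩

variable [CompleteSpace H]

/-- A compact symmetric operator commuting with the group kills flight vectors. -/
lemma compact_flight (U : G → H →L[ℂ] H)
    (hmul : ∀ g h y, U g (U h y) = U (g * h) y) (hone : ∀ y, U 1 y = y)
    (hin : ∀ g y z, inner ℂ (U g y) (U g z) = inner ℂ y z)
    (T : H →L[ℂ] H) (hTc : IsCompactOperator T) (hTs : ∀ y z, inner ℂ (T y) z = inner ℂ y (T z))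
    (hTU : ∀ g y, T (U g y) = U g (T y)) (x : H) (hx : x ∈ flightVectors U) : T x = 0 := by
  have hcomm : ∀ g h y, U g (U h y) = U h (U g y) := by
    intro g h y; rw [hmul, hmul, mul_comm]
  have hnorm : ∀ g y, ‖U g y‖ = ‖y‖ := by
    intro g y
    rw [← sq_eq_sq₀ (norm_nonneg _) (norm_nonneg _)]
    have := hin g y y
    rw [inner_self_eq_norm_sq_to_K, inner_self_eq_norm_sq_to_K] at this
    exact_mod_cast this
  have hlam : ∀ y : H, y ≠ 0 → ∀ lam : G → ℂ, (∀ g, U g y = lam g • y) → ∀ g, ‖lam g‖ = 1 := by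
    intro y hy lam hl g
    have := hnorm g y
    rw [hl g, norm_smul] at this
    exact (mul_eq_right₀ (norm_ne_zero_iff.2 hy)).1 this
  have hmemF : ∀ z : H, z ∈ flightVectors U ↔ ∀ e : H, e ≠ 0 → (∀ lam : G → ℂ, (∀ g, U g e = lam g • e) →
      inner ℂ e z = 0) := by
    intro z
    unfold flightVectors
    rw [Submodule.orthogonal_closure, Submodule.mem_orthogonal]
    constructor
    · intro h e he lam hl
      exact h e (Submodule.subset_span ⟨he, lam, fun g => ⟨hlam e he lam hl g, hl g⟩⟩)
    · intro h u hu
      induction hu using Submodule.span_induction with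
      | mem u hu =>
        obtain ⟨h0, lam, hl⟩ := hu
        exact h u h0 lam fun g => (hl g).2
      | zero => simp
      | add u v _ _ hu hv => rw [inner_add_left, hu, hv, add_zero]
      | smul c u _ hu => rw [inner_smul_left, hu, mul_zero]
  have hTinv : ∀ z ∈ flightVectors U, T z ∈ flightVectors U := by
    intro z hz
    rw [hmemF] at hz ⊢
    intro e he lam hl
    rw [← hTs]
    by_cases h0 : T e = 0
    · simp [h0]
    · exact hz (T e) h0 lam fun g => by rw [← hTU, hl, map_smul]
  have hUinv : ∀ g, ∀ z ∈ flightVectors U, U g z ∈ flightVectors U := by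
    intro g z hz
    rw [hmemF] at hz ⊢
    intro e he lam hl
    have h1 : e = U g (U g⁻¹ e) := by rw [hmul, mul_inv_cancel, hone]
    rw [h1, hin, hl g⁻¹, inner_smul_left, hz e he lam hl, mul_zero]
  have hcl : IsClosed (flightVectors U : Set H) := Submodule.isClosed_orthogonal _
  have : CompleteSpace (flightVectors U) := hcl.completeSpace_coe
  let S : flightVectors U →L[ℂ] flightVectors U := T.restrict hTinv
  have hSc : IsCompactOperator S := hTc.restrict' (f := (T : H →ₗ[ℂ] H)) hTinv
  have hSs : S.IsSymmetric := fun y z => hTs y z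
  have hS0 : S = 0 := by
    rw [← ContinuousLinearMap.eq_zero_of_forall_hasEigenvalue_eq_zero hSc hSs]
    intro μ hμ
    by_contra hμ0
    obtain ⟨⟨e, he⟩, he1⟩ := hμ.exists_hasEigenvector
    have he0 : e ≠ 0 := fun h => he1.2 (by simp [h])
    have heq : T e = μ • e := by
      have := he1.apply_eq_smul
      exact congrArg Subtype.val this
    have hfd : FiniteDimensional ℂ (Module.End.eigenspace T.toLinearMap μ) :=
      ContinuousLinearMap.finite_dimensional_eigenspace hTc μ hμ0
    set W : Submodule ℂ H := flightVectors U ⊓ Module.End.eigenspace T.toLinearMap μ with hWdef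
    have : FiniteDimensional ℂ W := Submodule.finiteDimensional_of_le inf_le_right
    have hmem : ∀ z, z ∈ W ↔ z ∈ flightVectors U ∧ T z = μ • z := by
      intro z; simp [hWdef]
    obtain ⟨y, hy, hy0, lam, hl⟩ := joint_eig U hcomm _ W rfl
      (fun h => he0 (by simpa [h] using (hmem e).2 ⟨he, heq⟩))
      (fun g z hz => by
        rw [hmem] at hz ⊢
        exact ⟨hUinv g z hz.1, by rw [hTU, hz.2, map_smul]⟩)
    have := (hmemF y).1 ((hmem y).1 hy).1 y hy0 lam hl
    exact hy0 (inner_self_eq_zero.1 this)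
  have := congrArg (fun S' => ((S' ⟨x, hx⟩ : flightVectors U) : H)) hS0
  simpa [S] using this

lemma flight_sq (U : G → H →L[ℂ] H)
    (hmul : ∀ g h y, U g (U h y) = U (g * h) y) (hone : ∀ y, U 1 y = y)
    (hin : ∀ g y z, inner ℂ (U g y) (U g z) = inner ℂ y z)
    (x : H) (hx : x ∈ flightVectors U) (F : ℕ → Finset G) (hF : IsFol F) :
    Tendsto (fun n => av (F n) fun k => av (F n) fun k' => ‖(inner ℂ (U k x) (U k' x) : ℂ)‖ ^ 2)
      atTop (𝓝 0) := by
  have hnorm : ∀ g y, ‖U g y‖ = ‖y‖ := by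
    intro g y
    rw [← sq_eq_sq₀ (norm_nonneg _) (norm_nonneg _)]
    have := hin g y y
    rw [inner_self_eq_norm_sq_to_K, inner_self_eq_norm_sq_to_K] at this
    exact_mod_cast this
  obtain ⟨E, _, _, _, R, hR⟩ := exists_HS H
  have hRn : ∀ z y, ‖R z y‖ = ‖z‖ * ‖y‖ := by
    intro z y
    rw [← sq_eq_sq₀ (norm_nonneg _) (by positivity)]
    have := hR z y z y
    simp only [inner_self_eq_norm_sq_to_K] at this
    rw [mul_pow]
    exact_mod_cast this
  set v : G → E := fun k => R (U k x) (U k x) with hv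
  obtain ⟨p, hp⟩ := mean_ergodic_C v (by
    intro g k l
    simp only [hv, hR, ← hmul, hin])
  replace hp := hp F hF
  set Tn : ℕ → H →L[ℂ] H := fun n => av (F n) fun k => InnerProductSpace.rankOne ℂ (U k x) (U k x) with hTn
  have hTnapp : ∀ n y, Tn n y = av (F n) fun k => (inner ℂ (U k x) y : ℂ) • U k x := by
    intro n y
    simp [hTn, av]
  have hTf : ∀ n z y, inner ℂ z (Tn n y) = inner ℂ (R z y) (av (F n) v) := by
    intro n z y
    rw [hTnapp, inner_av, inner_av]
    congr 1
    funext k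
    rw [inner_smul_right, hv, hR, mul_comm]
  have hbd : ∀ (S : H →L[ℂ] H) (f : E), (∀ z y, inner ℂ z (S y) = inner ℂ (R z y) f) → ‖S‖ ≤ ‖f‖ := by
    intro S f h
    refine S.opNorm_le_bound (norm_nonneg _) fun y => ?_
    by_cases h0 : ‖S y‖ = 0
    · rw [h0]; positivity
    have h1 := congrArg norm (h (S y) y)
    rw [inner_self_eq_norm_sq_to_K] at h1
    have h2 := norm_inner_le_norm (𝕜 := ℂ) (R (S y) y) f
    rw [← h1, hRn] at h2
    simp only [norm_pow, RCLike.norm_ofReal, abs_norm] at h2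
    have h3 : 0 < ‖S y‖ := lt_of_le_of_ne (norm_nonneg _) (Ne.symm h0)
    have : ‖S y‖ * ‖S y‖ ≤ ‖S y‖ * (‖f‖ * ‖y‖) := by linarith
    exact le_of_mul_le_mul_left this h3
  have hcau : CauchySeq Tn := by
    have hc := hp.cauchySeq
    rw [Metric.cauchySeq_iff] at hc ⊢
    intro ε hε
    obtain ⟨N, hN⟩ := hc ε hε
    refine ⟨N, fun m hm n hn => lt_of_le_of_lt ?_ (hN m hm n hn)⟩
    rw [dist_eq_norm, dist_eq_norm]
    refine hbd _ _ fun z y => ?_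
    rw [sub_apply, inner_sub_right, inner_sub_right, hTf, hTf]
  obtain ⟨T, hT⟩ := cauchySeq_tendsto_of_complete hcau
  have hTy : ∀ y, Tendsto (fun n => Tn n y) atTop (𝓝 (T y)) := fun y =>
    ((ContinuousLinearMap.apply ℂ H y).continuous.tendsto T).comp hT
  have hTp : ∀ z y, inner ℂ z (T y) = inner ℂ (R z y) p := by
    intro z y
    have h1 : Tendsto (fun n => (inner ℂ z (Tn n y) : ℂ)) atTop (𝓝 (inner ℂ z (T y))) :=
      tendsto_const_nhds.inner (hTy y)
    have h2 : Tendsto (fun n => (inner ℂ (R z y) (av (F n) v) : ℂ)) atTop (𝓝 (inner ℂ (R z y) p)) :=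
      tendsto_const_nhds.inner hp
    simp only [hTf] at h1
    exact tendsto_nhds_unique h1 h2
  have hTc : IsCompactOperator T := by
    refine isCompactOperator_of_tendsto hT (Eventually.of_forall fun n => ?_)
    have h1 : ∀ k, IsCompactOperator (InnerProductSpace.rankOne ℂ (U k x) (U k x)) := by
      intro k
      have : IsCompactOperator (ContinuousLinearMap.id ℂ ℂ) :=
        (isCompactOperator_id_iff_finiteDimensional (𝕜 := ℂ)).2 inferInstance
      exact (this.clm_comp (ContinuousLinearMap.toSpanSingleton ℂ (U k x))).comp_clm (innerSL ℂ (U k x))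
    have h2 : ∀ s : Finset G, IsCompactOperator
        (∑ k ∈ s, InnerProductSpace.rankOne ℂ (U k x) (U k x) : H →L[ℂ] H) := by
      intro s
      classical
      induction s using Finset.induction_on with
      | empty => simpa using isCompactOperator_zero
      | insert a s ha ih =>
        rw [Finset.sum_insert ha]
        exact (h1 a).add ih
    exact (h2 (F n)).smul ((#(F n) : ℝ)⁻¹)
  have hTs : ∀ y z, inner ℂ (T y) z = inner ℂ y (T z) := by
    intro y z
    have h1 : Tendsto (fun n => (inner ℂ (Tn n y) z : ℂ)) atTop (𝓝 (inner ℂ (T y) z)) :=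
      (hTy y).inner tendsto_const_nhds
    have h2 : Tendsto (fun n => (inner ℂ y (Tn n z) : ℂ)) atTop (𝓝 (inner ℂ y (T z))) :=
      tendsto_const_nhds.inner (hTy z)
    refine tendsto_nhds_unique h1 (h2.congr fun n => ?_)
    rw [hTnapp, hTnapp, inner_av, av_inner]
    congr 1
    funext k
    rw [inner_smul_right, inner_smul_left, inner_conj_symm, mul_comm]
  have hTU0 : ∀ g z y, inner ℂ (U g z) (T (U g y)) = inner ℂ z (T y) := by
    intro g z y
    set φ : G → ℂ := fun k => inner ℂ (U g z) (U k x) * inner ℂ (U k x) (U g y) with hφ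
    have h0 := fol_shift hF g φ ((‖z‖ * ‖x‖) * (‖x‖ * ‖y‖)) (by
      intro k
      rw [hφ, norm_mul]
      have h1 := norm_inner_le_norm (𝕜 := ℂ) (U g z) (U k x)
      have h2 := norm_inner_le_norm (𝕜 := ℂ) (U k x) (U g y)
      simp only [hnorm] at h1 h2
      gcongr)
    have h1 : ∀ z y, Tendsto (fun n => av (F n) fun k => (inner ℂ z (U k x) * inner ℂ (U k x) y : ℂ))
        atTop (𝓝 (inner ℂ z (T y))) := by
      intro z y
      have h2 : Tendsto (fun n => (inner ℂ z (Tn n y) : ℂ)) atTop (𝓝 (inner ℂ z (T y))) :=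
        tendsto_const_nhds.inner (hTy y)
      refine h2.congr fun n => ?_
      rw [hTnapp, inner_av]
      congr 1
      funext k
      rw [inner_smul_right, mul_comm]
    have h2 := (h1 z y).sub (h1 (U g z) (U g y))
    have h3 : (fun n => av (F n) (fun k => φ (k * g)) - av (F n) φ) = fun n =>
        (av (F n) fun k => (inner ℂ z (U k x) * inner ℂ (U k x) y : ℂ)) - av (F n) φ := by
      funext n
      congr 2
      funext k
      rw [hφ]
      simp only [mul_comm k g, ← hmul, hin]
    rw [h3] at h0
    exact (sub_eq_zero.1 (tendsto_nhds_unique h2 h0)).symm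
  have hTU : ∀ g y, T (U g y) = U g (T y) := by
    intro g y
    refine ext_inner_left ℂ fun z => ?_
    have h1 : z = U g (U g⁻¹ z) := by rw [hmul, mul_inv_cancel, hone]
    rw [h1, hTU0, hin]
  have hT0 := compact_flight U hmul hone hin T hTc hTs hTU x hx
  have hTn0 : Tendsto (fun n => ‖Tn n - T‖ * ‖x‖ ^ 2) atTop (𝓝 0) := by
    have := (tendsto_iff_norm_sub_tendsto_zero.1 hT).mul_const (‖x‖ ^ 2)
    rwa [zero_mul] at this
  refine squeeze_zero (fun n => av_nonneg _ fun k => av_nonneg _ fun k' => by positivity) (fun n => ?_) hTn0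
  refine (av_mono _ (g := fun _ => ‖Tn n - T‖ * ‖x‖ ^ 2) fun k => ?_).trans (av_const_le _ (by positivity))
  have h1 : ((av (F n) fun k' => ‖(inner ℂ (U k x) (U k' x) : ℂ)‖ ^ 2 : ℝ) : ℂ) =
      inner ℂ (U k x) ((Tn n - T) (U k x)) := by
    rw [sub_apply, hTU, hT0, map_zero, sub_zero, hTnapp, inner_av]
    have := av_clm (G := G) Complex.ofRealCLM (F n) (fun k' => ‖(inner ℂ (U k x) (U k' x) : ℂ)‖ ^ 2)
    rw [Complex.ofRealCLM_apply] at this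
    rw [this]
    congr 1
    funext k'
    rw [inner_smul_right, ← inner_conj_symm, Complex.ofRealCLM_apply, RCLike.norm_conj, RCLike.mul_conj]
    norm_cast
  have h2 : (av (F n) fun k' => ‖(inner ℂ (U k x) (U k' x) : ℂ)‖ ^ 2 : ℝ) ≤
      ‖(inner ℂ (U k x) ((Tn n - T) (U k x)) : ℂ)‖ := by
    rw [← h1, Complex.norm_real]
    exact le_abs_self _
  refine h2.trans ((norm_inner_le_norm _ _).trans ?_)
  have h3 := (Tn n - T).le_opNorm (U k x)
  rw [hnorm] at h3 ⊢
  nlinarith [norm_nonneg x]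

end flight


lemma av_mono' {G : Type*} (F : Finset G) {f g : G → ℝ} (h : ∀ x ∈ F, f x ≤ g x) : av F f ≤ av F g := by
  unfold av
  simp only [smul_eq_mul]
  exact mul_le_mul_of_nonneg_left (Finset.sum_le_sum h) (by positivity)

section alg
variable {A G H : Type*} [NormedRing A] [StarRing A] [CStarRing A] [NormedAlgebra ℂ A]
    [CompleteSpace A] [StarModule ℂ A] [CommGroup G]
    [NormedAddCommGroup H] [InnerProductSpace ℂ H] [CompleteSpace H]

structure Sys (ω : A →ₗ[ℂ] ℂ) (τ : G → A ≃⋆ₐ[ℂ] A) (j : A →ₗ[ℂ] H) (U : G → H →L[ℂ] H) : Prop where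
  pos : ∀ a : A, 0 ≤ ω (star a * a)
  one : ω 1 = 1
  tr : ∀ a b : A, ω (a * b) = ω (b * a)
  t1 : ∀ a : A, τ 1 a = a
  tmul : ∀ g h a, τ g (τ h a) = τ (g * h) a
  inv : ∀ g a, ω (τ g a) = ω a
  dense : DenseRange j
  jin : ∀ a b : A, (inner ℂ (j a) (j b) : ℂ) = ω (star a * b)
  hU : ∀ g a, U g (j a) = j (τ g a)

namespace Sys
variable {ω : A →ₗ[ℂ] ℂ} {τ : G → A ≃⋆ₐ[ℂ] A} {j : A →ₗ[ℂ] H} {U : G → H →L[ℂ] H}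

lemma U_mul (S : Sys ω τ j U) (g h : G) (y : H) : U g (U h y) = U (g * h) y := by
  refine S.dense.induction_on (p := fun y => U g (U h y) = U (g * h) y) y
    (isClosed_eq (by fun_prop) (by fun_prop)) fun a => ?_
  rw [S.hU, S.hU, S.hU, S.tmul]

lemma U_one (S : Sys ω τ j U) (y : H) : U 1 y = y := by
  refine S.dense.induction_on (p := fun y => U 1 y = y) y
    (isClosed_eq (by fun_prop) (by fun_prop)) fun a => ?_
  rw [S.hU, S.t1]

lemma U_in (S : Sys ω τ j U) (g : G) (y z : H) : inner ℂ (U g y) (U g z) = inner ℂ y z := by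
  refine S.dense.induction_on (p := fun y => inner ℂ (U g y) (U g z) = inner ℂ y z) y
    (isClosed_eq (by fun_prop) (by fun_prop)) fun a => ?_
  refine S.dense.induction_on (p := fun z => inner ℂ (U g (j a)) (U g z) = inner ℂ (j a) z) z
    (isClosed_eq (by fun_prop) (by fun_prop)) fun b => ?_
  rw [S.hU, S.hU, S.jin, S.jin, ← map_star, ← map_mul, S.inv]

lemma U_norm (S : Sys ω τ j U) (g : G) (y : H) : ‖U g y‖ = ‖y‖ := by
  rw [← sq_eq_sq₀ (norm_nonneg _) (norm_nonneg _)]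
  have := S.U_in g y y
  rw [inner_self_eq_norm_sq_to_K, inner_self_eq_norm_sq_to_K] at this
  exact_mod_cast this

lemma normsq (S : Sys ω τ j U) (x : A) : ((‖j x‖ ^ 2 : ℝ) : ℂ) = ω (star x * x) := by
  rw [← S.jin, inner_self_eq_norm_sq_to_K]
  norm_cast

lemma exists_sq (x : A) : ∃ s : A, (‖x‖ ^ 2 : ℂ) • (1 : A) - star x * x = star s * s := by
  let _ : CStarAlgebra A := {}
  let _ : PartialOrder A := CStarAlgebra.spectralOrder A
  have _ : StarOrderedRing A := CStarAlgebra.spectralOrderedRing A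
  have h := CStarAlgebra.star_mul_le_algebraMap_norm_sq (a := x)
  rw [← sub_nonneg, CStarAlgebra.nonneg_iff_eq_star_mul_self] at h
  obtain ⟨s, hs⟩ := h
  refine ⟨s, ?_⟩
  rw [← hs, Algebra.algebraMap_eq_smul_one]
  congr 1
  rw [← Complex.coe_smul]
  norm_cast

lemma norm_mul_le_left (S : Sys ω τ j U) (x y : A) : ‖j (x * y)‖ ≤ ‖x‖ * ‖j y‖ := by
  obtain ⟨s, hs⟩ := exists_sq x
  have h1 : star (x * y) * (x * y) = star y * (star x * x) * y := by
    rw [star_mul]; noncomm_ring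
  have h2 : star (s * y) * (s * y) = star y * (star s * s) * y := by
    rw [star_mul]; noncomm_ring
  have h3 := S.normsq (x * y)
  have h4 := S.normsq (s * y)
  rw [h2, ← hs, mul_sub, sub_mul, map_sub, ← h1, ← h3] at h4
  simp only [mul_smul_comm, smul_mul_assoc, mul_one, map_smul, ← S.normsq] at h4
  have h5 : ‖j (s * y)‖ ^ 2 = ‖x‖ ^ 2 * ‖j y‖ ^ 2 - ‖j (x * y)‖ ^ 2 := by
    rw [smul_eq_mul] at h4
    exact_mod_cast h4
  rw [← abs_of_nonneg (norm_nonneg (j (x * y))), ← abs_of_nonneg (show 0 ≤ ‖x‖ * ‖j y‖ by positivity)]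
  refine sq_le_sq.1 ?_
  rw [mul_pow]
  nlinarith [sq_nonneg ‖j (s * y)‖]

lemma norm_star (S : Sys ω τ j U) (x : A) : ‖j (star x)‖ = ‖j x‖ := by
  rw [← sq_eq_sq₀ (norm_nonneg _) (norm_nonneg _)]
  have h1 := S.normsq (star x)
  rw [star_star, S.tr, ← S.normsq] at h1
  exact_mod_cast h1

lemma norm_mul_le_right (S : Sys ω τ j U) (x y : A) : ‖j (x * y)‖ ≤ ‖j x‖ * ‖y‖ := by
  rw [← S.norm_star (x * y), star_mul, ← S.norm_star x, ← _root_.norm_star y, mul_comm]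
  exact S.norm_mul_le_left _ _

lemma norm_le (S : Sys ω τ j U) (x : A) : ‖j x‖ ≤ ‖x‖ := by
  have h := S.norm_mul_le_left x 1
  have h1 := S.normsq 1
  rw [star_one, mul_one, S.one] at h1
  have h2 : ‖j 1‖ ^ 2 = 1 := by exact_mod_cast h1
  have h3 : ‖j 1‖ = 1 := (pow_eq_one_iff_of_nonneg (norm_nonneg _) two_ne_zero).1 h2
  rwa [mul_one, h3, mul_one] at h

lemma tau_norm (τ : G → A ≃⋆ₐ[ℂ] A) (g : G) (x : A) : ‖τ g x‖ = ‖x‖ := by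
  let _ : CStarAlgebra A := {}
  exact NonUnitalStarAlgHom.norm_map (τ g) (τ g).injective x

def Erg (ω : A →ₗ[ℂ] ℂ) (τ : G → A ≃⋆ₐ[ℂ] A) : Prop :=
  ∃ F : ℕ → Finset G, IsFol F ∧
    ∀ a b : A, Tendsto (fun n => av (F n) fun g => ω (a * τ g b)) atTop (𝓝 (ω a * ω b))

lemma erg_unif (S : Sys ω τ j U) (hE : Erg ω τ) {F : ℕ → Finset G} (hF : IsFol F) (a b : A)
    {ε : ℝ} (hε : 0 < ε) :
    ∀ᶠ n in atTop, ∀ g₁ : G, ‖av (F n) (fun h => ω (a * τ (h * g₁) b)) - ω a * ω b‖ ≤ ε := by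
  have hin : ∀ (a : A) g, ω (a * τ g b) = inner ℂ (j (star a)) (U g (j b)) := by
    intro a g
    rw [S.hU, S.jin, star_star]
  obtain ⟨p, hp⟩ := mean_ergodic_C (fun h => U h (j b)) (by
    intro g k l
    simp only [← S.U_mul, S.U_in])
  have hpe : p = ω b • j 1 := by
    obtain ⟨F0, hF0, hlim⟩ := hE
    refine S.dense.eq_of_inner_right ℂ fun a => ?_
    have h1 : Tendsto (fun n => (inner ℂ (j a) (av (F0 n) fun h => U h (j b)) : ℂ)) atTop
      (𝓝 (inner ℂ (j a) p)) := tendsto_const_nhds.inner (hp F0 hF0)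
    have h2 := hlim (star a) b
    simp only [hin, star_star] at h2
    simp only [inner_av] at h1
    rw [tendsto_nhds_unique h1 h2, inner_smul_right, S.jin, mul_one, mul_comm]
  have h3 := tendsto_iff_norm_sub_tendsto_zero.1 (hp F hF)
  have h4 := h3.const_mul ‖j (star a)‖
  rw [mul_zero] at h4
  filter_upwards [h4.eventually_le_const hε] with n hn g₁
  refine le_trans ?_ hn
  have e1 : av (F n) (fun h => ω (a * τ (h * g₁) b)) =
      inner ℂ (j (star a)) (U g₁ (av (F n) fun h => U h (j b))) := by
    have := av_clm ((U g₁).restrictScalars ℝ) (F n) (fun h => U h (j b))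
    simp only [ContinuousLinearMap.coe_restrictScalars'] at this
    rw [this, inner_av]
    congr 1
    funext h
    rw [hin, S.U_mul, mul_comm]
  have e2 : ω a * ω b = inner ℂ (j (star a)) (U g₁ p) := by
    rw [hpe, map_smul, S.hU, inner_smul_right, S.jin, star_star, map_one, mul_one, mul_comm]
  rw [e1, e2, ← inner_sub_right, ← map_sub]
  refine (norm_inner_le_norm _ _).trans ?_
  rw [S.U_norm]

lemma flight_prod (S : Sys ω τ j U) {F : ℕ → Finset G} (hF : IsFol F) (a b : A)
    (hfl : j a ∈ flightVectors U ∨ j b ∈ flightVectors U ∨ j (star b) ∈ flightVectors U) :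
    Tendsto (fun n => av (F n) fun k => av (F n) fun k' =>
      ‖(inner ℂ (U k (j b)) (U k' (j b)) : ℂ)‖ * ‖(inner ℂ (U k (j a)) (U k' (j a)) : ℂ)‖) atTop (𝓝 0) := by
  have gen : ∀ p q : G → G → ℝ, ∀ C : ℝ, (∀ k l, 0 ≤ p k l) → (∀ k l, 0 ≤ q k l) → (∀ k l, q k l ≤ C) →
      Tendsto (fun n => av (F n) fun k => av (F n) fun k' => p k k' ^ 2) atTop (𝓝 0) →
      Tendsto (fun n => av (F n) fun k => av (F n) fun k' => p k k' * q k k') atTop (𝓝 0) := by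
    intro p q C hp hq hC h
    have h1 := h.sqrt.const_mul C
    rw [Real.sqrt_zero, mul_zero] at h1
    refine squeeze_zero (fun n => av_nonneg _ fun k => av_nonneg _ fun k' => mul_nonneg (hp _ _) (hq _ _))
      (fun n => ?_) h1
    have hC0 : 0 ≤ C := (hq 1 1).trans (hC 1 1)
    calc _ ≤ av (F n) fun k => av (F n) fun k' => C • p k k' :=
          av_mono _ fun k => av_mono _ fun k' => by
            rw [smul_eq_mul, mul_comm]; exact mul_le_mul_of_nonneg_right (hC _ _) (hp _ _)
      _ = C * av (F n) fun k => av (F n) fun k' => p k k' := by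
          simp only [av_smul]
          rw [smul_eq_mul]
      _ ≤ _ := by
        refine mul_le_mul_of_nonneg_left (Real.le_sqrt_of_sq_le ?_) hC0
        exact (av_sq_le _ _).trans (av_mono _ fun k => av_sq_le _ _)
  have hbound : ∀ x : H, ∀ k l, ‖(inner ℂ (U k x) (U l x) : ℂ)‖ ≤ ‖x‖ * ‖x‖ := by
    intro x k l
    refine (norm_inner_le_norm _ _).trans ?_
    rw [S.U_norm, S.U_norm]
  have hstar : ∀ k l, ‖(inner ℂ (U k (j b)) (U l (j b)) : ℂ)‖ =
      ‖(inner ℂ (U k (j (star b))) (U l (j (star b))) : ℂ)‖ := by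
    intro k l
    rw [norm_inner_symm]
    simp only [S.hU, S.jin]
    rw [S.tr, map_star, map_star, star_star]
  have hsq := flight_sq U S.U_mul S.U_one S.U_in
  rcases hfl with h | h | h
  · have := gen (fun k k' => ‖(inner ℂ (U k (j a)) (U k' (j a)) : ℂ)‖)
      (fun k k' => ‖(inner ℂ (U k (j b)) (U k' (j b)) : ℂ)‖) _ (fun _ _ => norm_nonneg _)
      (fun _ _ => norm_nonneg _) (hbound _) (hsq _ h F hF)
    simpa only [mul_comm] using this
  · exact gen _ _ _ (fun _ _ => norm_nonneg _) (fun _ _ => norm_nonneg _) (hbound _) (hsq _ h F hF)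
  · simp only [hstar]
    exact gen _ _ _ (fun _ _ => norm_nonneg _) (fun _ _ => norm_nonneg _) (hbound _) (hsq _ h F hF)

lemma smooth (S : Sys ω τ j U) {F : ℕ → Finset G} (hF : IsFol F) (K : Finset G) (hK : K.Nonempty) (M : ℝ)
    {ε : ℝ} (hε : 0 < ε) :
    ∀ᶠ n in atTop, ∀ y : H, ‖y‖ ≤ M → ∀ g₂, ‖av (F n) fun g => U (g * g₂) y‖ ≤
      ‖av K fun k => U k y‖ + ε := by
  have h1 : Tendsto (fun n => av K fun k => M *
    (((symmDiff (F n : Set G) ((fun x => x * k) '' (F n : Set G))).ncard : ℝ) / (#(F n) : ℝ))) atTop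
      (𝓝 ((#K : ℝ)⁻¹ • ∑ k ∈ K, M * 0)) :=
    (tendsto_finsetSum _ fun k _ => (hF.2 k).const_mul M).const_smul _
  simp only [mul_zero, Finset.sum_const_zero, smul_zero] at h1
  filter_upwards [h1.eventually_le_const hε] with n hn y hy g₂
  have e0 : ∀ g (Q : Finset G) (f : G → H), U g (av Q f) = av Q fun x => U g (f x) := fun g Q f =>
    av_clm ((U g).restrictScalars ℝ) Q f
  have e1 : (av (F n) fun g => U (g * g₂) y) = U g₂ (av (F n) fun g => U g y) := by
    rw [e0]; simp only [S.U_mul, mul_comm]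
  rw [e1, S.U_norm]
  set x0 := av (F n) fun g => U g y with hx0
  have e2 : ‖av K (fun k => av (F n) fun g => U (g * k) y)‖ ≤ ‖av K fun k => U k y‖ := by
    rw [av_comm]
    simp only [← S.U_mul, ← e0]
    refine (av_norm_le _ _).trans ?_
    simp only [S.U_norm]
    exact av_const_le _ (norm_nonneg _)
  have e3 : ‖av K (fun k => av (F n) fun g => U (g * k) y) - x0‖ ≤ ε := by
    nth_rewrite 1 [← av_const hK x0]
    rw [← av_sub]
    refine (av_norm_le _ _).trans (le_trans (av_mono _ fun k => ?_) hn)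
    exact norm_av_sub_av_le (F n) k (fun g => U g y) M fun g => by rw [S.U_norm]; exact hy
  have := norm_sub_norm_le x0 (av K (fun k => av (F n) fun g => U (g * k) y))
  rw [norm_sub_rev] at this
  linarith

lemma main_dbl (S : Sys ω τ j U) (hE : Erg ω τ) {F F' : ℕ → Finset G} (hF : IsFol F) (hF' : IsFol F')
    (a b : A)
    (hfl : j a ∈ flightVectors U ∨ j b ∈ flightVectors U ∨ j (star b) ∈ flightVectors U)
    {ε : ℝ} (hε : 0 < ε) : ∀ᶠ n in atTop, ∀ g₁ g₂ : G,
      av (F n) (fun h => ‖av (F' n) fun g => j (τ (g * g₂) (τ (h * g₁) a * b))‖) ≤ ε := by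
  set δ := ε ^ 2 / 8 with hδ
  have hδ0 : 0 < δ := by positivity
  obtain ⟨m, hm, hK⟩ := (((S.flight_prod hF' a b hfl).eventually_le_const hδ0).and hF'.1).exists
  set K := F' m with hKdef
  set P : G → G → A := fun k l => τ l b * star (τ k b) with hP
  set Q : G → G → A := fun k l => star (τ k a) * τ l a with hQ
  have hPn : ∀ k l, ‖ω (P k l)‖ = ‖(inner ℂ (U k (j b)) (U l (j b)) : ℂ)‖ := by
    intro k l
    rw [S.hU, S.hU, S.jin, hP, S.tr]
  have hQn : ∀ k l, ‖ω (Q k l)‖ = ‖(inner ℂ (U k (j a)) (U l (j a)) : ℂ)‖ := by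
    intro k l
    rw [S.hU, S.hU, S.jin, hQ]
  have hev : ∀ᶠ n in atTop, ∀ k ∈ K, ∀ l ∈ K, ∀ g₁ : G,
      ‖av (F n) (fun h => ω (P k l * τ (h * g₁) (Q k l))) - ω (P k l) * ω (Q k l)‖ ≤ δ := by
    rw [Filter.eventually_all_finset]
    intro k _
    rw [Filter.eventually_all_finset]
    intro l _
    exact S.erg_unif hE hF _ _ hδ0
  filter_upwards [hev, S.smooth hF' K hK (‖a‖ * ‖b‖) (half_pos hε)] with n hn1 hn2 g₁ g₂
  set D : G → ℝ := fun h => ‖av K fun k => U k (j (τ (h * g₁) a * b))‖ with hD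
  have hstep1 : av (F n) (fun h => ‖av (F' n) fun g => j (τ (g * g₂) (τ (h * g₁) a * b))‖) ≤
      av (F n) D + ε / 2 := by
    calc _ ≤ av (F n) (fun h => D h + ε / 2) := by
          refine av_mono _ fun h => ?_
          have := hn2 (j (τ (h * g₁) a * b)) (by
            refine (S.norm_le _).trans ((norm_mul_le _ _).trans ?_)
            rw [tau_norm]) g₂
          simp only [S.hU] at this
          simpa only [hD, S.hU] using this
      _ = av (F n) D + av (F n) fun _ => ε / 2 := av_add _ _ _
      _ ≤ _ := by gcongr; exact av_const_le _ (half_pos hε).le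
  have hstep2 : av (F n) (fun h => D h ^ 2) ≤ δ + δ := by
    have c1 : ∀ h, ((D h ^ 2 : ℝ) : ℂ) = av K fun k => av K fun l => ω (P k l * τ (h * g₁) (Q k l)) := by
      intro h
      have := inner_self_eq_norm_sq_to_K (𝕜 := ℂ) (av K fun k => U k (j (τ (h * g₁) a * b)))
      rw [av_inner] at this
      simp only [inner_av] at this
      rw [hD]
      push_cast
      refine this.symm.trans ?_
      congr 1
      funext k
      congr 1
      funext l
      rw [S.hU, S.hU, S.jin, hP, hQ]
      simp only [map_mul, map_star, star_mul, S.tmul]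
      rw [mul_comm k, mul_comm l]
      simp only [mul_assoc]
      rw [S.tr (τ l b)]
      simp only [mul_assoc]
    have c2 : ((av (F n) (fun h => D h ^ 2) : ℝ) : ℂ) = av K fun k => av K fun l =>
        av (F n) fun h => ω (P k l * τ (h * g₁) (Q k l)) := by
      have := av_clm Complex.ofRealCLM (F n) (fun h => D h ^ 2)
      rw [Complex.ofRealCLM_apply] at this
      rw [this]
      simp only [Complex.ofRealCLM_apply, c1]
      rw [av_comm]
      congr 1
      funext k
      rw [av_comm]
    have c3 : av (F n) (fun h => D h ^ 2) = ‖((av (F n) (fun h => D h ^ 2) : ℝ) : ℂ)‖ := by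
      rw [Complex.norm_real, Real.norm_of_nonneg (av_nonneg _ fun h => sq_nonneg _)]
    rw [c3, c2]
    calc _ ≤ av K fun k => av K fun l => ‖av (F n) fun h => ω (P k l * τ (h * g₁) (Q k l))‖ :=
          (av_norm_le _ _).trans (av_mono _ fun k => av_norm_le _ _)
      _ ≤ av K fun k => av K fun l => (‖(inner ℂ (U k (j b)) (U l (j b)) : ℂ)‖ *
            ‖(inner ℂ (U k (j a)) (U l (j a)) : ℂ)‖ + δ) := by
          refine av_mono' _ fun k hk => av_mono' _ fun l hl => ?_
          have h1 := hn1 k hk l hl g₁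
          have h2 := norm_sub_norm_le (av (F n) (fun h => ω (P k l * τ (h * g₁) (Q k l)))) (ω (P k l) * ω (Q k l))
          rw [norm_mul, hPn, hQn] at h2
          linarith
      _ ≤ _ := by
          simp only [av_add]
          rw [av_const hK, av_const hK]
          linarith
  have hstep3 : av (F n) D ≤ ε / 2 := by
    have := (av_sq_le (F n) D).trans hstep2
    have h4 : (av (F n) D) ^ 2 ≤ (ε / 2) ^ 2 := by rw [hδ] at this; linarith
    exact (sq_le_sq₀ (av_nonneg _ fun _ => norm_nonneg _) (half_pos hε).le).1 h4
  linarith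

/-- cases a, b -/
lemma final_ab (S : Sys ω τ j U) (hE : Erg ω τ) {F F' : ℕ → Finset G} (hF : IsFol F) (hF' : IsFol F')
    (a b c : A)
    (hfl : j a ∈ flightVectors U ∨ j b ∈ flightVectors U ∨ j (star b) ∈ flightVectors U)
    {ε : ℝ} (hε : 0 < ε) : ∀ᶠ n in atTop, ∀ g₁ g₂ : G,
      ‖av (F n) (fun h => av (F' n) fun g =>
        j (τ ((g * g₂) * (h * g₁)) a * τ (g * g₂) b * τ (h * g₁) c))‖ ≤ ε := by
  filter_upwards [S.main_dbl hE hF hF' a b hfl (ε := ε / (‖c‖ + 1)) (by positivity)] with n hn g₁ g₂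
  refine (av_norm_le _ _).trans ?_
  have h1 : ∀ h, ‖av (F' n) fun g => j (τ ((g * g₂) * (h * g₁)) a * τ (g * g₂) b * τ (h * g₁) c)‖ ≤
      ‖c‖ • ‖av (F' n) fun g => j (τ (g * g₂) (τ (h * g₁) a * b))‖ := by
    intro h
    have e1 : (av (F' n) fun g => j (τ ((g * g₂) * (h * g₁)) a * τ (g * g₂) b * τ (h * g₁) c)) =
        j (((#(F' n) : ℂ)⁻¹ • ∑ g ∈ F' n, τ (g * g₂) (τ (h * g₁) a * b)) * τ (h * g₁) c) := by
      simp only [av, smul_mul_assoc, Finset.sum_mul, map_smul, map_sum, map_mul, S.tmul]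
      rw [← Complex.coe_smul]
      push_cast
      rfl
    have e2 : (av (F' n) fun g => j (τ (g * g₂) (τ (h * g₁) a * b))) =
        j ((#(F' n) : ℂ)⁻¹ • ∑ g ∈ F' n, τ (g * g₂) (τ (h * g₁) a * b)) := by
      simp only [av, map_smul, map_sum]
      rw [← Complex.coe_smul]
      push_cast
      rfl
    rw [e1, e2, smul_eq_mul]
    refine (S.norm_mul_le_right _ _).trans ?_
    rw [tau_norm]
    exact (mul_comm _ _).le
  refine (av_mono _ h1).trans ?_
  rw [av_smul, smul_eq_mul]
  calc _ ≤ ‖c‖ * (ε / (‖c‖ + 1)) := by gcongr; exact hn g₁ g₂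
    _ ≤ (‖c‖ + 1) * (ε / (‖c‖ + 1)) := by gcongr; linarith
    _ = ε := by field_simp

/-- case c -/
lemma final_c (S : Sys ω τ j U) (hE : Erg ω τ) {F F' : ℕ → Finset G} (hF : IsFol F) (hF' : IsFol F')
    (a b c : A) (hfl : j (star c) ∈ flightVectors U)
    (hUAA : ∀ ε > (0 : ℝ), ∀ᶠ n in atTop, ∀ h : G,
      av (F n) (fun g => ‖b * τ (g * h) c - τ (g * h) c * b‖) ≤ ε)
    {ε : ℝ} (hε : 0 < ε) : ∀ᶠ n in atTop, ∀ g₁ g₂ : G,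
      ‖av (F n) (fun h => av (F' n) fun g =>
        j (τ ((g * g₂) * (h * g₁)) a * τ (g * g₂) b * τ (h * g₁) c))‖ ≤ ε := by
  filter_upwards [S.final_ab hE hF' hF a c b (Or.inr (Or.inr hfl)) (half_pos hε),
    hUAA ((ε / 2) / (‖a‖ + 1)) (by positivity)] with n hn1 hn2 g₁ g₂
  have h1 := hn1 g₂ g₁
  rw [av_comm] at h1
  set X : G → G → H := fun h g => j (τ ((g * g₂) * (h * g₁)) a * τ (g * g₂) b * τ (h * g₁) c) with hX
  set Y : G → G → H := fun h g => j (τ ((h * g₁) * (g * g₂)) a * τ (h * g₁) c * τ (g * g₂) b) with hY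
  have hdiff : ∀ h g, ‖X h g - Y h g‖ ≤ ‖a‖ • ‖b * τ (h * (g₁ * (g * g₂)⁻¹)) c - τ (h * (g₁ * (g * g₂)⁻¹)) c * b‖ := by
    intro h g
    have e1 : X h g - Y h g = j (τ ((g * g₂) * (h * g₁)) a * τ (g * g₂)
        (b * τ (h * (g₁ * (g * g₂)⁻¹)) c - τ (h * (g₁ * (g * g₂)⁻¹)) c * b)) := by
      have e2 : (g * g₂) * (h * (g₁ * (g * g₂)⁻¹)) = h * g₁ := by
        rw [mul_comm (g * g₂)]; group
      rw [hX, hY, ← map_sub]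
      simp only [map_sub, map_mul, S.tmul, e2, mul_comm (h * g₁) (g * g₂)]
      congr 1
      simp only [mul_sub, mul_assoc]
      rw [map_sub]
    rw [e1]
    refine (S.norm_le _).trans ((norm_mul_le _ _).trans ?_)
    rw [tau_norm, tau_norm, smul_eq_mul]
  have hd : ‖av (F n) (fun h => av (F' n) (X h)) - av (F n) (fun h => av (F' n) (Y h))‖ ≤ ε / 2 := by
    rw [← av_sub]
    simp only [← av_sub]
    rw [av_comm]
    refine (av_norm_le _ _).trans ?_
    refine (av_mono _ (g := fun _ => ε / 2) fun g => ?_).trans (av_const_le _ (half_pos hε).le)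
    refine (av_norm_le _ _).trans ((av_mono _ fun h => hdiff h g).trans ?_)
    rw [av_smul, smul_eq_mul]
    calc _ ≤ ‖a‖ * ((ε / 2) / (‖a‖ + 1)) := by gcongr; exact hn2 _
      _ ≤ (‖a‖ + 1) * ((ε / 2) / (‖a‖ + 1)) := by gcongr; linarith
      _ = ε / 2 := by field_simp
  have := norm_sub_norm_le (av (F n) (fun h => av (F' n) (X h))) (av (F n) (fun h => av (F' n) (Y h)))
  linarith

end Sys
end alg



section bridge
variable {G : Type*} [CommGroup G] [Countable G] [TopologicalSpace G] [IsTopologicalGroup G]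
    [MeasurableSpace G] [BorelSpace G]

open Classical in
/-- the finset of a finite set, empty otherwise -/
noncomputable def fs (s : Set G) : Finset G := if h : s.Finite then h.toFinset else ∅

lemma coe_fs {s : Set G} (h : s.Finite) : (fs s : Set G) = s := by
  unfold fs
  rw [dif_pos h, Set.Finite.coe_toFinset]

lemma setIntegral_count {X : Type*} [NormedAddCommGroup X] [NormedSpace ℝ X] [CompleteSpace X] {s : Set G}
    (hs : MeasurableSet s) (hf : s.Finite) {f : G → X} (hm : StronglyMeasurable f) :
    ∫ x in s, f x ∂Measure.count = ∑ x ∈ fs s, f x := by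
  have h0 : (@Measure.count G ⊤).trim (le_top : ‹MeasurableSpace G› ≤ ⊤) = Measure.count := by
    ext t ht
    rw [trim_measurableSet_eq _ ht, Measure.count_apply ht, @Measure.count_apply G ⊤ t trivial]
  rw [← h0, restrict_trim _ _ hs, ← integral_trim _ hm]
  have key : @integral G X _ _ ⊤ ((@Measure.count G ⊤).restrict (fs s : Set G)) f = ∑ x ∈ fs s, f x := by
    let _ : MeasurableSpace G := ⊤
    have : MeasurableSingletonClass G := ⟨fun _ => trivial⟩
    have hi : IntegrableOn f (fs s : Set G) (@Measure.count G ⊤) := by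
      have e : (fs s : Set G) = ⋃ x ∈ fs s, {x} := by ext; simp
      rw [e, integrableOn_finset_iUnion]
      intro x _
      rw [integrableOn_singleton_iff]
      right
      simp
    rw [setIntegral_finset _ hi]
    refine Finset.sum_congr rfl fun x _ => ?_
    simp [Measure.real]
  rw [coe_fs hf] at key
  exact key

lemma smeas_of_insep {X : Type*} [NormedAddCommGroup X] {f : G → X}
    (h : ∀ x y, Inseparable x y → f x = f y) : StronglyMeasurable f := by
  let _ : MeasurableSpace X := borel X
  have : BorelSpace X := ⟨rfl⟩
  refine stronglyMeasurable_iff_measurable_separable.2 ⟨?_, (Set.countable_range f).isSeparable⟩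
  intro t _
  have e : f ⁻¹' t = ⋃ x ∈ f ⁻¹' t, closure {x} := by
    ext y
    simp only [Set.mem_iUnion]
    constructor
    · exact fun hy => ⟨y, hy, subset_closure rfl⟩
    · rintro ⟨x, hx, hy⟩
      have := (specializes_iff_mem_closure.2 hy).inseparable
      rw [Set.mem_preimage, ← h _ _ this]
      exact hx
  rw [e]
  exact MeasurableSet.biUnion (Set.to_countable _) fun x _ => isClosed_closure.measurableSet

lemma eq_of_meas {X : Type*} [MeasurableSpace X] [MeasurableSingletonClass X] {f : G → X}
    (hf : Measurable f) {x y : G} (h : Inseparable x y) : f x = f y := by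
  have := (h.mem_measurableSet_iff (hf (measurableSet_singleton (f x)))).1 rfl
  exact this.symm

lemma meas_mul {s : Set G} (hs : MeasurableSet s) (g : G) : MeasurableSet (s * {g}) := by
  rw [Set.mul_singleton]
  exact (Homeomorph.mulRight g).measurableEmbedding.measurableSet_image.2 hs

lemma count_real {s : Set G} (hs : MeasurableSet s) : (Measure.count s).toReal = s.ncard := by
  rw [Measure.count_apply hs, Set.ncard]
  cases s.encard <;> simp

lemma count_fs {s : Set G} (hs : MeasurableSet s) (hf : s.Finite) : (Measure.count s).toReal = #(fs s) := by
  rw [count_real hs, ← Set.ncard_coe_finset, coe_fs hf]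

lemma int_mul {X : Type*} [NormedAddCommGroup X] [NormedSpace ℝ X] [CompleteSpace X] {s : Set G}
    (hs : MeasurableSet s) (hf : s.Finite) (g : G) {f : G → X} (hm : ∀ x y, Inseparable x y → f x = f y) :
    ∫ x in s * {g}, f x ∂Measure.count = ∑ x ∈ fs s, f (x * g) := by
  have hf' : (s * {g}).Finite := hf.mul (Set.finite_singleton g)
  rw [setIntegral_count (meas_mul hs g) hf' (smeas_of_insep hm)]
  symm
  refine Finset.sum_bij (fun x _ => x * g) ?_ ?_ ?_ ?_
  · intro x hx
    rw [← Finset.mem_coe, coe_fs hf] at hx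
    rw [← Finset.mem_coe, coe_fs hf']
    exact Set.mul_mem_mul hx rfl
  · intro x _ y _ h
    exact mul_right_cancel h
  · intro y hy
    rw [← Finset.mem_coe, coe_fs hf', Set.mul_singleton] at hy
    obtain ⟨x, hx, rfl⟩ := hy
    refine ⟨x, ?_, rfl⟩
    rw [← Finset.mem_coe, coe_fs hf]
    exact hx
  · intros; rfl

lemma fin_of {s : Set G} (hs : MeasurableSet s) (h : 0 < Measure.count s ∧ Measure.count s < ⊤) :
    s.Finite ∧ s.Nonempty := by
  rw [Measure.count_apply hs] at h
  constructor
  · by_contra hh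
    rw [Set.Infinite.encard_eq hh] at h
    simp at h
  · rw [Set.nonempty_iff_ne_empty]
    rintro rfl
    simp at h

lemma isFol_of {Λ : ℕ → Set G} (hm : ∀ n, MeasurableSet (Λ n))
    (hfin : ∀ᶠ n in atTop, 0 < Measure.count (Λ n) ∧ Measure.count (Λ n) < ⊤)
    (hfol : ∀ g : G, Tendsto
      (fun n => (Measure.count (symmDiff (Λ n) (Λ n * {g}))).toReal / (Measure.count (Λ n)).toReal)
      atTop (𝓝 0)) : IsFol fun n => fs (Λ n) := by
  constructor
  · filter_upwards [hfin] with n hn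
    obtain ⟨h1, h2⟩ := fin_of (hm n) hn
    rw [← Finset.coe_nonempty, coe_fs h1]
    exact h2
  · intro g
    refine (hfol g).congr' ?_
    filter_upwards [hfin] with n hn
    obtain ⟨h1, h2⟩ := fin_of (hm n) hn
    rw [count_fs (hm n) h1, count_real ((hm n).symmDiff (meas_mul (hm n) g)), coe_fs h1, Set.mul_singleton]

end bridge


section insep
variable {A G H : Type*} [NormedRing A] [StarRing A] [CStarRing A] [NormedAlgebra ℂ A]
    [CompleteSpace A] [StarModule ℂ A] [CommGroup G] [Countable G] [TopologicalSpace G]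
    [IsTopologicalGroup G] [MeasurableSpace G] [BorelSpace G]
    [NormedAddCommGroup H] [InnerProductSpace ℂ H] [CompleteSpace H]
    {ω : A →ₗ[ℂ] ℂ} {τ : G → A ≃⋆ₐ[ℂ] A} {j : A →ₗ[ℂ] H} {U : G → H →L[ℂ] H}

lemma insep_j (S : Sys ω τ j U) (hm : ∀ a b : A, Measurable fun g : G => ω (a * τ g b)) (b : A)
    {g g' : G} (h : Inseparable g g') : j (τ g b) = j (τ g' b) := by
  refine S.dense.eq_of_inner_right ℂ fun a => ?_
  rw [S.jin, S.jin]
  exact eq_of_meas (hm (star a) b) h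

lemma j_mul (S : Sys ω τ j U) {x x' y y' : A} (hx : j x = j x') (hy : j y = j y') :
    j (x * y) = j (x' * y') := by
  have e : x * y - x' * y' = (x - x') * y + x' * (y - y') := by noncomm_ring
  have h1 := S.norm_mul_le_right (x - x') y
  have h2 := S.norm_mul_le_left x' (y - y')
  rw [map_sub, hx, sub_self, norm_zero, zero_mul, norm_le_zero_iff] at h1
  rw [map_sub, hy, sub_self, norm_zero, mul_zero, norm_le_zero_iff] at h2
  rw [← sub_eq_zero, ← map_sub, e, map_add, h1, h2, add_zero]

lemma bridge_final (S : Sys ω τ j U) (hm : ∀ a b : A, Measurable fun g : G => ω (a * τ g b))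
    (a b c : A) {s t : Set G} (hs : MeasurableSet s) (ht : MeasurableSet t) (hsf : s.Finite)
    (htf : t.Finite) (g₁ g₂ : G) :
    ((Measure.count s).toReal * (Measure.count t).toReal)⁻¹ •
          ∫ h in s * {g₁}, ∫ g in t * {g₂},
            j (τ (g * h) a * τ g b * τ h c) ∂Measure.count ∂Measure.count =
    av (fs s) (fun h => av (fs t) fun g =>
      j (τ ((g * g₂) * (h * g₁)) a * τ (g * g₂) b * τ (h * g₁) c)) := by
  have hi : ∀ g g' h h' : G, Inseparable g g' → Inseparable h h' →
      j (τ (g * h) a * τ g b * τ h c) = j (τ (g' * h') a * τ g' b * τ h' c) :=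
    fun g g' h h' hg hh => j_mul S (j_mul S (insep_j S hm a (hg.mul hh)) (insep_j S hm b hg))
      (insep_j S hm c hh)
  have h1 : ∀ h, ∫ g in t * {g₂}, j (τ (g * h) a * τ g b * τ h c) ∂Measure.count =
      ∑ g ∈ fs t, j (τ ((g * g₂) * h) a * τ (g * g₂) b * τ h c) := fun h =>
    int_mul ht htf g₂ (f := fun g => j (τ (g * h) a * τ g b * τ h c))
      fun x y hxy => hi _ _ _ _ hxy .rfl
  simp only [h1]
  rw [int_mul hs hsf g₁
    (f := fun h => ∑ g ∈ fs t, j (τ ((g * g₂) * h) a * τ (g * g₂) b * τ h c)) fun x y hxy => Finset.sum_congr rfl fun g _ => hi _ _ _ _ .rfl hxy]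
  rw [count_fs hs hsf, count_fs ht htf]
  simp only [av]
  rw [mul_inv, mul_smul, ← Finset.smul_sum]

end insep

end NCErg

/-- **Corollary 5.4(2)** (counting measure case). -/
theorem cor_5_4_2
    -- a unital C*-algebra A
    {A : Type*} [NormedRing A] [StarRing A] [CStarRing A] [NormedAlgebra ℂ A]
    [CompleteSpace A] [StarModule ℂ A]
    -- a tracial state ω on A
    (ω : A →ₗ[ℂ] ℂ) (hω_pos : ∀ a : A, 0 ≤ ω (star a * a)) (hω_one : ω 1 = 1)
    (hω_tracial : ∀ a b : A, ω (a * b) = ω (b * a))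
    -- a countable second countable topological abelian group G with the counting measure
    -- on its Borel σ-algebra
    {G : Type*} [CommGroup G] [Countable G] [TopologicalSpace G] [IsTopologicalGroup G]
    [SecondCountableTopology G] [MeasurableSpace G] [BorelSpace G]
    -- the action τ, making (A, ω, τ, G) a C*-dynamical system
    (τ : G → A ≃⋆ₐ[ℂ] A)
    (hτ_one : ∀ a : A, τ 1 a = a)
    (hτ_mul : ∀ g h a, τ g (τ h a) = τ (g * h) a)
    (hω_inv : ∀ g a, ω (τ g a) = ω a)
    (hτ_meas : ∀ a b : A, Measurable fun g : G => ω (a * τ g b))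
    -- the system is ergodic (w.r.t. some, equivalently every, Følner sequence in G)
    (hErg : ∃ Λ : ℕ → Set G, (∀ n, MeasurableSet (Λ n)) ∧
      (∀ᶠ n in atTop, 0 < Measure.count (Λ n) ∧ Measure.count (Λ n) < ⊤) ∧
      (∀ g : G, Tendsto
        (fun n => (Measure.count (symmDiff (Λ n) (Λ n * {g}))).toReal / (Measure.count (Λ n)).toReal)
        atTop (𝓝 0)) ∧
      ∀ a b : A, Tendsto
        (fun n => (Measure.count (Λ n)).toReal⁻¹ • ∫ g in Λ n, ω (a * τ g b) ∂Measure.count)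
        atTop (𝓝 (ω a * ω b)))
    -- (g,h,j,k) ↦ ω(τ_h(a₁) τ_g(a₂) τ_{gh}(a₃) τ_{jk}(a₄) τ_j(a₅) τ_k(a₆)) is
    -- Σ² × Σ²-measurable
    (hmeas6 : ∀ a₁ a₂ a₃ a₄ a₅ a₆ : A, Measurable fun q : (G × G) × (G × G) =>
      ω (τ q.1.2 a₁ * τ q.1.1 a₂ * τ (q.1.1 * q.1.2) a₃ *
        τ (q.2.1 * q.2.2) a₄ * τ q.2.1 a₅ * τ q.2.2 a₆))
    -- a uniform Følner sequence (Λ1 n) in G ...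
    (Λ1 : ℕ → Set G)
    (hΛ1meas : ∀ n, MeasurableSet (Λ1 n))
    (hΛ1fin : ∀ᶠ n in atTop, 0 < Measure.count (Λ1 n) ∧ Measure.count (Λ1 n) < ⊤)
    (hΛ1folner : ∀ g : G, Tendsto
      (fun n => (Measure.count (symmDiff (Λ1 n) (Λ1 n * {g}))).toReal / (Measure.count (Λ1 n)).toReal)
      atTop (𝓝 0))
    (hΛ1unif : ∀ᶠ m in atTop, ∀ ε > (0 : ℝ), ∀ᶠ n in atTop, ∀ g ∈ Λ1 m,
      (Measure.count (symmDiff (Λ1 n) (Λ1 n * {g}))).toReal ≤ ε * (Measure.count (Λ1 n)).toReal)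
    -- ... satisfying the Tempel'man condition ...
    (hΛ1temp : ∃ c : ℝ, 0 < c ∧ ∀ᶠ n in atTop, MeasurableSet ((Λ1 n)⁻¹ * Λ1 n) ∧
      Measure.count ((Λ1 n)⁻¹ * Λ1 n) ≤ ENNReal.ofReal c * Measure.count (Λ1 n))
    -- ... and such that (Λ1 n⁻¹ Λ1 n) is also Følner in G
    (hΛ1invfin : ∀ᶠ n in atTop, 0 < Measure.count ((Λ1 n)⁻¹ * Λ1 n) ∧ Measure.count ((Λ1 n)⁻¹ * Λ1 n) < ⊤)
    (hΛ1invfolner : ∀ g : G, Tendsto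
      (fun n => (Measure.count (symmDiff ((Λ1 n)⁻¹ * Λ1 n) (((Λ1 n)⁻¹ * Λ1 n) * {g}))).toReal /
        (Measure.count ((Λ1 n)⁻¹ * Λ1 n)).toReal)
      atTop (𝓝 0))
    -- a uniform Følner sequence (Λ2 n) in G ...
    (Λ2 : ℕ → Set G)
    (hΛ2meas : ∀ n, MeasurableSet (Λ2 n))
    (hΛ2fin : ∀ᶠ n in atTop, 0 < Measure.count (Λ2 n) ∧ Measure.count (Λ2 n) < ⊤)
    (hΛ2folner : ∀ g : G, Tendsto
      (fun n => (Measure.count (symmDiff (Λ2 n) (Λ2 n * {g}))).toReal / (Measure.count (Λ2 n)).toReal)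
      atTop (𝓝 0))
    (hΛ2unif : ∀ᶠ m in atTop, ∀ ε > (0 : ℝ), ∀ᶠ n in atTop, ∀ g ∈ Λ2 m,
      (Measure.count (symmDiff (Λ2 n) (Λ2 n * {g}))).toReal ≤ ε * (Measure.count (Λ2 n)).toReal)
    -- ... satisfying the Tempel'man condition ...
    (hΛ2temp : ∃ c : ℝ, 0 < c ∧ ∀ᶠ n in atTop, MeasurableSet ((Λ2 n)⁻¹ * Λ2 n) ∧
      Measure.count ((Λ2 n)⁻¹ * Λ2 n) ≤ ENNReal.ofReal c * Measure.count (Λ2 n))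
    -- ... and such that (Λ2 n⁻¹ Λ2 n) is also Følner in G
    (hΛ2invfin : ∀ᶠ n in atTop, 0 < Measure.count ((Λ2 n)⁻¹ * Λ2 n) ∧ Measure.count ((Λ2 n)⁻¹ * Λ2 n) < ⊤)
    (hΛ2invfolner : ∀ g : G, Tendsto
      (fun n => (Measure.count (symmDiff ((Λ2 n)⁻¹ * Λ2 n) (((Λ2 n)⁻¹ * Λ2 n) * {g}))).toReal /
        (Measure.count ((Λ2 n)⁻¹ * Λ2 n)).toReal)
      atTop (𝓝 0))
    -- a GNS representation (H, j) of (A, ω)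
    {H : Type*} [NormedAddCommGroup H] [InnerProductSpace ℂ H] [CompleteSpace H]
    (j : A →ₗ[ℂ] H) (hj_dense : DenseRange j)
    (hj_inner : ∀ a b : A, (inner ℂ (j a) (j b) : ℂ) = ω (star a * b))
    (U : G → H →L[ℂ] H) (hU : ∀ g a, U g (j a) = j (τ g a)) (hU_contr : ∀ g, ‖U g‖ ≤ 1)
    -- a, b, c ∈ A with at least one of ι(a), ι(b), ι(c*) a flight vector
    (a b c : A)
    (hflight : j a ∈ flightVectors U ∨ j b ∈ flightVectors U ∨ j (star c) ∈ flightVectors U)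
    -- the system is uniformly asymptotically abelian with respect to (Λ1 n) (ε-form)
    (hcomm_meas : ∀ a b : A, Measurable fun g : G => ‖a * τ g b - τ g b * a‖)
    (hUAA : ∀ a b : A, ∀ ε > (0 : ℝ), ∀ᶠ n in atTop, ∀ h : G,
      (Measure.count (Λ1 n)).toReal⁻¹ * ∫ g in Λ1 n * {h}, ‖a * τ g b - τ g b * a‖ ∂Measure.count ≤ ε)
 :
    -- conclusion (in ε-form)
    ∀ ε > (0 : ℝ), ∀ᶠ n in atTop, ∀ g₁ g₂ : G,
      ‖((Measure.count (Λ1 n)).toReal * (Measure.count (Λ2 n)).toReal)⁻¹ •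
          ∫ h in Λ1 n * {g₁}, ∫ g in Λ2 n * {g₂},
            j (τ (g * h) a * τ g b * τ h c) ∂Measure.count ∂Measure.count‖ ≤ ε := by
  have S : NCErg.Sys ω τ j U :=
    ⟨hω_pos, hω_one, hω_tracial, hτ_one, hτ_mul, hω_inv, hj_dense, hj_inner, hU⟩
  have hF1 := NCErg.isFol_of hΛ1meas hΛ1fin hΛ1folner
  have hF2 := NCErg.isFol_of hΛ2meas hΛ2fin hΛ2folner
  have hE : NCErg.Sys.Erg ω τ := by
    obtain ⟨Λ, hm, hfin, hfol, hlim⟩ := hErg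
    refine ⟨_, NCErg.isFol_of hm hfin hfol, fun a b => (hlim a b).congr' ?_⟩
    filter_upwards [hfin] with n hn
    obtain ⟨h1, h2⟩ := NCErg.fin_of (hm n) hn
    rw [NCErg.count_fs (hm n) h1, NCErg.setIntegral_count (hm n) h1
      (hτ_meas a b).stronglyMeasurable]
    rfl
  intro ε hε
  have key : ∀ᶠ n in atTop, ∀ g₁ g₂ : G,
      ‖NCErg.av (NCErg.fs (Λ1 n)) (fun h => NCErg.av (NCErg.fs (Λ2 n)) fun g =>
        j (τ ((g * g₂) * (h * g₁)) a * τ (g * g₂) b * τ (h * g₁) c))‖ ≤ ε := by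
    rcases hflight with h | h | h
    · exact S.final_ab hE hF1 hF2 a b c (Or.inl h) hε
    · exact S.final_ab hE hF1 hF2 a b c (Or.inr (Or.inl h)) hε
    · refine S.final_c hE hF1 hF2 a b c h ?_ hε
      intro ε hε
      filter_upwards [hUAA b c ε hε, hΛ1fin] with n hn hfin h
      obtain ⟨h1, h2⟩ := NCErg.fin_of (hΛ1meas n) hfin
      have := hn h
      rw [NCErg.int_mul (hΛ1meas n) h1 h
        (fun x y hxy => NCErg.eq_of_meas (hcomm_meas b c) hxy), NCErg.count_fs (hΛ1meas n) h1] at this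
      exact this
  filter_upwards [key, hΛ1fin, hΛ2fin] with n hn hfin1 hfin2 g₁ g₂
  rw [NCErg.bridge_final S hτ_meas a b c (hΛ1meas n) (hΛ2meas n)
    (NCErg.fin_of (hΛ1meas n) hfin1).1 (NCErg.fin_of (hΛ2meas n) hfin2).1]
  exact hn g₁ g₂
end

section
/- Let (A,ω,τ,G) be a weakly mixing C*-dynamical system with ω tracial, where G is a countable second countable topological group, Σ its Borel σ-algebra, μ the counting measure, and (g,h,j,k) ↦ ω(τ_h(a₁) τ_g(a₂) τ_{gh}(a₃) τ_{jk}(a₄) τ_j(a₅) τ_k(a₆)) is Σ² × Σ²-measurable for all a₁,...,a₆ ∈ A. Assume there exist uniform Følner sequences (Λ_{1,n}) and (Λ_{2,n}) in G satisfying the Tempel'man condition and such that (Λ_{1,n}⁻¹Λ_{1,n}) and (Λ_{2,n}⁻¹Λ_{2,n}) are also Følner in G, and that (A,ω,τ,G) is uniformly asymptotically abelian with respect to (Λ_{1,n}). Then, in any GNS representation, for all a, b, c ∈ A: lim_{n→∞} sup_{g₁,g₂ ∈ G} ‖ (1/(μ(Λ_{1,n})μ(Λ_{2,n}))) Σ_{h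 ∈ Λ_{1,n}g₁} Σ_{g ∈ Λ_{2,n}g₂} ι(τ_{gh}(a) τ_g(b) τ_h(c)) − ω(a)ω(b)ω(c) Ω ‖ = 0. -/
open MeasureTheory Filter Topology
open scoped Pointwise ComplexOrder

namespace P552

/-- average over a finite set -/
noncomputable def av {G E : Type*} [AddCommGroup E] [Module ℝ E] (F : Finset G) (f : G → E) : E :=
  (F.card : ℝ)⁻¹ • ∑ x ∈ F, f x

section avg
variable {G E E' : Type*} [NormedAddCommGroup E] [NormedSpace ℝ E]
  [NormedAddCommGroup E'] [NormedSpace ℝ E']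

lemma av_add (F : Finset G) (f g : G → E) : av F (fun x => f x + g x) = av F f + av F g := by
  simp [av, Finset.sum_add_distrib]

lemma av_sub (F : Finset G) (f g : G → E) : av F (fun x => f x - g x) = av F f - av F g := by
  simp [av, Finset.sum_sub_distrib, smul_sub]

lemma av_sum {κ : Type*} (s : Finset κ) (F : Finset G) (f : κ → G → E) :
    av F (fun x => ∑ k ∈ s, f k x) = ∑ k ∈ s, av F (f k) := by
  simp only [av, ← Finset.smul_sum]
  rw [Finset.sum_comm]

lemma av_map (L : E →L[ℝ] E') (F : Finset G) (f : G → E) :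
    av F (fun x => L (f x)) = L (av F f) := by
  simp [av]

lemma av_smul (c : ℝ) (F : Finset G) (f : G → E) :
    av F (fun x => c • f x) = c • av F f := by
  simp only [av, ← Finset.smul_sum]
  rw [smul_comm]

lemma av_const {F : Finset G} (hF : F.Nonempty) (e : E) : av F (fun _ => e) = e := by
  have : (F.card : ℝ) ≠ 0 := by exact_mod_cast hF.card_pos.ne'
  simp only [av, Finset.sum_const]
  rw [← Nat.cast_smul_eq_nsmul ℝ, smul_smul, inv_mul_cancel₀ this, one_smul]

lemma norm_av_le_av (F : Finset G) (f : G → E) : ‖av F f‖ ≤ av F (fun x => ‖f x‖) := by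
  simp only [av, norm_smul, smul_eq_mul, norm_inv, Real.norm_natCast]
  gcongr
  exact norm_sum_le _ _

lemma av_mono (F : Finset G) {f g : G → ℝ} (h : ∀ x, f x ≤ g x) : av F f ≤ av F g := by
  simp only [av, smul_eq_mul]
  gcongr
  exact h _

lemma av_le (F : Finset G) {f : G → ℝ} {M : ℝ} (hM : 0 ≤ M) (h : ∀ x, f x ≤ M) : av F f ≤ M := by
  rcases F.eq_empty_or_nonempty with rfl | hF
  · simpa [av] using hM
  · exact (av_mono F h).trans (av_const hF M).le

lemma av_nonneg (F : Finset G) {f : G → ℝ} (h : ∀ x, 0 ≤ f x) : 0 ≤ av F f := by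
  simp only [av, smul_eq_mul]
  exact mul_nonneg (by positivity) (Finset.sum_nonneg fun x _ => h x)

lemma norm_av_le (F : Finset G) {f : G → E} {M : ℝ} (hM : 0 ≤ M) (h : ∀ x, ‖f x‖ ≤ M) :
    ‖av F f‖ ≤ M := (norm_av_le_av F f).trans (av_le F hM h)

lemma sq_av_le (F : Finset G) (f : G → ℝ) : (av F f) ^ 2 ≤ av F (fun x => f x ^ 2) := by
  rcases F.eq_empty_or_nonempty with rfl | hF
  · simp [av]
  have h0 : (0 : ℝ) < F.card := by exact_mod_cast hF.card_pos
  simp only [av, smul_eq_mul, mul_pow]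
  have := sq_sum_le_card_mul_sum_sq (s := F) (f := f)
  calc ((F.card : ℝ)⁻¹) ^ 2 * (∑ x ∈ F, f x) ^ 2
      ≤ ((F.card : ℝ)⁻¹) ^ 2 * (F.card * ∑ x ∈ F, f x ^ 2) := by gcongr
    _ = (F.card : ℝ)⁻¹ * ∑ x ∈ F, f x ^ 2 := by field_simp

lemma tend0 {ι : Type*} {l : Filter ι} {f : ι → E} (h : ∀ ε > (0 : ℝ), ∀ᶠ i in l, ‖f i‖ ≤ ε) :
    Tendsto f l (𝓝 0) := by
  rw [Metric.tendsto_nhds]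
  intro ε hε
  filter_upwards [h (ε / 2) (by positivity)] with i hi
  rw [dist_zero_right]
  linarith

end avg

/-- Følner along a filter -/
structure Fol {ι G : Type*} [CommGroup G] (l : Filter ι) (F : ι → Finset G) : Prop where
  ne : ∀ᶠ i in l, (F i).Nonempty
  sh : ∀ s : G, Tendsto
    (fun i => (Set.ncard (symmDiff (F i : Set G) ((F i : Set G) * {s})) : ℝ) / (F i).card) l (𝓝 0)

lemma shift_sum {G E : Type*} [CommGroup G] [NormedAddCommGroup E] (F : Finset G) (s : G)
    (f : G → E) (M : ℝ) (hM : ∀ x, ‖f x‖ ≤ M) :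
    ‖∑ x ∈ F, f x - ∑ x ∈ F, f (x * s)‖ ≤
      Set.ncard (symmDiff (F : Set G) ((F : Set G) * {s})) * M := by
  classical
  have h1 : ∑ x ∈ F, f (x * s) = ∑ y ∈ F.image (· * s), f y := by
    rw [Finset.sum_image]
    intro x _ y _ h
    exact mul_right_cancel h
  have h2 : symmDiff (F : Set G) ((F : Set G) * {s}) =
      ((F \ F.image (· * s) ∪ F.image (· * s) \ F : Finset G) : Set G) := by
    ext x
    simp [Set.mem_symmDiff, Set.mem_mul]
  rw [h1, h2, Set.ncard_coe_finset, Finset.card_union_of_disjoint disjoint_sdiff_sdiff,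
    ← Finset.sum_sdiff_sub_sum_sdiff]
  push_cast
  rw [add_mul]
  refine (norm_sub_le _ _).trans (add_le_add ?_ ?_)
  · simpa using norm_sum_le_of_le (F \ F.image (· * s)) (fun x _ => hM x)
  · simpa using norm_sum_le_of_le (F.image (· * s) \ F) (fun x _ => hM x)

lemma vdc_shift {ι G : Type*} [CommGroup G] {l : Filter ι} {F : ι → Finset G} (hF : Fol l F)
    (E : Type*) [NormedAddCommGroup E] [NormedSpace ℝ E]
    {N : ℕ} (hN : 0 < N) (s : Fin N → G) :
    ∃ r : ι → ℝ, Tendsto r l (𝓝 0) ∧ ∀ i (f : G → E) (M : ℝ), (∀ x, ‖f x‖ ≤ M) →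
      ‖av (F i) f - av (F i) (fun x => (N : ℝ)⁻¹ • ∑ k, f (x * s k))‖ ≤ r i * M := by
  refine ⟨fun i => (N : ℝ)⁻¹ * ∑ k, (Set.ncard (symmDiff (F i : Set G) ((F i : Set G) * {s k})) : ℝ)
    / (F i).card, ?_, ?_⟩
  · have := (tendsto_finsetSum (Finset.univ) (fun k _ => hF.sh (s k))).const_mul ((N : ℝ)⁻¹)
    simpa using this
  · intro i f M hM
    have hN' : (N : ℝ) ≠ 0 := by exact_mod_cast hN.ne'
    have h1 : av (F i) f - av (F i) (fun x => (N : ℝ)⁻¹ • ∑ k, f (x * s k)) =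
        (N : ℝ)⁻¹ • ∑ k, (av (F i) f - av (F i) (fun x => f (x * s k))) := by
      rw [av_smul, av_sum, Finset.sum_sub_distrib, smul_sub]
      congr 1
      simp only [Finset.sum_const, Finset.card_univ, Fintype.card_fin]
      rw [← Nat.cast_smul_eq_nsmul ℝ, smul_smul, inv_mul_cancel₀ hN', one_smul]
    rw [h1, norm_smul, norm_inv, Real.norm_natCast, mul_assoc, Finset.sum_mul]
    gcongr
    refine norm_sum_le_of_le _ fun k _ => ?_
    simp only [av]
    rw [← smul_sub, norm_smul, norm_inv, Real.norm_natCast, div_mul_eq_mul_div, inv_mul_eq_div]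
    gcongr
    exact shift_sum _ _ _ _ hM

lemma sqnorm {H : Type*} [NormedAddCommGroup H] [InnerProductSpace ℂ H] {N : ℕ} (v : Fin N → H) :
    ‖(N : ℝ)⁻¹ • ∑ k, v k‖ ^ 2 = ((N : ℝ)⁻¹) ^ 2 * ∑ k, ∑ m, (inner ℂ (v k) (v m) : ℂ).re := by
  rw [norm_smul, norm_inv, Real.norm_natCast, mul_pow]
  congr 1
  have := inner_self_eq_norm_sq (𝕜 := ℂ) (∑ k, v k)
  rw [← this, sum_inner]
  simp [inner_sum]

lemma offdiag {N : ℕ} (hN : 0 < N) (c : Fin N → Fin N → ℝ) {K δ : ℝ} (hK : 0 ≤ K) (hδ : 0 ≤ δ)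
    (h1 : ∀ k, c k k ≤ K) (h2 : ∀ k m, k ≠ m → c k m ≤ δ) :
    ((N : ℝ)⁻¹) ^ 2 * ∑ k, ∑ m, c k m ≤ K / N + δ := by
  have hN' : (0 : ℝ) < N := by exact_mod_cast hN
  have : ∑ k, ∑ m, c k m ≤ ∑ k : Fin N, ∑ m : Fin N, ((if k = m then K else 0) + δ) := by
    refine Finset.sum_le_sum fun k _ => Finset.sum_le_sum fun m _ => ?_
    split_ifs with h
    · subst h; linarith [h1 k]
    · linarith [h2 k m h]
  have e : ∑ k : Fin N, ∑ m : Fin N, ((if k = m then K else 0) + δ) = N * K + N * (N * δ) := by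
    simp [Finset.sum_add_distrib]
  calc _ ≤ ((N : ℝ)⁻¹) ^ 2 * (N * K + N * (N * δ)) := by rw [← e]; gcongr
    _ = K / N + δ := by field_simp

lemma exN (K ε : ℝ) (hε : 0 < ε) : ∃ N : ℕ, 0 < N ∧ K / N ≤ ε := by
  obtain ⟨N, hN⟩ := exists_nat_gt (max (K / ε) 0)
  have h0 : (0 : ℝ) < N := (le_max_right _ _).trans_lt hN
  refine ⟨N, by exact_mod_cast h0, ?_⟩
  have := (le_max_left _ _).trans_lt hN
  rw [div_lt_iff₀ hε] at this
  rw [div_le_iff₀ h0]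
  linarith

end P552

namespace P552

structure Sys {A : Type*} [NormedRing A] [StarRing A] [CStarRing A] [NormedAlgebra ℂ A]
    [StarModule ℂ A] {G : Type*} [CommGroup G] {H : Type*} [NormedAddCommGroup H]
    [InnerProductSpace ℂ H] (ω : A →ₗ[ℂ] ℂ) (τ : G → A ≃⋆ₐ[ℂ] A) (j : A →ₗ[ℂ] H) : Prop where
  one : ω 1 = 1
  tr : ∀ a b : A, ω (a * b) = ω (b * a)
  mul : ∀ g h a, τ g (τ h a) = τ (g * h) a
  inv : ∀ g a, ω (τ g a) = ω a
  inn : ∀ a b : A, (inner ℂ (j a) (j b) : ℂ) = ω (star a * b)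
  left : ∀ x y, ‖j (x * y)‖ ≤ ‖x‖ * ‖j y‖
  iso : ∀ g a, ‖τ g a‖ ≤ ‖a‖
  mix : ∀ b, ω b = 0 → ∀ (N : ℕ) (δ : ℝ), 0 < δ → ∃ s : Fin N → G, ∀ k m, k ≠ m →
    ‖ω (star (τ (s k) b) * τ (s m) b)‖ ≤ δ

section core
variable {A : Type*} [NormedRing A] [StarRing A] [CStarRing A] [NormedAlgebra ℂ A]
    [StarModule ℂ A] {G : Type*} [CommGroup G] {H : Type*} [NormedAddCommGroup H]
    [InnerProductSpace ℂ H] {ω : A →ₗ[ℂ] ℂ} {τ : G → A ≃⋆ₐ[ℂ] A} {j : A →ₗ[ℂ] H}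

lemma Sys.sq (h : Sys ω τ j) (a : A) : ‖j a‖ ^ 2 = (ω (star a * a)).re := by
  rw [← h.inn, ← inner_self_eq_norm_sq (𝕜 := ℂ)]; rfl

lemma Sys.j_one (h : Sys ω τ j) : ‖j 1‖ = 1 := by
  have := h.sq 1
  simp [h.one] at this
  rcases this with h | h
  · exact h
  · linarith [norm_nonneg (j 1)]

lemma Sys.j_le (h : Sys ω τ j) (a : A) : ‖j a‖ ≤ ‖a‖ := by
  simpa [h.j_one] using h.left a 1

lemma Sys.j_tau (h : Sys ω τ j) (g : G) (a : A) : ‖j (τ g a)‖ = ‖j a‖ := by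
  have : ‖j (τ g a)‖ ^ 2 = ‖j a‖ ^ 2 := by
    rw [h.sq, h.sq, ← map_star, ← map_mul, h.inv]
  exact (pow_left_inj₀ (norm_nonneg _) (norm_nonneg _) two_ne_zero).1 this

lemma Sys.j_star (h : Sys ω τ j) (a : A) : ‖j (star a)‖ = ‖j a‖ := by
  have : ‖j (star a)‖ ^ 2 = ‖j a‖ ^ 2 := by
    rw [h.sq, h.sq, star_star, h.tr]
  exact (pow_left_inj₀ (norm_nonneg _) (norm_nonneg _) two_ne_zero).1 this

lemma Sys.right (h : Sys ω τ j) (x y : A) : ‖j (x * y)‖ ≤ ‖j x‖ * ‖y‖ := by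
  rw [← h.j_star, star_mul, mul_comm]
  refine (h.left _ _).trans ?_
  rw [h.j_star, norm_star]

lemma Sys.om (h : Sys ω τ j) (a b : A) : ‖ω (a * b)‖ ≤ ‖a‖ * ‖j b‖ := by
  have := h.inn (star a) b
  rw [star_star] at this
  rw [← this]
  refine (norm_inner_le_norm _ _).trans ?_
  rw [h.j_star]
  gcongr
  exact h.j_le a

lemma Sys.om_le (h : Sys ω τ j) (a : A) : ‖ω a‖ ≤ ‖a‖ := by
  have := h.om a 1
  simpa [h.j_one] using this

variable {ι : Type*} {l : Filter ι} {F F1 F2 : ι → Finset G}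

lemma Sys.mean (h : Sys ω τ j) (hF : Fol l F) (b : A) (hb : ω b = 0) :
    Tendsto (fun i => av (F i) (fun x => j (τ x b))) l (𝓝 0) := by
  refine tend0 fun ε hε => ?_
  obtain ⟨N, hN, hK⟩ := exN (‖j b‖ ^ 2) ((ε / 2) ^ 2 / 2) (by positivity)
  obtain ⟨s, hs⟩ := h.mix b hb N ((ε / 2) ^ 2 / 2) (by positivity)
  obtain ⟨r, hr, hr'⟩ := vdc_shift hF H hN s
  have hr2 : ∀ᶠ i in l, r i * ‖j b‖ ≤ ε / 2 := by
    have := hr.mul_const ‖j b‖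
    rw [zero_mul] at this
    exact this.eventually_le_const (by positivity)
  filter_upwards [hr2] with i hi
  have h1 := hr' i (fun x => j (τ x b)) ‖j b‖ (fun x => (h.j_tau x b).le)
  have h2 : ‖av (F i) (fun x => (N : ℝ)⁻¹ • ∑ k, j (τ (x * s k) b))‖ ≤ ε / 2 := by
    refine norm_av_le _ (by positivity) fun x => ?_
    refine le_of_sq_le_sq ?_ (by positivity)
    rw [sqnorm]
    refine (offdiag hN _ (K := ‖j b‖ ^ 2) (δ := (ε / 2) ^ 2 / 2) (by positivity) (by positivity)
      ?_ ?_).trans (by linarith)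
    · intro k
      rw [h.inn, ← h.sq, h.j_tau]
    · intro k m hkm
      rw [h.inn]
      refine (Complex.re_le_norm _).trans ?_
      rw [← h.mul, ← h.mul, ← map_star, ← map_mul, h.inv]
      exact hs k m hkm
  calc _ = ‖(av (F i) (fun x => j (τ x b)) - av (F i) (fun x => (N : ℝ)⁻¹ • ∑ k, j (τ (x * s k) b)))
        + av (F i) (fun x => (N : ℝ)⁻¹ • ∑ k, j (τ (x * s k) b))‖ := by rw [sub_add_cancel]
    _ ≤ ε := (norm_add_le _ _).trans (by linarith)

/-- mean-zero part -/
lemma Sys.zero (h : Sys ω τ j) (b : A) : ω (b - ω b • 1) = 0 := by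
  simp [h.one]

lemma Sys.wmean (h : Sys ω τ j) (hF : Fol l F) (a b : A) :
    Tendsto (fun i => av (F i) (fun x => ω (a * τ x b))) l (𝓝 (ω a * ω b)) := by
  have h1 := h.mean hF (b - ω b • 1) (h.zero b)
  let L : H →L[ℝ] ℂ := (innerSL ℂ (j (star a))).restrictScalars ℝ
  have h2 := (L.continuous.tendsto 0).comp h1
  rw [map_zero] at h2
  have h3 := h2.add_const (ω a * ω b)
  rw [zero_add] at h3
  refine h3.congr' ?_
  filter_upwards [hF.ne] with i hi
  simp only [Function.comp]
  rw [← av_map, ← av_const hi (ω a * ω b), ← av_add]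
  congr 1
  ext x
  have : L (j (τ x (b - ω b • 1))) = ω (a * τ x (b - ω b • 1)) := by
    change inner ℂ (j (star a)) _ = _
    rw [h.inn, star_star]
  rw [this, map_sub, map_smul, map_one, mul_sub, map_sub]
  simp
  ring

lemma Sys.wmean_re (h : Sys ω τ j) (hF : Fol l F) (a b : A) :
    Tendsto (fun i => av (F i) (fun x => (ω (a * τ x b)).re)) l (𝓝 (ω a * ω b).re) := by
  refine ((Complex.continuous_re.tendsto _).comp (h.wmean hF a b)).congr fun i => ?_
  exact (av_map Complex.reCLM (F i) _).symm

lemma Sys.Q (h : Sys ω τ j) (hF1 : Fol l F1) (hF2 : Fol l F2) (B D : A) (hB : ω B = 0) :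
    Tendsto (fun i => av (F1 i) fun x => ‖av (F2 i) fun g => j (τ g (B * τ x D))‖) l (𝓝 0) := by
  refine tend0 fun ε hε => ?_
  set K := ‖B‖ * ‖D‖ with hKdef
  have hbd : ∀ x, ‖B * τ x D‖ ≤ K := fun x => (norm_mul_le _ _).trans (by
    rw [hKdef]; gcongr; exact h.iso _ _)
  have hbd' : ∀ g x, ‖j (τ g (B * τ x D))‖ ≤ K := fun g x => by
    rw [h.j_tau]; exact (h.j_le _).trans (hbd x)
  have hK0 : 0 ≤ K := by positivity
  set e := (ε / 2) ^ 2 with he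
  have he0 : 0 < e := by positivity
  obtain ⟨N, hN, hK⟩ := exN (K ^ 2) (e / 2) (by positivity)
  obtain ⟨s, hs⟩ := h.mix B hB N (e / 4 / (‖D‖ * ‖D‖ + 1)) (by positivity)
  obtain ⟨r, hr, hr'⟩ := vdc_shift hF2 H hN s
  have hr2 : ∀ᶠ i in l, r i * K ≤ ε / 2 := by
    have := hr.mul_const K
    rw [zero_mul] at this
    exact this.eventually_le_const (by positivity)
  let c : Fin N → Fin N → G → ℝ := fun k m x =>
    (ω (star (τ (s k) B) * τ (s m) B * τ x (τ (s m) D * star (τ (s k) D)))).re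
  have hcc : ∀ k m x, (inner ℂ (j (τ (s k) (B * τ x D))) (j (τ (s m) (B * τ x D))) : ℂ).re
      = c k m x := by
    intro k m x
    have e1 : ∀ u, τ u (τ x D) = τ x (τ u D) := fun u => by rw [h.mul, h.mul, mul_comm]
    rw [h.inn]
    simp only [c, map_mul, e1, star_mul, map_star]
    rw [mul_assoc, h.tr]
    simp only [mul_assoc]
  have hc : ∀ᶠ i in l, ∀ k m, k ≠ m → av (F1 i) (c k m) ≤ e / 2 := by
    rw [eventually_all]; intro k
    rw [eventually_all]; intro m
    by_cases hkm : k = m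
    · simp [hkm]
    have := h.wmean_re hF1 (star (τ (s k) B) * τ (s m) B) (τ (s m) D * star (τ (s k) D))
    have h5 : (ω (star (τ (s k) B) * τ (s m) B) * ω (τ (s m) D * star (τ (s k) D))).re < e / 2 := by
      refine (Complex.re_le_norm _).trans_lt ?_
      rw [norm_mul]
      have h6 : ‖ω (τ (s m) D * star (τ (s k) D))‖ ≤ ‖D‖ * ‖D‖ := by
        refine (h.om_le _).trans ((norm_mul_le _ _).trans ?_)
        rw [norm_star]
        gcongr <;> exact h.iso _ _
      calc _ ≤ (e / 4 / (‖D‖ * ‖D‖ + 1)) * (‖D‖ * ‖D‖) := by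
            gcongr
            exact hs k m hkm
        _ ≤ (e / 4 / (‖D‖ * ‖D‖ + 1)) * (‖D‖ * ‖D‖ + 1) := by gcongr; linarith
        _ = e / 4 := by field_simp
        _ < e / 2 := by linarith
    filter_upwards [this.eventually_lt_const h5] with i hi _ using hi.le
  filter_upwards [hr2, hc] with i hi hci
  rw [Real.norm_of_nonneg (av_nonneg _ fun _ => norm_nonneg _)]
  let q : G → ℝ := fun x => ‖(N : ℝ)⁻¹ • ∑ k, j (τ (s k) (B * τ x D))‖
  have h1 : ∀ x, ‖av (F2 i) fun g => j (τ g (B * τ x D))‖ ≤ ε / 2 + q x := by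
    intro x
    have h1 := hr' i (fun g => j (τ g (B * τ x D))) K (fun g => hbd' g x)
    have h2 : ‖av (F2 i) (fun g => (N : ℝ)⁻¹ • ∑ k, j (τ (g * s k) (B * τ x D)))‖ ≤ q x := by
      refine norm_av_le _ (norm_nonneg _) fun g => le_of_eq ?_
      simp only [q, norm_smul]
      congr 1
      have : ∑ k, j (τ (g * s k) (B * τ x D)) = j (τ g (∑ k, τ (s k) (B * τ x D))) := by
        rw [map_sum, map_sum]
        simp only [h.mul]
      rw [this, h.j_tau, map_sum]
    have := norm_sub_norm_le (av (F2 i) fun g => j (τ g (B * τ x D)))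
      (av (F2 i) (fun g => (N : ℝ)⁻¹ • ∑ k, j (τ (g * s k) (B * τ x D))))
    linarith
  have h2 : av (F1 i) (fun x => q x ^ 2) ≤ e := by
    have : (fun x => q x ^ 2) = fun x => ((N : ℝ)⁻¹ ^ 2) • ∑ k, ∑ m, c k m x := by
      ext x
      simp only [q, sqnorm, hcc, smul_eq_mul]
    rw [this, av_smul, av_sum]
    simp only [av_sum, smul_eq_mul]
    refine (offdiag hN _ (K := K ^ 2) (δ := e / 2) (by positivity) (by positivity)
      ?_ hci).trans (by linarith)
    intro k
    refine av_le _ (by positivity) fun x => ?_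
    rw [← hcc, h.inn, ← h.sq]
    gcongr
    exact hbd' _ _
  have h3 : av (F1 i) q ≤ ε / 2 :=
    le_of_sq_le_sq ((sq_av_le _ _).trans h2) (by positivity)
  calc _ ≤ av (F1 i) (fun x => ε / 2 + q x) := av_mono _ h1
    _ = av (F1 i) (fun _ => ε / 2) + av (F1 i) q := av_add _ _ _
    _ ≤ ε / 2 + ε / 2 := add_le_add (av_le _ (by positivity) fun _ => le_rfl) h3
    _ = ε := by ring

end core
end P552

namespace P552
section core2
variable {A : Type*} [NormedRing A] [StarRing A] [CStarRing A] [NormedAlgebra ℂ A]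
    [StarModule ℂ A] {G : Type*} [CommGroup G] {H : Type*} [NormedAddCommGroup H]
    [InnerProductSpace ℂ H] {ω : A →ₗ[ℂ] ℂ} {τ : G → A ≃⋆ₐ[ℂ] A} {j : A →ₗ[ℂ] H}
    {ι : Type*} {l : Filter ι} {F F1 F2 : ι → Finset G}

lemma Sys.S (h : Sys ω τ j) (hF1 : Fol l F1) (hF2 : Fol l F2) (B C D : A) (hB : ω B = 0) :
    Tendsto (fun i => av (F1 i) fun x => av (F2 i) fun g => ω (τ x C * τ g (B * τ x D)))
      l (𝓝 0) := by
  have hQ := (h.Q hF1 hF2 B D hB).const_mul ‖C‖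
  rw [mul_zero] at hQ
  refine squeeze_zero_norm (fun i => ?_) hQ
  refine (norm_av_le_av _ _).trans ?_
  rw [← smul_eq_mul, ← av_smul]
  refine av_mono _ fun x => ?_
  let L : H →L[ℝ] ℂ := (innerSL ℂ (j (star (τ x C)))).restrictScalars ℝ
  have e : ∀ Y, ω (τ x C * Y) = L (j Y) := fun Y => by
    change _ = inner ℂ (j (star (τ x C))) _
    rw [h.inn, star_star]
  simp only [e, av_map]
  change ‖inner ℂ (j (star (τ x C))) _‖ ≤ _
  refine (norm_inner_le_norm _ _).trans ?_
  rw [smul_eq_mul]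
  gcongr
  rw [h.j_star, h.j_tau]
  exact h.j_le C

lemma Sys.T1 (h : Sys ω τ j) (hF1 : Fol l F1) (hF2 : Fol l F2) (B C D : A) :
    Tendsto (fun i => av (F1 i) fun x => av (F2 i) fun g => ω (τ x C * τ g (B * τ x D)))
      l (𝓝 (ω C * ω B * ω D)) := by
  have h1 := h.S hF1 hF2 (B - ω B • 1) C D (h.zero B)
  have h2 := (h.wmean hF2 C D).const_mul (ω B)
  have h3 := h1.add h2
  have e : (0 : ℂ) + ω B * (ω C * ω D) = ω C * ω B * ω D := by ring
  rw [e] at h3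
  refine h3.congr' ?_
  filter_upwards [hF1.ne] with i hi
  rw [← av_const hi (ω B * av (F2 i) fun x => ω (C * τ x D)), ← av_add]
  congr 1
  ext x
  let L : ℂ →L[ℝ] ℂ := (ContinuousLinearMap.mul ℂ ℂ (ω B)).restrictScalars ℝ
  have : ω B * (av (F2 i) fun x => ω (C * τ x D)) = av (F2 i) fun g => ω B * ω (C * τ g D) :=
    (av_map L (F2 i) _).symm
  rw [this, ← av_add]
  congr 1
  ext g
  have : ω (C * τ g D) = ω (τ x C * τ g (τ x D)) := by
    rw [h.mul, mul_comm g x, ← h.mul, ← map_mul, h.inv]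
  rw [this]
  simp [sub_mul, mul_sub]

lemma Sys.T (h : Sys ω τ j) (hF1 : Fol l F1) (hF2 : Fol l F2)
    (hU : ∀ a b, Tendsto (fun i => av (F1 i) fun g => ‖a * τ g b - τ g b * a‖) l (𝓝 0))
    (b C D : A) :
    Tendsto (fun i => av (F1 i) fun x => av (F2 i) fun g => ω (τ x C * τ g (star b * τ x D * b)))
      l (𝓝 (ω C * ω (star b * b) * ω D)) := by
  have h1 := h.T1 hF1 hF2 (star b * b) C D
  have h2 : Tendsto (fun i => av (F1 i) fun x => av (F2 i) fun g =>
      ω (τ x C * τ g (star b * (b * τ x D - τ x D * b)))) l (𝓝 0) := by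
    have := (hU b D).const_mul (‖C‖ * ‖b‖)
    rw [mul_zero] at this
    refine squeeze_zero_norm (fun i => ?_) this
    refine (norm_av_le_av _ _).trans ?_
    rw [← smul_eq_mul, ← av_smul]
    refine av_mono _ fun x => norm_av_le _ (by positivity) fun g => ?_
    refine (h.om_le _).trans ((norm_mul_le _ _).trans ?_)
    rw [smul_eq_mul, mul_assoc]
    gcongr
    · exact h.iso _ _
    · refine (h.iso _ _).trans ((norm_mul_le _ _).trans ?_)
      rw [norm_star]
  have h3 := h1.sub h2
  rw [sub_zero] at h3
  refine h3.congr fun i => ?_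
  rw [← av_sub]
  congr 1; ext x
  rw [← av_sub]
  congr 1; ext g
  rw [← map_sub, ← mul_sub, ← map_sub]
  congr 4
  noncomm_ring

lemma Sys.P (h : Sys ω τ j) (hF1 : Fol l F1) (hF2 : Fol l F2)
    (hU : ∀ a b, Tendsto (fun i => av (F1 i) fun g => ‖a * τ g b - τ g b * a‖) l (𝓝 0))
    (a b c : A) (ha : ω a = 0) :
    Tendsto (fun i => av (F1 i) fun x => av (F2 i) fun g => j (τ (g * x) a * τ g b * τ x c))
      l (𝓝 0) := by
  refine tend0 fun ε hε => ?_
  set K := ‖a‖ * ‖b‖ * ‖c‖ with hKdef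
  let u : G → G → H := fun x g => j (τ (g * x) a * τ g b * τ x c)
  have hbd : ∀ x g, ‖u x g‖ ≤ K := fun x g => (h.j_le _).trans ((norm_mul_le _ _).trans (by
    rw [hKdef]; gcongr
    · exact (norm_mul_le _ _).trans (by gcongr <;> exact h.iso _ _)
    · exact h.iso _ _))
  have hK0 : 0 ≤ K := by positivity
  set e := (ε / 2) ^ 2 with he
  have he0 : 0 < e := by positivity
  set R := ‖c‖ * ‖c‖ * (‖b‖ * ‖b‖) with hR
  have hR0 : 0 ≤ R := by positivity
  obtain ⟨N, hN, hK⟩ := exN (K ^ 2) (e / 2) (by positivity)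
  obtain ⟨s, hs⟩ := h.mix a ha N (e / 4 / (R + 1)) (by positivity)
  obtain ⟨r, hr, hr'⟩ := vdc_shift hF1 H hN s
  have hr2 : ∀ᶠ i in l, r i * K ≤ ε / 2 := by
    have := hr.mul_const K
    rw [zero_mul] at this
    exact this.eventually_le_const (by positivity)
  let C : Fin N → Fin N → A := fun k m => τ (s m) c * star (τ (s k) c)
  let D : Fin N → Fin N → A := fun k m => star (τ (s k) a) * τ (s m) a
  let d : Fin N → Fin N → G → G → ℝ := fun k m x g =>
    (ω (τ x (C k m) * τ g (star b * τ x (D k m) * b))).re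
  have hcc : ∀ k m x g, (inner ℂ (u (x * s k) g) (u (x * s m) g) : ℂ).re = d k m x g := by
    intro k m x g
    simp only [u, h.inn, d, C, D, map_mul, star_mul, map_star, h.mul]
    have t : ∀ p q r w y z : A, ω (p * (q * r) * (w * y * z)) = ω (z * p * (q * (r * w) * y)) := by
      intro p q r w y z
      rw [← mul_assoc, h.tr]
      simp only [mul_assoc]
    rw [t]
  have hc : ∀ᶠ i in l, ∀ k m, k ≠ m → av (F1 i) (fun x => av (F2 i) (d k m x)) ≤ e / 2 := by
    rw [eventually_all]; intro k
    rw [eventually_all]; intro m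
    by_cases hkm : k = m
    · simp [hkm]
    have := (Complex.continuous_re.tendsto _).comp (h.T hF1 hF2 hU b (C k m) (D k m))
    have h5 : (ω (C k m) * ω (star b * b) * ω (D k m)).re < e / 2 := by
      refine (Complex.re_le_norm _).trans_lt ?_
      rw [norm_mul, norm_mul]
      have h6 : ‖ω (C k m)‖ ≤ ‖c‖ * ‖c‖ := by
        refine (h.om_le _).trans ((norm_mul_le _ _).trans ?_)
        rw [norm_star]
        gcongr <;> exact h.iso _ _
      have h7 : ‖ω (star b * b)‖ ≤ ‖b‖ * ‖b‖ := by
        refine (h.om_le _).trans ((norm_mul_le _ _).trans ?_)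
        rw [norm_star]
      calc _ ≤ R * (e / 4 / (R + 1)) := by
            rw [hR]
            gcongr
            exact hs k m hkm
        _ ≤ (R + 1) * (e / 4 / (R + 1)) := by gcongr; linarith
        _ = e / 4 := by field_simp
        _ < e / 2 := by linarith
    filter_upwards [this.eventually_lt_const h5] with i hi _
    refine le_trans (le_of_eq ?_) hi.le
    simp only [Function.comp]
    rw [← Complex.reCLM_apply, ← av_map]
    simp only [← av_map]
    rfl
  filter_upwards [hr2, hc] with i hi hci
  have h1 := hr' i (fun x => av (F2 i) (u x)) K (fun x => norm_av_le _ hK0 (hbd x))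
  let q : G → G → ℝ := fun x g => ‖(N : ℝ)⁻¹ • ∑ k, u (x * s k) g‖
  have h2 : av (F1 i) (fun x => av (F2 i) (fun g => q x g ^ 2)) ≤ e := by
    have : (fun x => av (F2 i) (fun g => q x g ^ 2)) =
        fun x => ((N : ℝ)⁻¹ ^ 2) • ∑ k, ∑ m, av (F2 i) (d k m x) := by
      ext x
      simp only [← av_sum, ← av_smul]
      congr 1
      ext g
      simp only [q, sqnorm, hcc, smul_eq_mul]
    rw [this, av_smul, av_sum]
    simp only [av_sum, smul_eq_mul]
    refine (offdiag hN _ (K := K ^ 2) (δ := e / 2) (by positivity) (by positivity)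
      ?_ hci).trans (by linarith)
    intro k
    refine av_le _ (by positivity) fun x => av_le _ (by positivity) fun g => ?_
    rw [← hcc]
    refine (Complex.re_le_norm _).trans ((norm_inner_le_norm _ _).trans ?_)
    rw [← pow_two]
    gcongr
    exact hbd _ _
  have h3 : av (F1 i) (fun x => av (F2 i) (q x)) ≤ ε / 2 := by
    refine le_of_sq_le_sq ((sq_av_le _ _).trans ?_) (by positivity)
    exact (av_mono _ fun x => sq_av_le _ _).trans h2
  have h4 : ‖av (F1 i) (fun x => (N : ℝ)⁻¹ • ∑ k, av (F2 i) (u (x * s k)))‖ ≤ ε / 2 := by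
    refine (norm_av_le_av _ _).trans ((av_mono _ fun x => ?_).trans h3)
    rw [← av_sum, ← av_smul]
    exact norm_av_le_av _ _
  have := norm_sub_norm_le (av (F1 i) fun x => av (F2 i) (u x))
    (av (F1 i) (fun x => (N : ℝ)⁻¹ • ∑ k, av (F2 i) (u (x * s k))))
  change ‖av (F1 i) fun x => av (F2 i) (u x)‖ ≤ ε
  linarith

lemma Sys.P1 (h : Sys ω τ j) (hF1 : Fol l F1) (hF2 : Fol l F2) (b c : A) :
    Tendsto (fun i => av (F1 i) fun x => av (F2 i) fun g => j (τ g b * τ x c))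
      l (𝓝 ((ω b * ω c) • j 1)) := by
  have h1 : Tendsto (fun i => av (F1 i) fun x => av (F2 i) fun g => j (τ g (b - ω b • 1) * τ x c))
      l (𝓝 0) := by
    have := (h.mean hF2 (b - ω b • 1) (h.zero b)).norm.mul_const ‖c‖
    rw [norm_zero, zero_mul] at this
    refine squeeze_zero_norm (fun i => ?_) this
    refine norm_av_le _ (by positivity) fun x => ?_
    have e : ∀ (f : G → A), av (F2 i) (fun g => j (f g)) =
        j (((((F2 i).card : ℝ)⁻¹ : ℝ) : ℂ) • ∑ g ∈ F2 i, f g) := by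
      intro f
      rw [map_smul, map_sum, Complex.coe_smul]; rfl
    rw [e, e, ← Finset.sum_mul, ← smul_mul_assoc]
    refine (h.right _ _).trans ?_
    gcongr
    exact h.iso _ _
  have h2 : Tendsto (fun i => av (F1 i) fun x => j (τ x (c - ω c • 1))) l (𝓝 0) :=
    h.mean hF1 _ (h.zero c)
  let L : H →L[ℝ] H := (ω b • ContinuousLinearMap.id ℂ H).restrictScalars ℝ
  have h3 := (h1.add ((L.continuous.tendsto 0).comp h2)).add_const ((ω b * ω c) • j 1)
  rw [map_zero, zero_add, zero_add] at h3
  refine h3.congr' ?_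
  filter_upwards [hF1.ne, hF2.ne] with i hi1 hi2
  simp only [Function.comp]
  rw [← av_map, ← av_add, ← av_const hi1 ((ω b * ω c) • j 1), ← av_add]
  congr 1; ext x
  rw [← av_const hi2 (L _), ← av_const hi2 ((ω b * ω c) • j 1), ← av_add, ← av_add]
  congr 1; ext g
  change _ + ω b • j (τ x (c - ω c • 1)) + _ = _
  simp [sub_mul, smul_sub, smul_smul]

lemma Sys.main (h : Sys ω τ j) (hF1 : Fol l F1) (hF2 : Fol l F2)
    (hU : ∀ a b, Tendsto (fun i => av (F1 i) fun g => ‖a * τ g b - τ g b * a‖) l (𝓝 0))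
    (a b c : A) :
    Tendsto (fun i => av (F1 i) fun x => av (F2 i) fun g => j (τ (g * x) a * τ g b * τ x c))
      l (𝓝 ((ω a * ω b * ω c) • j 1)) := by
  have h1 := h.P hF1 hF2 hU (a - ω a • 1) b c (h.zero a)
  let L : H →L[ℝ] H := (ω a • ContinuousLinearMap.id ℂ H).restrictScalars ℝ
  have h3 := h1.add ((L.continuous.tendsto _).comp (h.P1 hF1 hF2 b c))
  have e : (0 : H) + L ((ω b * ω c) • j 1) = (ω a * ω b * ω c) • j 1 := by
    change (0 : H) + ω a • ((ω b * ω c) • j 1) = _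
    rw [zero_add, smul_smul, mul_assoc]
  rw [e] at h3
  refine h3.congr fun i => ?_
  simp only [Function.comp, ← av_map, ← av_add]
  congr 1; ext x
  congr 1; ext g
  change _ + ω a • j (τ g b * τ x c) = _
  simp [sub_mul]

end core2
end P552

namespace P552

lemma int_eq {G E : Type*} [Countable G] [MeasurableSpace G] [NormedAddCommGroup E] [NormedSpace ℝ E]
    [CompleteSpace E]
    (S : Finset G) (hS : MeasurableSet (S : Set G)) (f : G → E)
    (hf : ∀ x, ∀ y ∈ measurableAtom x, f y = f x) :
    ∫ x in (S : Set G), f x ∂Measure.count = ∑ x ∈ S, f x := by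
  classical
  letI : MeasurableSpace E := borel E
  haveI : BorelSpace E := ⟨rfl⟩
  have hm : Measurable f := by
    intro U _
    have : f ⁻¹' U = ⋃ x ∈ f ⁻¹' U, measurableAtom x := by
      ext y
      simp only [Set.mem_preimage, Set.mem_iUnion, exists_prop]
      constructor
      · intro hy; exact ⟨y, hy, mem_measurableAtom_self y⟩
      · rintro ⟨x, hx, hy⟩; rw [hf x y hy]; exact hx
    rw [this]
    exact MeasurableSet.biUnion (Set.to_countable _) fun x _ => .measurableAtom_of_countable x
  have hsm : StronglyMeasurable f := by
    rw [stronglyMeasurable_iff_measurable_separable]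
    exact ⟨hm, (Set.countable_range f).isSeparable⟩
  have h1 : (Measure.count : Measure G).restrict (S : Set G) = ∑ x ∈ S, Measure.dirac x := by
    ext t ht
    rw [Measure.restrict_apply ht, Measure.count_apply (ht.inter hS)]
    simp only [Measure.coe_finsetSum, Finset.sum_apply, Measure.dirac_apply' _ ht]
    have : t ∩ (S : Set G) = ((S.filter (· ∈ t) : Finset G) : Set G) := by
      ext x; simp [and_comm]
    rw [this, Set.encard_coe_eq_coe_finsetCard]
    simp [Set.indicator_apply, Finset.sum_ite]
  rw [h1, integral_finsetSum_measure]
  · simp [integral_dirac' _ _ hsm]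
  · intro x _
    exact (integrable_dirac' hsm (by simp))

lemma meas_atom {G E : Type*} [MeasurableSpace G] [MeasurableSpace E]
    [MeasurableSingletonClass E] {f : G → E} (hf : Measurable f) :
    ∀ x, ∀ y ∈ measurableAtom x, f y = f x := by
  intro x y hy
  have := mem_of_mem_measurableAtom hy (hf (measurableSet_singleton (f x))) (by simp)
  simpa using this

lemma left_bound {A : Type*} [NormedRing A] [StarRing A] [CStarRing A] [NormedAlgebra ℂ A]
    [CompleteSpace A] [StarModule ℂ A] {H : Type*} [NormedAddCommGroup H] [InnerProductSpace ℂ H]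
    (ω : A →ₗ[ℂ] ℂ) (hω_pos : ∀ a : A, 0 ≤ ω (star a * a)) (j : A →ₗ[ℂ] H)
    (hj_inner : ∀ a b : A, (inner ℂ (j a) (j b) : ℂ) = ω (star a * b)) (x y : A) :
    ‖j (x * y)‖ ≤ ‖x‖ * ‖j y‖ := by
  letI : CStarAlgebra A := {}
  letI := CStarAlgebra.spectralOrder A
  letI := CStarAlgebra.spectralOrderedRing A
  have h1 : star x * x ≤ algebraMap ℝ A (‖x‖ ^ 2) := CStarAlgebra.star_mul_le_algebraMap_norm_sq
  obtain ⟨z, hz⟩ := CStarAlgebra.nonneg_iff_eq_star_mul_self.1 (sub_nonneg.2 h1)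
  have hsq : ∀ a, ‖j a‖ ^ 2 = (ω (star a * a)).re := fun a => by
    rw [← hj_inner, ← inner_self_eq_norm_sq (𝕜 := ℂ)]; rfl
  have h2 : star (z * y) * (z * y) = ((‖x‖ ^ 2 : ℝ) : ℂ) • (star y * y) - star (x * y) * (x * y) := by
    have : star (z * y) * (z * y) = star y * (star z * z) * y := by
      rw [star_mul]; simp only [mul_assoc]
    rw [this, ← hz, mul_sub, sub_mul, star_mul, ← Algebra.commutes, Algebra.algebraMap_eq_smul_one,
      Complex.coe_smul]
    simp [mul_assoc]
  have h3 := hω_pos (z * y)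
  rw [h2, map_sub, map_smul] at h3
  have h4 := (Complex.le_def.1 h3).1
  simp only [Complex.sub_re, smul_eq_mul, Complex.re_ofReal_mul, Complex.zero_re] at h4
  refine le_of_sq_le_sq ?_ (by positivity)
  rw [mul_pow, hsq, hsq]
  linarith

end P552

namespace P552

open Classical in
/-- the finset of a finite set -/
noncomputable def fs {G : Type*} (S : Set G) : Finset G := if h : S.Finite then h.toFinset else ∅

lemma coe_fs {G : Type*} {S : Set G} (h : S.Finite) : (fs S : Set G) = S := by
  simp [fs, h]

lemma card_fs {G : Type*} {S : Set G} (h : S.Finite) : (fs S).card = S.ncard := by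
  rw [← Set.ncard_coe_finset, coe_fs h]

lemma count_toReal {G : Type*} [MeasurableSpace G] {S : Set G} (h : MeasurableSet S) :
    (Measure.count S).toReal = S.ncard := by
  rcases S.finite_or_infinite with hf | hf
  · rw [Measure.count_apply_finite' hf h, Set.ncard_eq_toFinset_card S hf]
    simp
  · rw [Measure.count_apply_infinite hf, hf.ncard]
    simp

lemma ncard_mul {G : Type*} [CommGroup G] (S : Set G) (t : G) : (S * {t}).ncard = S.ncard := by
  rw [Set.mul_singleton, Set.ncard_image_of_injective _ (mul_left_injective t)]

lemma fin_mul {G : Type*} [CommGroup G] {S : Set G} (h : S.Finite) (t : G) : (S * {t}).Finite :=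
  h.mul (Set.finite_singleton t)

lemma meas_mul {G : Type*} [CommGroup G] [TopologicalSpace G] [IsTopologicalGroup G]
    [MeasurableSpace G] [BorelSpace G] {S : Set G} (h : MeasurableSet S) (t : G) :
    MeasurableSet (S * {t}) := by
  have : S * {t} = (fun x => x * t⁻¹) ⁻¹' S := by
    rw [Set.mul_singleton, Set.image_mul_right]
  rw [this]
  exact (continuous_mul_const t⁻¹).measurable h

lemma fol_of {G T : Type*} [CommGroup G] [TopologicalSpace G] [IsTopologicalGroup G]
    [MeasurableSpace G] [BorelSpace G] (Λ : ℕ → Set G) (hm : ∀ n, MeasurableSet (Λ n))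
    (hfin : ∀ᶠ n in atTop, 0 < Measure.count (Λ n) ∧ Measure.count (Λ n) < ⊤)
    (hfol : ∀ g : G, Tendsto
      (fun n => (Measure.count (symmDiff (Λ n) (Λ n * {g}))).toReal / (Measure.count (Λ n)).toReal)
      atTop (𝓝 0)) (π : T → G) :
    Fol ((atTop : Filter ℕ) ×ˢ (⊤ : Filter T)) (fun p => fs (Λ p.1 * {π p.2})) := by
  have hf : ∀ᶠ p in (atTop : Filter ℕ) ×ˢ (⊤ : Filter T), (Λ p.1).Nonempty ∧ (Λ p.1).Finite := by
    refine (hfin.prod_inl _).mono fun p hp => ?_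
    exact ⟨Measure.count_ne_zero_iff.1 hp.1.ne', (Measure.count_apply_lt_top' (hm _)).1 hp.2⟩
  constructor
  · filter_upwards [hf] with p hp
    rw [← Finset.coe_nonempty, coe_fs (fin_mul hp.2 _)]
    exact hp.1.mul (Set.singleton_nonempty _)
  · intro s
    refine ((hfol s).comp tendsto_fst).congr' ?_
    filter_upwards [hf] with p hp
    simp only [Function.comp]
    rw [count_toReal (hm _), count_toReal ((hm _).symmDiff (meas_mul (hm _) s)),
      card_fs (fin_mul hp.2 _), coe_fs (fin_mul hp.2 _), ncard_mul]
    have : symmDiff (Λ p.1 * {π p.2}) (Λ p.1 * {π p.2} * {s}) =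
        symmDiff (Λ p.1) (Λ p.1 * {s}) * {π p.2} := by
      rw [mul_assoc, mul_comm ({π p.2} : Set G) {s}, ← mul_assoc]
      simp only [Set.mul_singleton (b := π p.2)]
      rw [Set.image_symmDiff (mul_left_injective _)]
    rw [this, ncard_mul]

lemma pick {A : Type*} [NormedRing A] [StarRing A] [CStarRing A] [NormedAlgebra ℂ A]
    [StarModule ℂ A] (ω : A →ₗ[ℂ] ℂ)
    {G : Type*} [CommGroup G] [Countable G] [MeasurableSpace G]
    (τ : G → A ≃⋆ₐ[ℂ] A)
    (hτ_meas : ∀ a b : A, Measurable fun g : G => ω (a * τ g b))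
    (Λ : ℕ → Set G) (hm : ∀ n, MeasurableSet (Λ n))
    (hfin : ∀ᶠ n in atTop, 0 < Measure.count (Λ n) ∧ Measure.count (Λ n) < ⊤)
    (hw : ∀ a b : A, Tendsto
        (fun n => (Measure.count (Λ n)).toReal⁻¹ * ∫ g in Λ n, ‖ω (a * τ g b) - ω a * ω b‖ ∂Measure.count)
        atTop (𝓝 0))
    {N : ℕ} (a : Fin N → A) (b : A) (hb : ω b = 0) (δ : ℝ) (hδ : 0 < δ) :
    ∃ g, ∀ i, ‖ω (a i * τ g b)‖ ≤ δ := by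
  have h1 := tendsto_finsetSum (Finset.univ) (fun i _ => hw (a i) b)
  rw [Finset.sum_const_zero] at h1
  obtain ⟨n, hn, hn'⟩ := ((h1.eventually_lt_const hδ).and hfin).exists
  have hne : (Λ n).Nonempty := Measure.count_ne_zero_iff.1 hn'.1.ne'
  have hf : (Λ n).Finite := (Measure.count_apply_lt_top' (hm _)).1 hn'.2
  have hne' : (fs (Λ n)).Nonempty := by rw [← Finset.coe_nonempty, coe_fs hf]; exact hne
  have e : ∀ i, (Measure.count (Λ n)).toReal⁻¹ *
      ∫ g in Λ n, ‖ω (a i * τ g b) - ω (a i) * ω b‖ ∂Measure.count =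
      av (fs (Λ n)) (fun g => ‖ω (a i * τ g b)‖) := by
    intro i
    have := int_eq (fs (Λ n)) (by rw [coe_fs hf]; exact hm n)
      (fun g => ‖ω (a i * τ g b) - ω (a i) * ω b‖)
      (meas_atom (((hτ_meas (a i) b).sub_const _).norm))
    rw [coe_fs hf] at this
    rw [this, count_toReal (hm n), ← card_fs hf]
    simp [av, hb]
  by_contra! hcon
  simp only [e] at hn
  rw [← av_sum] at hn
  refine absurd hn (not_lt.2 ?_)
  rw [← av_const hne' δ]
  refine av_mono _ fun g => ?_
  obtain ⟨i, hi⟩ := hcon g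
  exact hi.le.trans (Finset.single_le_sum (f := fun i => ‖ω (a i * τ g b)‖)
    (fun i _ => norm_nonneg _) (Finset.mem_univ i))

end P552

/-- **Proposition 5.5(2)** (counting measure case). -/
theorem prop_5_5_2
    -- a unital C*-algebra A
    {A : Type*} [NormedRing A] [StarRing A] [CStarRing A] [NormedAlgebra ℂ A]
    [CompleteSpace A] [StarModule ℂ A]
    -- a tracial state ω on A
    (ω : A →ₗ[ℂ] ℂ) (hω_pos : ∀ a : A, 0 ≤ ω (star a * a)) (hω_one : ω 1 = 1)
    (hω_tracial : ∀ a b : A, ω (a * b) = ω (b * a))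
    -- a countable second countable topological abelian group G with the counting measure
    -- on its Borel σ-algebra
    {G : Type*} [CommGroup G] [Countable G] [TopologicalSpace G] [IsTopologicalGroup G]
    [SecondCountableTopology G] [MeasurableSpace G] [BorelSpace G]
    -- the action τ, making (A, ω, τ, G) a C*-dynamical system
    (τ : G → A ≃⋆ₐ[ℂ] A)
    (hτ_one : ∀ a : A, τ 1 a = a)
    (hτ_mul : ∀ g h a, τ g (τ h a) = τ (g * h) a)
    (hω_inv : ∀ g a, ω (τ g a) = ω a)
    (hτ_meas : ∀ a b : A, Measurable fun g : G => ω (a * τ g b))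
    -- the system is weakly mixing (w.r.t. some, equivalently every, Følner sequence in G)
    (hWM : ∃ Λ : ℕ → Set G, (∀ n, MeasurableSet (Λ n)) ∧
      (∀ᶠ n in atTop, 0 < Measure.count (Λ n) ∧ Measure.count (Λ n) < ⊤) ∧
      (∀ g : G, Tendsto
        (fun n => (Measure.count (symmDiff (Λ n) (Λ n * {g}))).toReal / (Measure.count (Λ n)).toReal)
        atTop (𝓝 0)) ∧
      ∀ a b : A, Tendsto
        (fun n => (Measure.count (Λ n)).toReal⁻¹ * ∫ g in Λ n, ‖ω (a * τ g b) - ω a * ω b‖ ∂Measure.count)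
        atTop (𝓝 0))
    -- (g,h,j,k) ↦ ω(τ_h(a₁) τ_g(a₂) τ_{gh}(a₃) τ_{jk}(a₄) τ_j(a₅) τ_k(a₆)) is
    -- Σ² × Σ²-measurable
    (hmeas6 : ∀ a₁ a₂ a₃ a₄ a₅ a₆ : A, Measurable fun q : (G × G) × (G × G) =>
      ω (τ q.1.2 a₁ * τ q.1.1 a₂ * τ (q.1.1 * q.1.2) a₃ *
        τ (q.2.1 * q.2.2) a₄ * τ q.2.1 a₅ * τ q.2.2 a₆))
    -- a uniform Følner sequence (Λ1 n) in G ...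
    (Λ1 : ℕ → Set G)
    (hΛ1meas : ∀ n, MeasurableSet (Λ1 n))
    (hΛ1fin : ∀ᶠ n in atTop, 0 < Measure.count (Λ1 n) ∧ Measure.count (Λ1 n) < ⊤)
    (hΛ1folner : ∀ g : G, Tendsto
      (fun n => (Measure.count (symmDiff (Λ1 n) (Λ1 n * {g}))).toReal / (Measure.count (Λ1 n)).toReal)
      atTop (𝓝 0))
    (hΛ1unif : ∀ᶠ m in atTop, ∀ ε > (0 : ℝ), ∀ᶠ n in atTop, ∀ g ∈ Λ1 m,
      (Measure.count (symmDiff (Λ1 n) (Λ1 n * {g}))).toReal ≤ ε * (Measure.count (Λ1 n)).toReal)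
    -- ... satisfying the Tempel'man condition ...
    (hΛ1temp : ∃ c : ℝ, 0 < c ∧ ∀ᶠ n in atTop, MeasurableSet ((Λ1 n)⁻¹ * Λ1 n) ∧
      Measure.count ((Λ1 n)⁻¹ * Λ1 n) ≤ ENNReal.ofReal c * Measure.count (Λ1 n))
    -- ... and such that (Λ1 n⁻¹ Λ1 n) is also Følner in G
    (hΛ1invfin : ∀ᶠ n in atTop, 0 < Measure.count ((Λ1 n)⁻¹ * Λ1 n) ∧ Measure.count ((Λ1 n)⁻¹ * Λ1 n) < ⊤)
    (hΛ1invfolner : ∀ g : G, Tendsto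
      (fun n => (Measure.count (symmDiff ((Λ1 n)⁻¹ * Λ1 n) (((Λ1 n)⁻¹ * Λ1 n) * {g}))).toReal /
        (Measure.count ((Λ1 n)⁻¹ * Λ1 n)).toReal)
      atTop (𝓝 0))
    -- a uniform Følner sequence (Λ2 n) in G ...
    (Λ2 : ℕ → Set G)
    (hΛ2meas : ∀ n, MeasurableSet (Λ2 n))
    (hΛ2fin : ∀ᶠ n in atTop, 0 < Measure.count (Λ2 n) ∧ Measure.count (Λ2 n) < ⊤)
    (hΛ2folner : ∀ g : G, Tendsto
      (fun n => (Measure.count (symmDiff (Λ2 n) (Λ2 n * {g}))).toReal / (Measure.count (Λ2 n)).toReal)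
      atTop (𝓝 0))
    (hΛ2unif : ∀ᶠ m in atTop, ∀ ε > (0 : ℝ), ∀ᶠ n in atTop, ∀ g ∈ Λ2 m,
      (Measure.count (symmDiff (Λ2 n) (Λ2 n * {g}))).toReal ≤ ε * (Measure.count (Λ2 n)).toReal)
    -- ... satisfying the Tempel'man condition ...
    (hΛ2temp : ∃ c : ℝ, 0 < c ∧ ∀ᶠ n in atTop, MeasurableSet ((Λ2 n)⁻¹ * Λ2 n) ∧
      Measure.count ((Λ2 n)⁻¹ * Λ2 n) ≤ ENNReal.ofReal c * Measure.count (Λ2 n))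
    -- ... and such that (Λ2 n⁻¹ Λ2 n) is also Følner in G
    (hΛ2invfin : ∀ᶠ n in atTop, 0 < Measure.count ((Λ2 n)⁻¹ * Λ2 n) ∧ Measure.count ((Λ2 n)⁻¹ * Λ2 n) < ⊤)
    (hΛ2invfolner : ∀ g : G, Tendsto
      (fun n => (Measure.count (symmDiff ((Λ2 n)⁻¹ * Λ2 n) (((Λ2 n)⁻¹ * Λ2 n) * {g}))).toReal /
        (Measure.count ((Λ2 n)⁻¹ * Λ2 n)).toReal)
      atTop (𝓝 0))
    -- a GNS representation (H, j) of (A, ω)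
    {H : Type*} [NormedAddCommGroup H] [InnerProductSpace ℂ H] [CompleteSpace H]
    (j : A →ₗ[ℂ] H) (hj_dense : DenseRange j)
    (hj_inner : ∀ a b : A, (inner ℂ (j a) (j b) : ℂ) = ω (star a * b))
    -- the system is uniformly asymptotically abelian with respect to (Λ1 n) (ε-form)
    (hcomm_meas : ∀ a b : A, Measurable fun g : G => ‖a * τ g b - τ g b * a‖)
    (hUAA : ∀ a b : A, ∀ ε > (0 : ℝ), ∀ᶠ n in atTop, ∀ h : G,
      (Measure.count (Λ1 n)).toReal⁻¹ * ∫ g in Λ1 n * {h}, ‖a * τ g b - τ g b * a‖ ∂Measure.count ≤ ε)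
 :
    -- conclusion (in ε-form)
    ∀ a b c : A, ∀ ε > (0 : ℝ), ∀ᶠ n in atTop, ∀ g₁ g₂ : G,
      ‖((Measure.count (Λ1 n)).toReal * (Measure.count (Λ2 n)).toReal)⁻¹ •
          (∫ h in Λ1 n * {g₁}, ∫ g in Λ2 n * {g₂},
            j (τ (g * h) a * τ g b * τ h c) ∂Measure.count ∂Measure.count)
        - (ω a * ω b * ω c) • j 1‖ ≤ ε := by
  intro a b c ε hε
  obtain ⟨Λ, hΛm, hΛf, -, hΛw⟩ := hWM
  have hsys : P552.Sys ω τ j :=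
    { one := hω_one
      tr := hω_tracial
      mul := hτ_mul
      inv := hω_inv
      inn := hj_inner
      left := P552.left_bound ω hω_pos j hj_inner
      iso := by
        letI : CStarAlgebra A := {}
        exact fun g a => (StarAlgEquiv.norm_map (τ g) a).le
      mix := by
        intro b hb N δ hδ
        induction N with
        | zero => exact ⟨Fin.elim0, fun k => k.elim0⟩
        | succ N ih =>
          obtain ⟨s, hs⟩ := ih
          obtain ⟨g, hg⟩ := P552.pick ω τ hτ_meas Λ hΛm hΛf hΛw
            (fun i => star (τ (s i) b)) b hb δ hδ
          have hg2 : ∀ i, ‖ω (star (τ g b) * τ (s i) b)‖ ≤ δ := by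
            intro i
            rw [← hj_inner, norm_inner_symm, hj_inner]
            exact hg i
          refine ⟨Fin.snoc s g, fun k m => ?_⟩
          induction k using Fin.lastCases with
          | last =>
            induction m using Fin.lastCases with
            | last => intro h; exact absurd rfl h
            | cast m => intro _; simpa using hg2 m
          | cast k =>
            induction m using Fin.lastCases with
            | last => intro _; simpa using hg k
            | cast m => intro h; simpa using hs k m (fun h' => h (by rw [h'])) }
  let F1 : ℕ × (G × G) → Finset G := fun p => P552.fs (Λ1 p.1 * {p.2.1})
  let F2 : ℕ × (G × G) → Finset G := fun p => P552.fs (Λ2 p.1 * {p.2.2})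
  have hF1 : P552.Fol ((atTop : Filter ℕ) ×ˢ (⊤ : Filter (G × G))) F1 :=
    P552.fol_of Λ1 hΛ1meas hΛ1fin hΛ1folner (fun t : G × G => t.1)
  have hF2 : P552.Fol ((atTop : Filter ℕ) ×ˢ (⊤ : Filter (G × G))) F2 :=
    P552.fol_of Λ2 hΛ2meas hΛ2fin hΛ2folner (fun t : G × G => t.2)
  have hU : ∀ a b, Tendsto (fun i => P552.av (F1 i) fun g => ‖a * τ g b - τ g b * a‖)
      ((atTop : Filter ℕ) ×ˢ (⊤ : Filter (G × G))) (𝓝 0) := by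
    intro a b
    refine P552.tend0 fun ε hε => ?_
    refine (((hUAA a b ε hε).and hΛ1fin).prod_inl _).mono fun p hp => ?_
    obtain ⟨hp1, hp2⟩ := hp
    have hf : (Λ1 p.1).Finite := (Measure.count_apply_lt_top' (hΛ1meas _)).1 hp2.2
    have hf' := P552.fin_mul hf p.2.1
    rw [Real.norm_of_nonneg (P552.av_nonneg _ fun _ => norm_nonneg _)]
    refine le_trans (le_of_eq ?_) (hp1 p.2.1)
    have := P552.int_eq (F1 p) (by
      rw [P552.coe_fs hf']; exact P552.meas_mul (hΛ1meas _) _)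
      (fun g => ‖a * τ g b - τ g b * a‖) (P552.meas_atom (hcomm_meas a b))
    rw [P552.coe_fs hf'] at this
    rw [this, P552.count_toReal (hΛ1meas _), ← P552.ncard_mul _ p.2.1, ← P552.card_fs hf']
    rfl
  have hmain := hsys.main hF1 hF2 hU a b c
  have hmain' := (tendsto_iff_norm_sub_tendsto_zero.1 hmain).eventually_le_const hε
  have hnull : ∀ x, ∀ y ∈ measurableAtom x, ∀ p u q, j (p * (τ y u - τ x u) * q) = 0 := by
    intro x y hy p u q
    have h0 : ∀ v, ω (v * (τ y u - τ x u)) = 0 := by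
      intro v
      rw [mul_sub, map_sub, sub_eq_zero]
      exact P552.meas_atom (hτ_meas v u) x y hy
    rw [← inner_self_eq_zero (𝕜 := ℂ), hj_inner, ← mul_assoc, hω_tracial, ← mul_assoc, ← mul_assoc]
    exact h0 _
  have hin : ∀ h, ∀ x, ∀ y ∈ measurableAtom x,
      j (τ (y * h) a * τ y b * τ h c) = j (τ (x * h) a * τ x b * τ h c) := by
    intro h x y hy
    rw [← sub_eq_zero, ← map_sub, ← hτ_mul, ← hτ_mul, ← map_mul, ← map_mul, ← sub_mul]
    simpa using hnull x y hy 1 (τ h a * b) (τ h c)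
  have hout : ∀ g, ∀ x, ∀ y ∈ measurableAtom x,
      j (τ (g * y) a * τ g b * τ y c) = j (τ (g * x) a * τ g b * τ x c) := by
    intro g x y hy
    rw [← sub_eq_zero, ← map_sub, mul_comm g y, mul_comm g x, ← hτ_mul, ← hτ_mul]
    have h1 := hnull x y hy 1 (τ g a) (τ g b * τ y c)
    have h2 := hnull x y hy (τ x (τ g a) * τ g b) c 1
    have : τ y (τ g a) * τ g b * τ y c - τ x (τ g a) * τ g b * τ x c =
        1 * (τ y (τ g a) - τ x (τ g a)) * (τ g b * τ y c) +
        (τ x (τ g a) * τ g b) * (τ y c - τ x c) * 1 := by noncomm_ring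
    rw [this, map_add, h1, h2, add_zero]
  rw [eventually_prod_iff] at hmain'
  obtain ⟨pa, hpa, pb, hpb, hall⟩ := hmain'
  rw [eventually_top] at hpb
  filter_upwards [hpa, hΛ1fin, hΛ2fin] with n hn h1 h2 g₁ g₂
  have hf1 := P552.fin_mul ((Measure.count_apply_lt_top' (hΛ1meas _)).1 h1.2) g₁
  have hf2 := P552.fin_mul ((Measure.count_apply_lt_top' (hΛ2meas _)).1 h2.2) g₂
  have key := hall hn (hpb (g₁, g₂))
  have hi2 : ∀ h, ∫ g in Λ2 n * {g₂}, j (τ (g * h) a * τ g b * τ h c) ∂Measure.count =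
      ∑ g ∈ F2 (n, (g₁, g₂)), j (τ (g * h) a * τ g b * τ h c) := by
    intro h
    have := P552.int_eq (F2 (n, (g₁, g₂))) (by
      rw [P552.coe_fs hf2]; exact P552.meas_mul (hΛ2meas _) _) _ (hin h)
    rw [P552.coe_fs hf2] at this
    exact this
  have hi1 := P552.int_eq (F1 (n, (g₁, g₂))) (by
      rw [P552.coe_fs hf1]; exact P552.meas_mul (hΛ1meas _) _)
      (fun h => ∑ g ∈ F2 (n, (g₁, g₂)), j (τ (g * h) a * τ g b * τ h c))
      (fun x y hy => Finset.sum_congr rfl fun g _ => hout g x y hy)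
  rw [P552.coe_fs hf1] at hi1
  simp only [hi2]
  rw [hi1, P552.count_toReal (hΛ1meas _), P552.count_toReal (hΛ2meas _),
    ← P552.ncard_mul (Λ1 n) g₁, ← P552.ncard_mul (Λ2 n) g₂, ← P552.card_fs hf1, ← P552.card_fs hf2]
  refine le_trans (le_of_eq ?_) key
  congr 2
  simp only [P552.av, ← Finset.smul_sum, smul_smul]
  rw [mul_inv]
end

section
/- (Bergelson's theorem for weakly mixing C*-dynamical systems) Let (A,ω,τ,G) be a weakly mixing C*-dynamical system with ω tracial, where G is a second countable topological group, Σ its Borel σ-algebra, μ a σ-finite right and left invariant measure, and (g,h,j,k) ↦ ω(τ_h(a₁) τ_g(a₂) τ_{gh}(a₃) τ_{jk}(a₄) τ_j(a₅) τ_k(a₆)) is Σ² × Σ²-measurable for all a₁,...,a₆ ∈ A. Assume there exist uniform Følner sequences (Λ_{1,n}) and (Λ_{2,n}) in G satisfying the Tempel'man condition and such that (Λ_{1,n}⁻¹Λ_{1,n}) and (Λ_{2,n}⁻¹Λ_{2,n}) are also Følner in G. If (A,ω,τ,G) is asymptotically abelian with respect to (Λ_{1,n}), then lim_{n→∞} (1/(μ(Λ_{1,n})μ(Λ_{2,n})))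 ∫_{Λ_{1,n}} ∫_{Λ_{2,n}} ω(τ_{gh}(a) τ_g(b) τ_h(c) d) dg dh = ω(a)ω(b)ω(c)ω(d) for all a, b, c, d ∈ A. -/
open MeasureTheory Filter Topology
open scoped Pointwise ComplexOrder

namespace Berg

section alg
variable {A : Type*} [NormedRing A] [StarRing A] [CStarRing A] [NormedAlgebra ℂ A]
    [CompleteSpace A] [StarModule ℂ A]

theorem omega_facts (ω : A →ₗ[ℂ] ℂ) (hpos : ∀ a : A, 0 ≤ ω (star a * a)) (hone : ω 1 = 1) :
    (∀ x, ω (star x) = star (ω x)) ∧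
    (∀ x y, ‖ω (star x * y)‖ ^ 2 ≤ (ω (star x * x)).re * (ω (star y * y)).re) ∧
    (∀ x, (ω (star x * x)).re ≤ ‖x‖ ^ 2) ∧
    (∀ x, ‖ω x‖ ≤ ‖x‖) := by
  let _ : CStarAlgebra A := {}
  let _ : PartialOrder A := CStarAlgebra.spectralOrder A
  have _ : StarOrderedRing A := CStarAlgebra.spectralOrderedRing A
  have hp : ∀ x : A, 0 ≤ x → 0 ≤ ω x := by
    intro x hx
    obtain ⟨y, rfl⟩ := CStarAlgebra.nonneg_iff_eq_star_mul_self.mp hx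
    exact hpos y
  let f : A →ₚ[ℂ] ℂ := PositiveLinearMap.mk₀ ω hp
  have hf : ∀ x, f x = ω x := fun _ => rfl
  have h1 : ∀ x, ω (star x) = star (ω x) := fun x => map_star f x
  have h2 : ∀ x y, ‖ω (star x * y)‖ ^ 2 ≤ (ω (star x * x)).re * (ω (star y * y)).re := by
    intro x y
    have h := norm_inner_le_norm (𝕜 := ℂ) (f.toPreGNS x) (f.toPreGNS y)
    rw [PositiveLinearMap.preGNS_inner_def] at h
    have e := pow_le_pow_left₀ (norm_nonneg _) h 2
    rw [mul_pow, PositiveLinearMap.preGNS_norm_def, PositiveLinearMap.preGNS_norm_def,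
      Real.sq_sqrt, Real.sq_sqrt] at e
    · exact e
    · exact (Complex.nonneg_iff.mp (hpos y)).1
    · exact (Complex.nonneg_iff.mp (hpos x)).1
  have h3 : ∀ x, (ω (star x * x)).re ≤ ‖x‖ ^ 2 := by
    intro x
    have h := CStarAlgebra.star_mul_le_algebraMap_norm_sq (a := x)
    have h' := hp _ (sub_nonneg.mpr h)
    have e : (algebraMap ℝ A (‖x‖ ^ 2)) = ((‖x‖ ^ 2 : ℝ) : ℂ) • (1 : A) := by
      rw [Algebra.algebraMap_eq_smul_one, Complex.coe_smul]
    rw [e, map_sub, map_smul, hone] at h'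
    have := (Complex.nonneg_iff.mp h').1
    simp only [Complex.sub_re, smul_eq_mul, mul_one, Complex.ofReal_re] at this
    linarith
  refine ⟨h1, h2, h3, fun x => ?_⟩
  have h := h2 1 x
  simp only [star_one, one_mul, hone, Complex.one_re] at h
  exact (abs_le_of_sq_le_sq' (h.trans (h3 x)) (norm_nonneg _)).2

theorem norm_aut (φ : A ≃⋆ₐ[ℂ] A) (x : A) : ‖φ x‖ = ‖x‖ := by
  let _ : CStarAlgebra A := {}
  exact StarAlgEquiv.norm_map φ x
end alg

/-- Collected facts about the system. -/
structure Core {A : Type*} [NormedRing A] [StarRing A] [NormedAlgebra ℂ A]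
    {G : Type*} [CommGroup G] [MeasurableSpace G]
    (ω : A →ₗ[ℂ] ℂ) (τ : G → A ≃⋆ₐ[ℂ] A) : Prop where
  one : ω 1 = 1
  conj : ∀ x, ω (star x) = star (ω x)
  cs : ∀ x y, ‖ω (star x * y)‖ ^ 2 ≤ (ω (star x * x)).re * (ω (star y * y)).re
  re_le : ∀ x, (ω (star x * x)).re ≤ ‖x‖ ^ 2
  re_nonneg : ∀ x, 0 ≤ (ω (star x * x)).re
  bd : ∀ x, ‖ω x‖ ≤ ‖x‖
  tr : ∀ a b : A, ω (a * b) = ω (b * a)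
  mul : ∀ g h a, τ g (τ h a) = τ (g * h) a
  one' : ∀ a, τ 1 a = a
  inv : ∀ g a, ω (τ g a) = ω a
  nrm : ∀ g a, ‖τ g a‖ = ‖a‖
  nstar : ∀ a : A, ‖star a‖ = ‖a‖
  meas : ∀ a b : A, Measurable fun g : G => ω (a * τ g b)
  meas6 : ∀ a₁ a₂ a₃ a₄ a₅ a₆ : A, Measurable fun q : (G × G) × (G × G) =>
      ω (τ q.1.2 a₁ * τ q.1.1 a₂ * τ (q.1.1 * q.1.2) a₃ *
        τ (q.2.1 * q.2.2) a₄ * τ q.2.1 a₅ * τ q.2.2 a₆)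
  wm : ∀ c, ω c = 0 → ∀ ε > (0 : ℝ), ∀ s : Finset G, ∃ y, ∀ x ∈ s,
    ‖ω (star (τ x c) * τ y c)‖ < ε

/-- Asymptotic invariance of a sequence of measures. -/
def Fol {G : Type*} [CommGroup G] [MeasurableSpace G] (P : ℕ → Measure G) : Prop :=
  ∀ (k : G) (M ε : ℝ), 0 < ε → ∀ᶠ n in atTop, ∀ f : G → ℂ, Measurable f → (∀ g, ‖f g‖ ≤ M) →
    ‖(∫ g, f (g * k) ∂(P n)) - ∫ g, f g ∂(P n)‖ ≤ ε

theorem norm_le_of_sq {x δ : ℝ} (hδ : 0 < δ) : x ≤ δ + x ^ 2 / δ := by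
  have : 0 ≤ (δ - x) ^ 2 / δ + x := by
    by_cases hx : 0 ≤ x
    · positivity
    · have : (δ - x) ^ 2 / δ ≥ (δ-x) := by
        rw [ge_iff_le, le_div_iff₀ hδ]; nlinarith
      linarith
  have e : δ + x ^ 2 / δ - x = (δ - x) ^ 2 / δ + x := by field_simp; ring
  linarith

section main
variable {A : Type*} [NormedRing A] [StarRing A] [NormedAlgebra ℂ A]
    {G : Type*} [CommGroup G] [MeasurableSpace G]
    {ω : A →ₗ[ℂ] ℂ} {τ : G → A ≃⋆ₐ[ℂ] A}

theorem Core.cs' (H : Core ω τ) (x y : A) : ‖ω (x * y)‖ ^ 2 ≤ ‖x‖ ^ 2 * (ω (star y * y)).re := by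
  have h := H.cs (star x) y
  rw [star_star] at h
  refine h.trans ?_
  have h2 := H.re_le (star x)
  rw [H.nstar, star_star] at h2
  exact mul_le_mul_of_nonneg_right h2 (H.re_nonneg y)

theorem Core.exists_k (H : Core ω τ) (c : A) (hc : ω c = 0) {ε : ℝ} (hε : 0 < ε) :
    ∃ (N : ℕ) (k : ℕ → G), 0 < N ∧
      ∑ i ∈ Finset.range N, ∑ j ∈ Finset.range N, ‖ω (star (τ (k i) c) * τ (k j) c)‖
        ≤ ε * (N : ℝ) ^ 2 := by
  obtain ⟨k, -, hk⟩ := exists_seq_of_forall_finset_exists (fun _ : G => True)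
    (fun x y => ‖ω (star (τ x c) * τ y c)‖ < ε / 2)
    (fun s _ => by
      obtain ⟨y, hy⟩ := H.wm c hc (ε / 2) (by positivity) s
      exact ⟨y, trivial, hy⟩)
  obtain ⟨N, hN⟩ := exists_nat_gt (2 * ‖c‖ ^ 2 / ε)
  refine ⟨N + 1, k, Nat.succ_pos _, ?_⟩
  have hN' : 2 * ‖c‖ ^ 2 < (N + 1 : ℝ) * ε := by
    rw [div_lt_iff₀ hε] at hN
    nlinarith
  have key : ∀ i j, ‖ω (star (τ (k i) c) * τ (k j) c)‖ ≤ ε / 2 + if i = j then ‖c‖ ^ 2 else 0 := by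
    intro i j
    rcases lt_trichotomy i j with h | h | h
    · simp only [h.ne, if_false, add_zero]; exact (hk i j h).le
    · subst h
      simp only [if_true]
      have : ‖ω (star (τ (k i) c) * τ (k i) c)‖ ≤ ‖c‖ ^ 2 := by
        refine (H.bd _).trans ((norm_mul_le _ _).trans ?_)
        rw [H.nstar, H.nrm, sq]
      linarith
    · simp only [h.ne', if_false, add_zero]
      have e : ω (star (τ (k i) c) * τ (k j) c) = star (ω (star (τ (k j) c) * τ (k i) c)) := by
        rw [← H.conj]; simp
      rw [e, norm_star]; exact (hk j i h).le
  calc _ ≤ ∑ i ∈ Finset.range (N+1), ∑ j ∈ Finset.range (N+1),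
        (ε / 2 + if i = j then ‖c‖ ^ 2 else 0) :=
        Finset.sum_le_sum fun i _ => Finset.sum_le_sum fun j _ => key i j
    _ = ((N + 1 : ℕ) : ℝ) * (((N + 1 : ℕ) : ℝ) * (ε / 2)) + ((N + 1 : ℕ) : ℝ) * ‖c‖ ^ 2 := by
        have : ∀ i ∈ Finset.range (N+1), ∑ j ∈ Finset.range (N+1),
            (ε / 2 + if i = j then ‖c‖ ^ 2 else 0) = ((N + 1 : ℕ) : ℝ) * (ε / 2) + ‖c‖ ^ 2 := by
          intro i hi
          rw [Finset.sum_add_distrib, Finset.sum_ite_eq, if_pos hi]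
          simp
        rw [Finset.sum_congr rfl this]
        simp only [Finset.sum_const, Finset.card_range, nsmul_eq_mul]
        ring
    _ ≤ _ := by
        push_cast
        have : (0:ℝ) ≤ N + 1 := by positivity
        nlinarith

theorem integrable_bdd {X : Type*} [MeasurableSpace X] {P : Measure X} [IsFiniteMeasure P]
    {f : X → ℂ} (hf : Measurable f) {M : ℝ} (hM : ∀ x, ‖f x‖ ≤ M) : Integrable f P :=
  Integrable.of_bound hf.aestronglyMeasurable M (Eventually.of_forall hM)

theorem norm_int_le {X : Type*} [MeasurableSpace X] {P : Measure X} [IsProbabilityMeasure P]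
    {f : X → ℂ} {M : ℝ} (hM : ∀ x, ‖f x‖ ≤ M) : ‖∫ x, f x ∂P‖ ≤ M := by
  have := norm_integral_le_of_norm_le_const (μ := P) (Eventually.of_forall hM)
  simpa using this

/-- Averaging over finitely many translates. -/
theorem avg_shift {P : Measure G} [IsProbabilityMeasure P] [MeasurableMul G] {f : G → ℂ}
    (hf : Measurable f) {M : ℝ} (hM : ∀ g, ‖f g‖ ≤ M) {N : ℕ} (hN : 0 < N) (k : ℕ → G) {η : ℝ}
    (h : ∀ i ∈ Finset.range N, ‖(∫ g, f (g * k i) ∂P) - ∫ g, f g ∂P‖ ≤ η) :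
    ‖∫ g, f g ∂P‖ ≤ η + ‖∫ g, ∑ i ∈ Finset.range N, f (g * k i) ∂P‖ / N := by
  have hN' : (0 : ℝ) < N := by exact_mod_cast hN
  have hi : ∀ i ∈ Finset.range N, Integrable (fun g => f (g * k i)) P := fun i _ =>
    integrable_bdd (hf.comp (measurable_mul_const (k i))) (fun g => hM _)
  rw [integral_finsetSum _ hi]
  have e : (N : ℂ) * ∫ g, f g ∂P = (∑ i ∈ Finset.range N, ∫ g, f (g * k i) ∂P) -
      ∑ i ∈ Finset.range N, ((∫ g, f (g * k i) ∂P) - ∫ g, f g ∂P) := by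
    rw [Finset.sum_sub_distrib]; simp
  have e2 : (N : ℝ) * ‖∫ g, f g ∂P‖ = ‖(N : ℂ) * ∫ g, f g ∂P‖ := by simp
  have b : ‖∑ i ∈ Finset.range N, ((∫ g, f (g * k i) ∂P) - ∫ g, f g ∂P)‖ ≤ N * η := by
    refine (norm_sum_le_of_le _ h).trans ?_
    simp
  have e3 := norm_sub_le (∑ i ∈ Finset.range N, ∫ g, f (g * k i) ∂P)
      (∑ i ∈ Finset.range N, ((∫ g, f (g * k i) ∂P) - ∫ g, f g ∂P))
  rw [← e, ← e2] at e3
  rw [← sub_le_iff_le_add', le_div_iff₀ hN']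
  nlinarith

theorem Core.erg0 [MeasurableMul G] (H : Core ω τ) {P : ℕ → Measure G}
    [∀ n, IsProbabilityMeasure (P n)]
    (hP : Fol P) (c : A) (hc : ω c = 0) (e : G → G) (he : Measurable e)
    (he2 : ∀ k, ∃ k', ∀ g, e (g * k') = e g * k) (M : ℝ) {ε : ℝ} (hε : 0 < ε) :
    ∀ᶠ n in atTop, ∀ X : A, ‖X‖ ≤ M → ‖∫ g, ω (X * τ (e g) c) ∂(P n)‖ ≤ ε := by
  choose σ hσ using he2
  have hδ : 0 < (ε / 3) ^ 2 / (M ^ 2 + 1) := by positivity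
  obtain ⟨N, k, hN, hk⟩ := H.exists_k c hc hδ
  have hN' : (0 : ℝ) < N := by exact_mod_cast hN
  have hev := (Filter.eventually_all_finset (Finset.range N)).mpr
    fun i _ => hP (σ (k i)) (M * ‖c‖) (ε / 3) (by positivity)
  filter_upwards [hev] with n hn X hX
  have hf : Measurable fun g => ω (X * τ (e g) c) := (H.meas X c).comp he
  have hM : ∀ g, ‖ω (X * τ (e g) c)‖ ≤ M * ‖c‖ := by
    intro g
    refine (H.bd _).trans ((norm_mul_le _ _).trans ?_)
    rw [H.nrm]; gcongr
  have := avg_shift (P := P n) hf hM hN (fun i => σ (k i)) (fun i hi => hn i hi _ hf hM)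
  refine this.trans ?_
  set S : A := ∑ i ∈ Finset.range N, τ (k i) c with hS
  have eS : ∀ g, ∑ i ∈ Finset.range N, ω (X * τ (e (g * σ (k i))) c) = ω (X * τ (e g) S) := by
    intro g
    rw [hS, map_sum, Finset.mul_sum, map_sum]
    refine Finset.sum_congr rfl fun i _ => ?_
    rw [hσ, H.mul]
  have bS : (ω (star S * S)).re ≤ (ε / 3) ^ 2 / (M ^ 2 + 1) * (N : ℝ) ^ 2 := by
    refine le_trans ?_ hk
    refine (Complex.re_le_norm _).trans ?_
    rw [hS, star_sum, Finset.sum_mul_sum, map_sum]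
    refine norm_sum_le_of_le _ fun i _ => ?_
    rw [map_sum]
    exact norm_sum_le _ _
  have bX : ∀ g, ‖ω (X * τ (e g) S)‖ ≤ N * (ε / 3) := by
    intro g
    have h := H.cs' X (τ (e g) S)
    rw [← map_star, ← map_mul, H.inv] at h
    refine (abs_le_of_sq_le_sq' ?_ (by positivity)).2
    refine h.trans ?_
    have hX2 : ‖X‖ ^ 2 ≤ M ^ 2 := by gcongr
    calc ‖X‖ ^ 2 * (ω (star S * S)).re ≤ (M ^ 2 + 1) * ((ε / 3) ^ 2 / (M ^ 2 + 1) * (N : ℝ) ^ 2) := by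
          apply mul_le_mul _ bS (H.re_nonneg S) (by positivity)
          linarith
      _ = _ := by field_simp
  simp_rw [eS]
  have h3 := norm_int_le (P := P n) bX
  have : ‖∫ g, ω (X * τ (e g) S) ∂(P n)‖ / N ≤ ε / 3 := by
    rw [div_le_iff₀ hN']; linarith
  linarith

theorem Core.erg [MeasurableMul G] (H : Core ω τ) {P : ℕ → Measure G}
    [∀ n, IsProbabilityMeasure (P n)]
    (hP : Fol P) (c : A) (e : G → G) (he : Measurable e)
    (he2 : ∀ k, ∃ k', ∀ g, e (g * k') = e g * k) (M : ℝ) {ε : ℝ} (hε : 0 < ε) :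
    ∀ᶠ n in atTop, ∀ X : A, ‖X‖ ≤ M → ‖(∫ g, ω (X * τ (e g) c) ∂(P n)) - ω X * ω c‖ ≤ ε := by
  have h0 : ω (c - ω c • 1) = 0 := by rw [map_sub, map_smul, H.one]; simp
  filter_upwards [H.erg0 hP _ h0 e he he2 M hε] with n hn X hX
  have h := hn X hX
  have e1 : ∀ g, ω (X * τ (e g) (c - ω c • 1)) = ω (X * τ (e g) c) - ω X * ω c := by
    intro g
    rw [map_sub, map_smul, map_one, mul_sub, map_sub, mul_smul_comm, mul_one, map_smul,
      smul_eq_mul, mul_comm (ω c)]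
  simp_rw [e1] at h
  rw [integral_sub _ (integrable_const _)] at h
  · simpa using h
  · refine integrable_bdd ((H.meas X c).comp he) (M := ‖X‖ * ‖c‖) fun g => ?_
    refine (H.bd _).trans ((norm_mul_le _ _).trans ?_)
    rw [H.nrm]

theorem int_close {P : Measure G} [IsProbabilityMeasure P] {Φ Ψ : G → ℂ} (hΦ : Measurable Φ)
    (hΨ : Measurable Ψ) {M ε : ℝ} (hM : ∀ h, ‖Ψ h‖ ≤ M) (hd : ∀ h, ‖Φ h - Ψ h‖ ≤ ε) :
    ‖(∫ h, Φ h ∂P) - ∫ h, Ψ h ∂P‖ ≤ ε := by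
  rw [← integral_sub]
  · exact norm_int_le hd
  · refine integrable_bdd hΦ (M := ε + M) fun h => ?_
    have := norm_add_le (Φ h - Ψ h) (Ψ h)
    rw [sub_add_cancel] at this
    linarith [hd h, hM h]
  · exact integrable_bdd hΨ hM

theorem norm_mul3_le (a b c : A) : ‖a * b * c‖ ≤ ‖a‖ * ‖b‖ * ‖c‖ :=
  (norm_mul_le _ _).trans (mul_le_mul_of_nonneg_right (norm_mul_le _ _) (norm_nonneg _))

theorem norm_mul4_le (a b c d : A) : ‖a * b * c * d‖ ≤ ‖a‖ * ‖b‖ * ‖c‖ * ‖d‖ :=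
  (norm_mul_le _ _).trans (mul_le_mul_of_nonneg_right (norm_mul3_le _ _ _) (norm_nonneg _))

theorem meas_inner {Q : Measure G} [IsProbabilityMeasure Q] {F : G × G → ℂ} (hF : Measurable F) :
    Measurable fun h => ∫ g, F (h, g) ∂Q :=
  (hF.stronglyMeasurable.integral_prod_right').measurable

section two
variable [MeasurableMul₂ G] [MeasurableInv G]

theorem Core.measF (H : Core ω τ) (a b c d : A) :
    Measurable fun p : G × G => ω (τ (p.2 * p.1) a * τ p.2 b * τ p.1 c * d) := by
  have h := (H.meas6 (star c) (star b) (star a) (star d) 1 1).comp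
    (show Measurable fun p : G × G => ((p.2, p.1), ((1 : G), (1 : G))) by fun_prop)
  have h2 := (Complex.continuous_conj.measurable).comp h
  convert h2 using 1
  funext p
  symm
  simp only [Function.comp, mul_one, H.one', map_star]
  rw [H.tr, ← mul_assoc]
  change star _ = _
  rw [← H.conj]
  simp [mul_assoc]

theorem Core.measT (H : Core ω τ) (a b b' c : A) :
    Measurable fun p : G × G => ω (τ p.1 c * τ p.2 b' * τ (p.2 * p.1) a * τ p.2 b) := by
  have h := (H.meas6 c b' a 1 b 1).comp
    (show Measurable fun p : G × G => ((p.2, p.1), (p.2, (1 : G))) by fun_prop)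
  simpa [Function.comp_def] using h

theorem Core.limT (H : Core ω τ) {P Q : ℕ → Measure G} [∀ n, IsProbabilityMeasure (P n)]
    [∀ n, IsProbabilityMeasure (Q n)] (hP : Fol P) (hQ : Fol Q) (a b c : A)
    {ε : ℝ} (hε : 0 < ε) :
    ∀ᶠ n in atTop,
      ‖(∫ h, ∫ g, ω (τ h c * τ g (star b) * τ (g * h) a * τ g b) ∂(Q n) ∂(P n)) -
        ω (b * star b) * ω a * ω c‖ ≤ ε := by
  have hε2 : 0 < ε / 2 := by positivity
  have hε3 : 0 < ε / 2 / (‖c‖ + 1) := by positivity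
  filter_upwards [H.erg hQ c (fun g => g⁻¹) measurable_inv
      (fun k => ⟨k⁻¹, fun g => by simp [mul_comm]⟩) (‖b‖ * ‖a‖ * ‖b‖) hε2,
    H.erg hP a (fun g => g) measurable_id (fun k => ⟨k, fun g => rfl⟩) ‖b * star b‖ hε3]
    with n h1 h2
  have e1 : ∀ h g, ω (τ h c * τ g (star b) * τ (g * h) a * τ g b) =
      ω (τ h⁻¹ (star b * τ h a * b) * τ g⁻¹ c) := by
    intro h g
    rw [← H.inv (h⁻¹ * g⁻¹), H.tr (τ h⁻¹ _)]
    simp only [map_mul, H.mul, mul_assoc]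
    simp [mul_comm]
  have e2 : ∀ h, ω (τ h⁻¹ (star b * τ h a * b)) = ω (b * star b * τ h a) := by
    intro h
    rw [H.inv, H.tr, mul_assoc]
  have hd : ∀ h, ‖(∫ g, ω (τ h c * τ g (star b) * τ (g * h) a * τ g b) ∂(Q n)) -
      ω (b * star b * τ h a) * ω c‖ ≤ ε / 2 := by
    intro h
    simp_rw [e1, ← e2]
    refine h1 _ ?_
    rw [H.nrm]
    refine (norm_mul3_le _ _ _).trans ?_
    rw [H.nrm, H.nstar]
  have h3 := int_close (P := P n) (meas_inner (Q := Q n) (H.measT a b (star b) c))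
    ((H.meas (b * star b) a).mul_const (ω c)) (M := ‖b * star b‖ * ‖a‖ * ‖c‖) (fun h => ?_) hd
  · rw [integral_mul_const] at h3
    have h4 := h2 _ le_rfl
    have h5 : ‖(∫ h, ω (b * star b * τ h a) ∂(P n)) * ω c - ω (b * star b) * ω a * ω c‖ ≤ ε / 2 := by
      rw [← sub_mul, norm_mul]
      calc _ ≤ (ε / 2 / (‖c‖ + 1)) * (‖c‖ + 1) := by
            apply mul_le_mul h4 _ (norm_nonneg _) (by positivity)
            linarith [H.bd c]
        _ = _ := by field_simp
    have h6 := norm_sub_le_norm_sub_add_norm_sub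
      (∫ h, ∫ g, ω (τ h c * τ g (star b) * τ (g * h) a * τ g b) ∂(Q n) ∂(P n))
      ((∫ h, ω (b * star b * τ h a) ∂(P n)) * ω c) (ω (b * star b) * ω a * ω c)
    linarith
  · rw [norm_mul]
    refine mul_le_mul ?_ (H.bd c) (norm_nonneg _) (by positivity)
    refine (H.bd _).trans ((norm_mul_le _ _).trans ?_)
    rw [H.nrm]

theorem Core.lim1 (H : Core ω τ) {P Q : ℕ → Measure G} [∀ n, IsProbabilityMeasure (P n)]
    [∀ n, IsProbabilityMeasure (Q n)] (hP : Fol P) (hQ : Fol Q) (b c d : A)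
    {ε : ℝ} (hε : 0 < ε) :
    ∀ᶠ n in atTop,
      ‖(∫ h, ∫ g, ω (τ (g * h) 1 * τ g b * τ h c * d) ∂(Q n) ∂(P n)) -
        ω d * ω c * ω b‖ ≤ ε := by
  have hε2 : 0 < ε / 2 := by positivity
  have hε3 : 0 < ε / 2 / (‖b‖ + 1) := by positivity
  filter_upwards [H.erg hQ b (fun g => g) measurable_id (fun k => ⟨k, fun g => rfl⟩)
      (‖c‖ * ‖d‖) hε2,
    H.erg hP c (fun g => g) measurable_id (fun k => ⟨k, fun g => rfl⟩) ‖d‖ hε3]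
    with n h1 h2
  have e1 : ∀ h g, ω (τ (g * h) 1 * τ g b * τ h c * d) = ω (τ h c * d * τ g b) := by
    intro h g
    rw [map_one, one_mul, mul_assoc, H.tr]
  have hd : ∀ h, ‖(∫ g, ω (τ (g * h) 1 * τ g b * τ h c * d) ∂(Q n)) -
      ω (d * τ h c) * ω b‖ ≤ ε / 2 := by
    intro h
    simp_rw [e1, H.tr d]
    refine h1 _ ((norm_mul_le _ _).trans ?_)
    rw [H.nrm]
  have h3 := int_close (P := P n) (meas_inner (Q := Q n) (H.measF 1 b c d))
    ((H.meas d c).mul_const (ω b)) (M := ‖d‖ * ‖c‖ * ‖b‖) (fun h => ?_) hd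
  · rw [integral_mul_const] at h3
    have h4 := h2 _ le_rfl
    have h5 : ‖(∫ h, ω (d * τ h c) ∂(P n)) * ω b - ω d * ω c * ω b‖ ≤ ε / 2 := by
      rw [← sub_mul, norm_mul]
      calc _ ≤ (ε / 2 / (‖b‖ + 1)) * (‖b‖ + 1) := by
            apply mul_le_mul h4 _ (norm_nonneg _) (by positivity)
            linarith [H.bd b]
        _ = _ := by field_simp
    have h6 := norm_sub_le_norm_sub_add_norm_sub
      (∫ h, ∫ g, ω (τ (g * h) 1 * τ g b * τ h c * d) ∂(Q n) ∂(P n))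
      ((∫ h, ω (d * τ h c) ∂(P n)) * ω b) (ω d * ω c * ω b)
    linarith
  · rw [norm_mul]
    refine mul_le_mul ?_ (H.bd b) (norm_nonneg _) (by positivity)
    refine (H.bd _).trans ((norm_mul_le _ _).trans ?_)
    rw [H.nrm]

theorem Core.bdF (H : Core ω τ) (a b c d : A) (x y z : G) :
    ‖ω (τ x a * τ y b * τ z c * d)‖ ≤ ‖a‖ * ‖b‖ * ‖c‖ * ‖d‖ := by
  refine (H.bd _).trans ((norm_mul4_le _ _ _ _).trans ?_)
  simp [H.nrm]

theorem Core.lim0 (H : Core ω τ) {P Q : ℕ → Measure G} [∀ n, IsProbabilityMeasure (P n)]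
    [∀ n, IsProbabilityMeasure (Q n)] (hP : Fol P) (hQ : Fol Q) (a b c d : A) (ha : ω a = 0)
    {ε : ℝ} (hε : 0 < ε) :
    ∀ᶠ n in atTop,
      ‖∫ h, ∫ g, ω (τ (g * h) a * τ g b * τ h c * d) ∂(Q n) ∂(P n)‖ ≤ ε := by
  obtain ⟨δ, hδ, hδε⟩ : ∃ δ : ℝ, 0 < δ ∧ 3 * δ ≤ ε := ⟨ε / 3, by positivity, by linarith⟩
  set D : ℝ := ‖d‖ ^ 2 + 1 with hD
  set B : ℝ := ‖b‖ ^ 2 * ‖c‖ ^ 2 with hB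
  have hD0 : 0 < D := by positivity
  have hB0 : 0 ≤ B := by positivity
  obtain ⟨κ, hκ, hκδ⟩ : ∃ κ : ℝ, 0 < κ ∧ D * (κ * B + κ) = δ ^ 2 :=
    ⟨δ ^ 2 / (D * (B + 1)), by positivity, by field_simp⟩
  obtain ⟨N, k, hN, hk⟩ := H.exists_k a ha hκ
  have hN' : (0 : ℝ) < N := by exact_mod_cast hN
  have hev := (Filter.eventually_all_finset (Finset.range N)).mpr
    fun i _ => hP (k i) (‖a‖ * ‖b‖ * ‖c‖ * ‖d‖) δ hδ
  have hevT := (Filter.eventually_all_finset (Finset.range N)).mpr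
    fun i _ => (Filter.eventually_all_finset (Finset.range N)).mpr fun j _ =>
      H.limT hP hQ (star (τ (k i) a) * τ (k j) a) b (τ (k j) c * star (τ (k i) c)) hκ
  filter_upwards [hev, hevT] with n hn hT
  have mF := H.measF a b c d
  have hf := meas_inner (Q := Q n) mF
  have hM : ∀ h, ‖∫ g, ω (τ (g * h) a * τ g b * τ h c * d) ∂(Q n)‖ ≤ ‖a‖ * ‖b‖ * ‖c‖ * ‖d‖ :=
    fun h => norm_int_le fun g => H.bdF a b c d _ _ _
  have hs := avg_shift (P := P n) hf hM hN k (fun i hi => hn i hi _ hf hM)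
  refine hs.trans ?_
  -- the sum of translates
  let v : ℕ → G × G → A := fun i p =>
    τ (p.2 * (p.1 * k i)) a * τ p.2 b * τ (p.1 * k i) c
  let V : G × G → A := fun p => ∑ i ∈ Finset.range N, v i p
  let T : ℕ → ℕ → G × G → ℂ := fun i j p =>
    ω (τ p.1 (τ (k j) c * star (τ (k i) c)) * τ p.2 (star b) *
      τ (p.2 * p.1) (star (τ (k i) a) * τ (k j) a) * τ p.2 b)
  have hvT : ∀ i j p, ω (star (v i p) * v j p) = T i j p := by
    intro i j p
    simp only [v, T]
    rw [← mul_assoc (star _), H.tr _ (τ (p.1 * k j) c)]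
    simp only [star_mul, map_mul, map_star, H.mul, mul_assoc]
  have mT : ∀ i j, Measurable (T i j) := fun i j => H.measT _ _ _ _
  have bT : ∀ i j p, ‖T i j p‖ ≤ ‖τ (k j) c * star (τ (k i) c)‖ * ‖star b‖ *
      ‖star (τ (k i) a) * τ (k j) a‖ * ‖b‖ := by
    intro i j p
    refine (H.bd _).trans ((norm_mul4_le _ _ _ _).trans ?_)
    simp only [H.nrm]; exact le_rfl
  have iT : ∀ i j, Integrable (T i j) ((P n).prod (Q n)) := fun i j => integrable_bdd (mT i j) (bT i j)
  have mZi : ∀ i, Measurable fun p => ω (v i p * d) := fun i =>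
    mF.comp (show Measurable fun p : G × G => (p.1 * k i, p.2) by fun_prop)
  have iZi : ∀ i, Integrable (fun p => ω (v i p * d)) ((P n).prod (Q n)) := fun i =>
    integrable_bdd (mZi i) (fun p => H.bdF a b c d _ _ _)
  have eZ : (∫ h, ∑ i ∈ Finset.range N,
      ∫ g, ω (τ (g * (h * k i)) a * τ g b * τ (h * k i) c * d) ∂(Q n) ∂(P n)) =
      ∫ p, ω (V p * d) ∂((P n).prod (Q n)) := by
    have e0 : ∀ p, ω (V p * d) = ∑ i ∈ Finset.range N, ω (v i p * d) := by
      intro p; simp only [V]; rw [Finset.sum_mul, map_sum]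
    simp_rw [e0]
    rw [integral_finsetSum _ (fun i _ => iZi i)]
    have e1 : ∀ i ∈ Finset.range N, Integrable (fun h =>
        ∫ g, ω (τ (g * (h * k i)) a * τ g b * τ (h * k i) c * d) ∂(Q n)) (P n) := fun i _ =>
      (iZi i).integral_prod_left
    rw [integral_finsetSum _ e1]
    refine Finset.sum_congr rfl fun i _ => ?_
    rw [integral_prod _ (iZi i)]
  have eV : ∀ p, (ω (star (V p) * V p)).re =
      ∑ i ∈ Finset.range N, ∑ j ∈ Finset.range N, (T i j p).re := by
    intro p
    simp only [V]
    rw [star_sum, Finset.sum_mul_sum, map_sum, Complex.re_sum]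
    refine Finset.sum_congr rfl fun i _ => ?_
    rw [map_sum, Complex.re_sum]
    exact Finset.sum_congr rfl fun j _ => by rw [hvT]
  have bZ : ∀ p, ‖ω (V p * d)‖ ≤ δ * N +
      (D / (δ * N)) * ∑ i ∈ Finset.range N, ∑ j ∈ Finset.range N, (T i j p).re := by
    intro p
    have hδN : 0 < δ * N := by positivity
    refine (norm_le_of_sq hδN).trans ?_
    have h := H.cs' d (V p)
    rw [H.tr d] at h
    have h2 : ‖ω (V p * d)‖ ^ 2 ≤ D * (ω (star (V p) * V p)).re :=
      h.trans (mul_le_mul_of_nonneg_right (by linarith) (H.re_nonneg _))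
    rw [← eV, div_mul_eq_mul_div]
    gcongr
  have iTr : ∀ i j, Integrable (fun p => (T i j p).re) ((P n).prod (Q n)) := fun i j => (iT i j).re
  have iS : Integrable (fun p => ∑ i ∈ Finset.range N, ∑ j ∈ Finset.range N, (T i j p).re)
      ((P n).prod (Q n)) :=
    integrable_finsetSum _ fun i _ => integrable_finsetSum _ fun j _ => iTr i j
  have eS : ∫ p, ∑ i ∈ Finset.range N, ∑ j ∈ Finset.range N, (T i j p).re ∂((P n).prod (Q n)) =
      ∑ i ∈ Finset.range N, ∑ j ∈ Finset.range N, (∫ p, T i j p ∂((P n).prod (Q n))).re := by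
    rw [integral_finsetSum _ fun i _ => integrable_finsetSum _ fun j _ => iTr i j]
    refine Finset.sum_congr rfl fun i _ => ?_
    rw [integral_finsetSum _ fun j _ => iTr i j]
    refine Finset.sum_congr rfl fun j _ => ?_
    exact integral_re (iT i j)
  have bS : ∑ i ∈ Finset.range N, ∑ j ∈ Finset.range N, (∫ p, T i j p ∂((P n).prod (Q n))).re ≤
      (κ * B + κ) * (N : ℝ) ^ 2 := by
    have t : ∀ i ∈ Finset.range N, ∀ j ∈ Finset.range N, (∫ p, T i j p ∂((P n).prod (Q n))).re ≤
        ‖ω (star (τ (k i) a) * τ (k j) a)‖ * B + κ := by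
      intro i hi j hj
      have h := hT i hi j hj
      rw [integral_prod _ (iT i j)]
      refine (Complex.re_le_norm _).trans ?_
      have h2 : ‖ω (b * star b) * ω (star (τ (k i) a) * τ (k j) a) *
          ω (τ (k j) c * star (τ (k i) c))‖ ≤ ‖ω (star (τ (k i) a) * τ (k j) a)‖ * B := by
        rw [norm_mul, norm_mul]
        have b1 : ‖ω (b * star b)‖ ≤ ‖b‖ ^ 2 := by
          refine (H.bd _).trans ((norm_mul_le _ _).trans ?_)
          rw [H.nstar, sq]
        have b2 : ‖ω (τ (k j) c * star (τ (k i) c))‖ ≤ ‖c‖ ^ 2 := by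
          refine (H.bd _).trans ((norm_mul_le _ _).trans ?_)
          rw [H.nstar, H.nrm, H.nrm, sq]
        calc _ ≤ ‖b‖ ^ 2 * ‖ω (star (τ (k i) a) * τ (k j) a)‖ * ‖c‖ ^ 2 := by gcongr
          _ = _ := by rw [hB]; ring
      have h3 := norm_le_norm_add_norm_sub' (∫ h, ∫ g, T i j (h, g) ∂(Q n) ∂(P n))
        (ω (b * star b) * ω (star (τ (k i) a) * τ (k j) a) * ω (τ (k j) c * star (τ (k i) c)))
      exact h3.trans (add_le_add h2 h)
    calc _ ≤ ∑ i ∈ Finset.range N, ∑ j ∈ Finset.range N,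
          (‖ω (star (τ (k i) a) * τ (k j) a)‖ * B + κ) :=
          Finset.sum_le_sum fun i hi => Finset.sum_le_sum fun j hj => t i hi j hj
      _ = (∑ i ∈ Finset.range N, ∑ j ∈ Finset.range N,
          ‖ω (star (τ (k i) a) * τ (k j) a)‖) * B + κ * (N : ℝ) ^ 2 := by
          simp only [Finset.sum_add_distrib, Finset.sum_mul, Finset.sum_const, Finset.card_range,
            nsmul_eq_mul]
          ring
      _ ≤ (κ * (N : ℝ) ^ 2) * B + κ * (N : ℝ) ^ 2 := by gcongr
      _ = _ := by ring
  have fin : ‖∫ p, ω (V p * d) ∂((P n).prod (Q n))‖ ≤ 2 * δ * N := by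
    have h1 : ‖∫ p, ω (V p * d) ∂((P n).prod (Q n))‖ ≤ ∫ p, (δ * N +
      (D / (δ * N)) * ∑ i ∈ Finset.range N, ∑ j ∈ Finset.range N, (T i j p).re)
        ∂((P n).prod (Q n)) :=
      norm_integral_le_of_norm_le ((integrable_const _).add (iS.const_mul _))
        (Eventually.of_forall bZ)
    rw [integral_add (integrable_const _) (iS.const_mul _),
      integral_const_mul (D / (δ * N)), eS] at h1
    simp only [integral_const, probReal_univ, one_smul] at h1
    refine h1.trans ?_
    calc _ ≤ δ * N + (D / (δ * N)) * ((κ * B + κ) * (N : ℝ) ^ 2) := by gcongr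
      _ = δ * N + (D * (κ * B + κ)) * N / δ := by field_simp
      _ = _ := by rw [hκδ]; field_simp; ring
  have : ‖∫ p, ω (V p * d) ∂((P n).prod (Q n))‖ / N ≤ 2 * δ := by
    rw [div_le_iff₀ hN']; exact fin
  rw [eZ]
  linarith

theorem Core.lim (H : Core ω τ) {P Q : ℕ → Measure G} [∀ n, IsProbabilityMeasure (P n)]
    [∀ n, IsProbabilityMeasure (Q n)] (hP : Fol P) (hQ : Fol Q) (a b c d : A) :
    Tendsto (fun n => ∫ h, ∫ g, ω (τ (g * h) a * τ g b * τ h c * d) ∂(Q n) ∂(P n)) atTop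
      (𝓝 (ω a * ω b * ω c * ω d)) := by
  rw [Metric.tendsto_nhds]
  intro ε hε
  have h0 : ω (a - ω a • 1) = 0 := by rw [map_sub, map_smul, H.one]; simp
  have hε3 : 0 < ε / 3 / (‖a‖ + 1) := by positivity
  filter_upwards [H.lim0 hP hQ _ b c d h0 (show 0 < ε / 3 by positivity),
    H.lim1 hP hQ b c d hε3] with n h1 h2
  have ib : ∀ a, Integrable (fun p : G × G => ω (τ (p.2 * p.1) a * τ p.2 b * τ p.1 c * d))
    ((P n).prod (Q n)) := fun a => integrable_bdd (H.measF a b c d) (fun p => H.bdF a b c d _ _ _)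
  have e : ∀ p : G × G, ω (τ (p.2 * p.1) (a - ω a • 1) * τ p.2 b * τ p.1 c * d) =
      ω (τ (p.2 * p.1) a * τ p.2 b * τ p.1 c * d) -
        ω a * ω (τ (p.2 * p.1) 1 * τ p.2 b * τ p.1 c * d) := by
    intro p
    rw [map_sub, map_smul]
    simp only [sub_mul, smul_mul_assoc, map_sub, map_smul, smul_eq_mul]
  have e1 : ∀ a, (∫ h, ∫ g, ω (τ (g * h) a * τ g b * τ h c * d) ∂(Q n) ∂(P n)) =
    ∫ p, ω (τ (p.2 * p.1) a * τ p.2 b * τ p.1 c * d) ∂((P n).prod (Q n)) :=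
    fun a => (integral_prod _ (ib a)).symm
  rw [e1] at h1 h2
  simp_rw [e] at h1
  rw [integral_sub (ib a) ((ib 1).const_mul _), integral_const_mul] at h1
  rw [e1, dist_eq_norm]
  set I := ∫ p : G × G, ω (τ (p.2 * p.1) a * τ p.2 b * τ p.1 c * d) ∂((P n).prod (Q n))
  set J := ∫ p : G × G, ω (τ (p.2 * p.1) 1 * τ p.2 b * τ p.1 c * d) ∂((P n).prod (Q n))
  have e3 : I - ω a * ω b * ω c * ω d = (I - ω a * J) + ω a * (J - ω d * ω c * ω b) := by ring
  have h5 : ‖ω a * (J - ω d * ω c * ω b)‖ ≤ ε / 3 := by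
    rw [norm_mul]
    calc _ ≤ (‖a‖ + 1) * (ε / 3 / (‖a‖ + 1)) := by
          apply mul_le_mul _ h2 (norm_nonneg _) (by positivity)
          linarith [H.bd a]
      _ = _ := by field_simp
  rw [e3]
  have := norm_add_le (I - ω a * J) (ω a * (J - ω d * ω c * ω b))
  linarith

end two
end main

section folner
variable {G : Type*} [CommGroup G] [MeasurableSpace G]

open Classical in
/-- Normalised restriction of a measure, or a Dirac mass in the degenerate case. -/
noncomputable def nrm (μ : Measure G) (Λ : Set G) : Measure G :=
  if 0 < μ Λ ∧ μ Λ < ⊤ then (μ Λ)⁻¹ • μ.restrict Λ else Measure.dirac 1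

instance nrm_prob (μ : Measure G) (Λ : Set G) : IsProbabilityMeasure (nrm μ Λ) := by
  unfold nrm
  split_ifs with h
  · constructor
    simp only [Measure.smul_apply, Measure.restrict_apply_univ, smul_eq_mul]
    exact ENNReal.inv_mul_cancel h.1.ne' h.2.ne
  · infer_instance

theorem nrm_int {E : Type*} [NormedAddCommGroup E] [NormedSpace ℝ E]
    {μ : Measure G} {Λ : Set G} (h : 0 < μ Λ ∧ μ Λ < ⊤) (f : G → E) :
    ∫ g, f g ∂(nrm μ Λ) = (μ Λ).toReal⁻¹ • ∫ g in Λ, f g ∂μ := by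
  unfold nrm
  rw [if_pos h, integral_smul_measure, ENNReal.toReal_inv]

theorem set_diff_bound {μ : Measure G} {s t : Set G} (hs : MeasurableSet s) (ht : MeasurableSet t)
    (hsf : μ s < ⊤) (htf : μ t < ⊤) {f : G → ℂ} (hf : Measurable f) {M : ℝ}
    (hM : ∀ g, ‖f g‖ ≤ M) :
    ‖(∫ g in t, f g ∂μ) - ∫ g in s, f g ∂μ‖ ≤ M * (μ (symmDiff s t)).toReal := by
  have ii : ∀ u : Set G, μ u < ⊤ → IntegrableOn f u μ := fun u hu => by
    have : IsFiniteMeasure (μ.restrict u) := ⟨by simpa using hu⟩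
    exact integrable_bdd hf hM
  have e1 := integral_inter_add_diff (μ := μ) ht (ii s hsf)
  have e2 := integral_inter_add_diff (μ := μ) hs (ii t htf)
  rw [← e1, ← e2, Set.inter_comm t s, add_sub_add_left_eq_sub]
  have hst : μ (s \ t) < ⊤ := (measure_mono Set.diff_subset).trans_lt hsf
  have hts : μ (t \ s) < ⊤ := (measure_mono Set.diff_subset).trans_lt htf
  have b1 := norm_setIntegral_le_of_norm_le_const (f := f) (C := M) hst (fun x _ => hM x)
  have b2 := norm_setIntegral_le_of_norm_le_const (f := f) (C := M) hts (fun x _ => hM x)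
  have e3 : (μ (symmDiff s t)).toReal = μ.real (s \ t) + μ.real (t \ s) := by
    rw [Set.symmDiff_def, measure_union (disjoint_sdiff_sdiff) (ht.diff hs),
      ENNReal.toReal_add hst.ne hts.ne]; rfl
  rw [e3, mul_add]
  exact (norm_sub_le _ _).trans (by linarith)

variable [MeasurableMul G]

theorem mul_singleton_eq (V : Set G) (g : G) : V * {g} = (fun x => x * g⁻¹) ⁻¹' V := by
  ext x; simp [Set.mem_mul, eq_comm, eq_mul_inv_iff_mul_eq]

theorem map_mul_eq {μ : Measure G}
    (hRight : ∀ (V : Set G) (g : G), MeasurableSet V → μ (V * {g}) = μ V) (k : G) :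
    MeasurePreserving (fun x => x * k) μ μ := by
  refine ⟨measurable_mul_const k, ?_⟩
  ext V hV
  rw [Measure.map_apply (measurable_mul_const k) hV, ← hRight V k⁻¹ hV, mul_singleton_eq, inv_inv]

theorem fol_of {μ : Measure G}
    (hRight : ∀ (V : Set G) (g : G), MeasurableSet V → μ (V * {g}) = μ V)
    (Λ : ℕ → Set G) (hm : ∀ n, MeasurableSet (Λ n))
    (hfin : ∀ᶠ n in atTop, 0 < μ (Λ n) ∧ μ (Λ n) < ⊤)
    (hfol : ∀ g : G, Tendsto
      (fun n => (μ (symmDiff (Λ n) (Λ n * {g}))).toReal / (μ (Λ n)).toReal) atTop (𝓝 0)) :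
    Fol fun n => nrm μ (Λ n) := by
  intro k M ε hε
  have h0 : ∀ᶠ n in atTop, M * ((μ (symmDiff (Λ n) (Λ n * {k}))).toReal / (μ (Λ n)).toReal) < ε := by
    have := (hfol k).const_mul M
    rw [mul_zero] at this
    exact this.eventually_lt_const hε
  filter_upwards [hfin, h0] with n hn hlt f hf hM
  have hpos : 0 < (μ (Λ n)).toReal := ENNReal.toReal_pos hn.1.ne' hn.2.ne
  have hmk : MeasurableSet (Λ n * {k}) := by
    rw [mul_singleton_eq]; exact measurable_mul_const _ (hm n)
  have hpre : (fun x => x * k) ⁻¹' (Λ n * {k}) = Λ n := by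
    rw [mul_singleton_eq]; ext x; simp
  have e := (map_mul_eq hRight k).setIntegral_preimage_emb
    (MeasurableEquiv.mulRight k).measurableEmbedding f (Λ n * {k})
  rw [hpre] at e
  rw [nrm_int hn, nrm_int hn, e, ← smul_sub, norm_smul]
  have b := set_diff_bound (hm n) hmk hn.2 (by rw [hRight _ _ (hm n)]; exact hn.2) hf hM
  have : ‖(μ (Λ n)).toReal⁻¹‖ = (μ (Λ n)).toReal⁻¹ := by
    rw [Real.norm_of_nonneg (by positivity)]
  rw [this]
  calc _ ≤ (μ (Λ n)).toReal⁻¹ * (M * (μ (symmDiff (Λ n) (Λ n * {k}))).toReal) := by gcongr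
    _ = M * ((μ (symmDiff (Λ n) (Λ n * {k}))).toReal / (μ (Λ n)).toReal) := by
      rw [div_eq_inv_mul]; ring
    _ ≤ ε := hlt.le

end folner

theorem wm_of {A : Type*} [NormedRing A] [StarRing A] [NormedAlgebra ℂ A]
    {G : Type*} [CommGroup G] [MeasurableSpace G]
    {ω : A →ₗ[ℂ] ℂ} {τ : G → A ≃⋆ₐ[ℂ] A} {μ : Measure G}
    (hbd : ∀ x, ‖ω x‖ ≤ ‖x‖) (hnrm : ∀ g a, ‖τ g a‖ = ‖a‖)
    (hτ_meas : ∀ a b : A, Measurable fun g : G => ω (a * τ g b))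
    (Λ : ℕ → Set G) 
    (hfin : ∀ᶠ n in atTop, 0 < μ (Λ n) ∧ μ (Λ n) < ⊤)
    (hW : ∀ a b : A, Tendsto
        (fun n => (μ (Λ n)).toReal⁻¹ * ∫ g in Λ n, ‖ω (a * τ g b) - ω a * ω b‖ ∂μ)
        atTop (𝓝 0)) :
    ∀ c, ω c = 0 → ∀ ε > (0 : ℝ), ∀ s : Finset G, ∃ y, ∀ x ∈ s,
      ‖ω (star (τ x c) * τ y c)‖ < ε := by
  intro c hc ε hε s
  by_contra! hcon
  have hsum := tendsto_finsetSum s (fun x _ => hW (star (τ x c)) c)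
  rw [Finset.sum_const_zero] at hsum
  obtain ⟨n, hn, hlt⟩ := (hfin.and (hsum.eventually_lt_const hε)).exists
  simp only [hc, mul_zero, sub_zero] at hlt
  have e : ∀ x, (μ (Λ n)).toReal⁻¹ * ∫ g in Λ n, ‖ω (star (τ x c) * τ g c)‖ ∂μ =
      ∫ g, ‖ω (star (τ x c) * τ g c)‖ ∂(nrm μ (Λ n)) := by
    intro x; rw [nrm_int hn]; rfl
  simp_rw [e] at hlt
  have hi : ∀ x ∈ s, Integrable (fun g => ‖ω (star (τ x c) * τ g c)‖) (nrm μ (Λ n)) := by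
    intro x _
    refine (integrable_bdd (hτ_meas (star (τ x c)) c) (M := ‖star (τ x c)‖ * ‖c‖) fun g => ?_).norm
    refine (hbd _).trans ((norm_mul_le _ _).trans ?_)
    rw [hnrm g]
  rw [← integral_finsetSum _ hi] at hlt
  have : ∫ _g : G, ε ∂(nrm μ (Λ n)) ≤
      ∫ g, ∑ x ∈ s, ‖ω (star (τ x c) * τ g c)‖ ∂(nrm μ (Λ n)) := by
    refine integral_mono (integrable_const _) (integrable_finsetSum _ hi) fun g => ?_
    obtain ⟨x, hx, hxe⟩ := hcon g
    exact hxe.trans (Finset.single_le_sum (f := fun x => ‖ω (star (τ x c) * τ g c)‖)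
      (fun _ _ => norm_nonneg _) hx)
  simp only [integral_const, probReal_univ, one_smul] at this
  linarith

end Berg

/-- **Theorem 5.6(1): Bergelson's theorem for weakly mixing C*-dynamical systems.** -/
theorem bergelson_weakly_mixing
    -- a unital C*-algebra A
    {A : Type*} [NormedRing A] [StarRing A] [CStarRing A] [NormedAlgebra ℂ A]
    [CompleteSpace A] [StarModule ℂ A]
    -- a tracial state ω on A
    (ω : A →ₗ[ℂ] ℂ) (hω_pos : ∀ a : A, 0 ≤ ω (star a * a)) (hω_one : ω 1 = 1)
    (hω_tracial : ∀ a b : A, ω (a * b) = ω (b * a))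
    -- a second countable topological abelian group G with a σ-finite, right and left
    -- invariant measure μ on its Borel σ-algebra, with the inverse map μ-invariant
    {G : Type*} [CommGroup G] [TopologicalSpace G] [IsTopologicalGroup G]
    [SecondCountableTopology G] [MeasurableSpace G] [BorelSpace G]
    (μ : Measure G) [SigmaFinite μ]
    (hRight : ∀ (V : Set G) (g : G), MeasurableSet V → μ (V * {g}) = μ V)
    (hLeft : ∀ (V : Set G) (g : G), MeasurableSet V → μ ({g} * V) = μ V)
    (hInvInv : ∀ V : Set G, MeasurableSet V → μ V⁻¹ = μ V)
    -- the action τ, making (A, ω, τ, G) a C*-dynamical system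
    (τ : G → A ≃⋆ₐ[ℂ] A)
    (hτ_one : ∀ a : A, τ 1 a = a)
    (hτ_mul : ∀ g h a, τ g (τ h a) = τ (g * h) a)
    (hω_inv : ∀ g a, ω (τ g a) = ω a)
    (hτ_meas : ∀ a b : A, Measurable fun g : G => ω (a * τ g b))
    -- the system is weakly mixing (w.r.t. some, equivalently every, Følner sequence in G)
    (hWM : ∃ Λ : ℕ → Set G, (∀ n, MeasurableSet (Λ n)) ∧
      (∀ᶠ n in atTop, 0 < μ (Λ n) ∧ μ (Λ n) < ⊤) ∧
      (∀ g : G, Tendsto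
        (fun n => (μ (symmDiff (Λ n) (Λ n * {g}))).toReal / (μ (Λ n)).toReal)
        atTop (𝓝 0)) ∧
      ∀ a b : A, Tendsto
        (fun n => (μ (Λ n)).toReal⁻¹ * ∫ g in Λ n, ‖ω (a * τ g b) - ω a * ω b‖ ∂μ)
        atTop (𝓝 0))
    -- (g,h,j,k) ↦ ω(τ_h(a₁) τ_g(a₂) τ_{gh}(a₃) τ_{jk}(a₄) τ_j(a₅) τ_k(a₆)) is
    -- Σ² × Σ²-measurable
    (hmeas6 : ∀ a₁ a₂ a₃ a₄ a₅ a₆ : A, Measurable fun q : (G × G) × (G × G) =>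
      ω (τ q.1.2 a₁ * τ q.1.1 a₂ * τ (q.1.1 * q.1.2) a₃ *
        τ (q.2.1 * q.2.2) a₄ * τ q.2.1 a₅ * τ q.2.2 a₆))
    -- a uniform Følner sequence (Λ1 n) in G ...
    (Λ1 : ℕ → Set G)
    (hΛ1meas : ∀ n, MeasurableSet (Λ1 n))
    (hΛ1fin : ∀ᶠ n in atTop, 0 < μ (Λ1 n) ∧ μ (Λ1 n) < ⊤)
    (hΛ1folner : ∀ g : G, Tendsto
      (fun n => (μ (symmDiff (Λ1 n) (Λ1 n * {g}))).toReal / (μ (Λ1 n)).toReal)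
      atTop (𝓝 0))
    (hΛ1unif : ∀ᶠ m in atTop, ∀ ε > (0 : ℝ), ∀ᶠ n in atTop, ∀ g ∈ Λ1 m,
      (μ (symmDiff (Λ1 n) (Λ1 n * {g}))).toReal ≤ ε * (μ (Λ1 n)).toReal)
    -- ... satisfying the Tempel'man condition ...
    (hΛ1temp : ∃ c : ℝ, 0 < c ∧ ∀ᶠ n in atTop, MeasurableSet ((Λ1 n)⁻¹ * Λ1 n) ∧
      μ ((Λ1 n)⁻¹ * Λ1 n) ≤ ENNReal.ofReal c * μ (Λ1 n))
    -- ... and such that (Λ1 n⁻¹ Λ1 n) is also Følner in G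
    (hΛ1invfin : ∀ᶠ n in atTop, 0 < μ ((Λ1 n)⁻¹ * Λ1 n) ∧ μ ((Λ1 n)⁻¹ * Λ1 n) < ⊤)
    (hΛ1invfolner : ∀ g : G, Tendsto
      (fun n => (μ (symmDiff ((Λ1 n)⁻¹ * Λ1 n) (((Λ1 n)⁻¹ * Λ1 n) * {g}))).toReal /
        (μ ((Λ1 n)⁻¹ * Λ1 n)).toReal)
      atTop (𝓝 0))
    -- a uniform Følner sequence (Λ2 n) in G ...
    (Λ2 : ℕ → Set G)
    (hΛ2meas : ∀ n, MeasurableSet (Λ2 n))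
    (hΛ2fin : ∀ᶠ n in atTop, 0 < μ (Λ2 n) ∧ μ (Λ2 n) < ⊤)
    (hΛ2folner : ∀ g : G, Tendsto
      (fun n => (μ (symmDiff (Λ2 n) (Λ2 n * {g}))).toReal / (μ (Λ2 n)).toReal)
      atTop (𝓝 0))
    (hΛ2unif : ∀ᶠ m in atTop, ∀ ε > (0 : ℝ), ∀ᶠ n in atTop, ∀ g ∈ Λ2 m,
      (μ (symmDiff (Λ2 n) (Λ2 n * {g}))).toReal ≤ ε * (μ (Λ2 n)).toReal)
    -- ... satisfying the Tempel'man condition ...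
    (hΛ2temp : ∃ c : ℝ, 0 < c ∧ ∀ᶠ n in atTop, MeasurableSet ((Λ2 n)⁻¹ * Λ2 n) ∧
      μ ((Λ2 n)⁻¹ * Λ2 n) ≤ ENNReal.ofReal c * μ (Λ2 n))
    -- ... and such that (Λ2 n⁻¹ Λ2 n) is also Følner in G
    (hΛ2invfin : ∀ᶠ n in atTop, 0 < μ ((Λ2 n)⁻¹ * Λ2 n) ∧ μ ((Λ2 n)⁻¹ * Λ2 n) < ⊤)
    (hΛ2invfolner : ∀ g : G, Tendsto
      (fun n => (μ (symmDiff ((Λ2 n)⁻¹ * Λ2 n) (((Λ2 n)⁻¹ * Λ2 n) * {g}))).toReal /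
        (μ ((Λ2 n)⁻¹ * Λ2 n)).toReal)
      atTop (𝓝 0))
    -- the system is asymptotically abelian with respect to (Λ1 n)
    (hcomm_meas : ∀ a b : A, Measurable fun g : G => ‖a * τ g b - τ g b * a‖)
    (hAA : ∀ a b : A, Tendsto
      (fun n => (μ (Λ1 n)).toReal⁻¹ * ∫ g in Λ1 n, ‖a * τ g b - τ g b * a‖ ∂μ)
      atTop (𝓝 0))
 :
    -- conclusion
    ∀ a b c d : A,
      Tendsto
        (fun n => ((μ (Λ1 n)).toReal * (μ (Λ2 n)).toReal)⁻¹ •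
          ∫ h in Λ1 n, ∫ g in Λ2 n, ω (τ (g * h) a * τ g b * τ h c * d) ∂μ ∂μ)
        atTop (𝓝 (ω a * ω b * ω c * ω d)) := by
  intro a b c d
  obtain ⟨h1, h2, h3, h4⟩ := Berg.omega_facts ω hω_pos hω_one
  obtain ⟨Λ, -, hfin, -, hW⟩ := hWM
  have H : Berg.Core ω τ :=
    { one := hω_one
      conj := h1
      cs := h2
      re_le := h3
      re_nonneg := fun x => (Complex.nonneg_iff.mp (hω_pos x)).1
      bd := h4
      tr := hω_tracial
      mul := hτ_mul
      one' := hτ_one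
      inv := hω_inv
      nrm := fun g x => Berg.norm_aut (τ g) x
      nstar := fun x => norm_star x
      meas := hτ_meas
      meas6 := hmeas6
      wm := Berg.wm_of h4 (fun g x => Berg.norm_aut (τ g) x) hτ_meas Λ hfin hW }
  have key := H.lim (Berg.fol_of hRight Λ1 hΛ1meas hΛ1fin hΛ1folner)
    (Berg.fol_of hRight Λ2 hΛ2meas hΛ2fin hΛ2folner) a b c d
  refine key.congr' ?_
  filter_upwards [hΛ1fin, hΛ2fin] with n hn1 hn2
  rw [Berg.nrm_int hn1]
  simp_rw [Berg.nrm_int hn2]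
  rw [integral_smul, smul_smul, mul_inv]
end
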